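/- arXiv:1905.13435 — 10 statements merged into one kernel-verified Lean document; each statement's English description precedes it below -/
import Mathlib

section
/- For any measurable space F and any two probability measures Q and U on F, the Kullback–Leibler divergence satisfies the Donsker–Varadhan variational formula: D_KL(Q‖U) = sup over all bounded measurable functions X : F → ℝ of ( ∫ X dQ − log ∫ e^X dU ). In particular, for every bounded measurable X one has ∫ X dQ ≤ D_KL(Q‖U) + log ∫ e^X dU, and this bound cannot be uniformly improved. -/
open MeasureTheory Real
open scoped Classical

/-- The Kullback--Leibler divergence between two measures, valued in the extended reals:
`∫ log (dQ/dU) dQ` when `Q ≪ U` and the log-likelihood ratio is `Q`-integrable,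
and `+∞` otherwise. -/
noncomputable def klDiv {F : Type*} [MeasurableSpace F] (Q U : Measure F) : EReal :=
  if Q ≪ U ∧ Integrable (llr Q U) Q then ((∫ f, llr Q U f ∂Q : ℝ) : EReal) else ⊤

theorem dv_upper {F : Type*} [MeasurableSpace F]
    (Q U : Measure F) [IsProbabilityMeasure Q] [IsProbabilityMeasure U]
    (hac : Q ≪ U) (hint : Integrable (llr Q U) Q)
    (X : F → ℝ) (hX : Measurable X) (C : ℝ) (hC : ∀ f, |X f| ≤ C) :
    (∫ f, X f ∂Q) - Real.log (∫ f, Real.exp (X f) ∂U) ≤ ∫ f, llr Q U f ∂Q := by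
  have hXQ : Integrable X Q :=
    Integrable.of_bound hX.aestronglyMeasurable C (Filter.Eventually.of_forall hC)
  have hXU : Integrable (fun f => Real.exp (X f)) U := by
    refine Integrable.of_bound (by fun_prop) (Real.exp C) (Filter.Eventually.of_forall fun f => ?_)
    rw [Real.norm_eq_abs, abs_of_pos (Real.exp_pos _)]
    exact Real.exp_le_exp.2 ((le_abs_self _).trans (hC f))
  have hP : IsProbabilityMeasure (U.tilted X) := isProbabilityMeasure_tilted hXU
  have h1 := InformationTheory.integral_llr_add_sub_measure_univ_nonneg
    (hac.trans (absolutelyContinuous_tilted hXU)) (integrable_llr_tilted_right hac hXQ hint hXU)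
  rw [integral_llr_tilted_right hac hXQ hXU hint] at h1
  simp at h1
  linarith

theorem dv_ac {F : Type*} [MeasurableSpace F]
    (Q U : Measure F) [IsProbabilityMeasure Q] [IsProbabilityMeasure U] (s : ℝ)
    (h : ∀ X : F → ℝ, Measurable X → (∃ C : ℝ, ∀ f, |X f| ≤ C) →
      (∫ f, X f ∂Q) - Real.log (∫ f, Real.exp (X f) ∂U) ≤ s) : Q ≪ U := by
  refine Measure.AbsolutelyContinuous.mk fun A hA hUA => ?_
  by_contra hQA
  have hpos : 0 < Q.real A := by
    rw [measureReal_def]; exact ENNReal.toReal_pos hQA (measure_ne_top _ _)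
  obtain ⟨n, hn⟩ := exists_nat_gt (s / Q.real A)
  have h1 := h (A.indicator fun _ => (n : ℝ)) (measurable_const.indicator hA) ⟨n, fun f => by
    by_cases hf : f ∈ A <;> simp [hf]⟩
  have h2 : ∫ f, Real.exp (A.indicator (fun _ => (n : ℝ)) f) ∂U = 1 := by
    have : (fun f => Real.exp (A.indicator (fun _ => (n : ℝ)) f)) =ᵐ[U] fun _ => (1 : ℝ) := by
      filter_upwards [measure_eq_zero_iff_ae_notMem.1 hUA] with f hf
      simp [hf]
    rw [integral_congr_ae this]; simp
  rw [h2, integral_indicator hA] at h1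
  simp at h1
  rw [div_lt_iff₀ hpos] at hn
  linarith

theorem dv_lower {F : Type*} [MeasurableSpace F]
    (Q U : Measure F) [IsProbabilityMeasure Q] [IsProbabilityMeasure U] (s : ℝ)
    (h : ∀ X : F → ℝ, Measurable X → (∃ C : ℝ, ∀ f, |X f| ≤ C) →
      (∫ f, X f ∂Q) - Real.log (∫ f, Real.exp (X f) ∂U) ≤ s) (hac : Q ≪ U) :
    Integrable (llr Q U) Q ∧ ∫ f, llr Q U f ∂Q ≤ s := by
  set p : F → ℝ := fun f => (Q.rnDeriv U f).toReal with hp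
  have hpm : Measurable p := (Measure.measurable_rnDeriv Q U).ennreal_toReal
  have hp0 : ∀ f, 0 ≤ p f := fun f => ENNReal.toReal_nonneg
  let X : ℕ → F → ℝ := fun n f => Real.log (max (Real.exp (-n)) (min (Real.exp n) (p f)))
  have hXm : ∀ n, Measurable (X n) := fun n => by
    exact Real.measurable_log.comp (measurable_const.max (measurable_const.min hpm))
  have hpos : ∀ (n : ℕ) f, 0 < max (Real.exp (-n)) (min (Real.exp n) (p f)) :=
    fun n f => lt_max_of_lt_left (Real.exp_pos _)
  have hXb : ∀ n f, |X n f| ≤ n := fun n f => by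
    rw [abs_le]
    constructor
    · rw [Real.le_log_iff_exp_le (hpos n f)]; exact le_max_left _ _
    · rw [Real.log_le_iff_le_exp (hpos n f)]
      refine max_le (Real.exp_le_exp.2 ?_) (min_le_left _ _)
      have : (0 : ℝ) ≤ n := n.cast_nonneg
      linarith
  have hXi : ∀ n, Integrable (X n) Q := fun n =>
    Integrable.of_bound (hXm n).aestronglyMeasurable n (Filter.Eventually.of_forall (hXb n))
  have hXe : ∀ᵐ f ∂Q, ∀ n, X n f = max (-(n : ℝ)) (min n (llr Q U f)) := by
    filter_upwards [exp_llr_of_ac Q U hac] with f hf n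
    simp only [X, hp]
    rw [← hf, ← Real.exp_monotone.map_min, ← Real.exp_monotone.map_max, Real.log_exp]
  have hpi : Integrable p U := Measure.integrable_toReal_rnDeriv
  have hXs : ∀ n : ℕ, ∫ f, X n f ∂Q ≤ s + Real.exp (-n) := fun n => by
    have h1 := h (X n) (hXm n) ⟨n, hXb n⟩
    have h2 : ∫ f, Real.exp (X n f) ∂U ≤ 1 + Real.exp (-n) := by
      calc ∫ f, Real.exp (X n f) ∂U ≤ ∫ f, (p f + Real.exp (-n)) ∂U := by
            refine integral_mono_of_nonneg (Filter.Eventually.of_forall fun f => (Real.exp_pos _).le)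
              (hpi.add (integrable_const _)) (Filter.Eventually.of_forall fun f => ?_)
            simp only [X]
            rw [Real.exp_log (hpos n f)]
            refine max_le (by linarith [hp0 f]) ((min_le_right _ _).trans ?_)
            linarith [Real.exp_pos (-(n : ℝ))]
        _ = 1 + Real.exp (-n) := by
            rw [integral_add hpi (integrable_const _), Measure.integral_toReal_rnDeriv hac]
            simp
    have hei : Integrable (fun f => Real.exp (X n f)) U := by
      refine Integrable.of_bound (by have := hXm n; fun_prop) (Real.exp n) (Filter.Eventually.of_forall fun f => ?_)
      rw [Real.norm_eq_abs, abs_of_pos (Real.exp_pos _)]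
      exact Real.exp_le_exp.2 ((le_abs_self _).trans (hXb n f))
    have h3 := Real.log_le_sub_one_of_pos (integral_exp_pos hei)
    linarith
  have hlim : ∀ᵐ f ∂Q, Filter.Tendsto (fun n => X n f) Filter.atTop (nhds (llr Q U f)) := by
    filter_upwards [hXe] with f hf
    refine tendsto_const_nhds.congr' ?_
    obtain ⟨N, hN⟩ := exists_nat_ge |llr Q U f|
    filter_upwards [Filter.eventually_ge_atTop N] with n hn
    have : |llr Q U f| ≤ n := hN.trans (by exact_mod_cast hn)
    rw [abs_le] at this
    rw [hf n, min_eq_right this.2, max_eq_right this.1]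
  have hE : Integrable (fun f => Real.exp (-llr Q U f)) Q :=
    Measure.integrable_toReal_rnDeriv.congr (exp_neg_llr hac).symm
  have hlm := measurable_llr Q U
  have hsum : Integrable (fun f => llr Q U f + Real.exp (-llr Q U f)) Q := by
    refine ⟨(by fun_prop), ?_⟩
    have hF : ∫⁻ f, ‖llr Q U f + Real.exp (-llr Q U f)‖ₑ ∂Q ≤
        Filter.liminf (fun n => ∫⁻ f, ‖X n f + Real.exp (-llr Q U f)‖ₑ ∂Q) Filter.atTop := by
      have := lintegral_liminf_le (μ := Q) (u := Filter.atTop) (f := fun (n : ℕ) f => ‖X n f + Real.exp (-llr Q U f)‖ₑ)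
        (fun n => by have := hXm n; fun_prop)
      refine le_trans (le_of_eq (lintegral_congr_ae ?_)) this
      filter_upwards [hlim] with f hf
      exact ((hf.add_const _).enorm).liminf_eq.symm
    have hB : ∀ n, ∫⁻ f, ‖X n f + Real.exp (-llr Q U f)‖ₑ ∂Q ≤
        ENNReal.ofReal (s + 1 + ∫ f, Real.exp (-llr Q U f) ∂Q) := fun n => by
      have hnn : 0 ≤ᵐ[Q] fun f => X n f + Real.exp (-llr Q U f) := by
        filter_upwards [hXe] with f hf
        have h1 := Real.add_one_le_exp (-llr Q U f)
        have h2 := Real.exp_pos (-llr Q U f)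
        have h3 : (0 : ℝ) ≤ n := n.cast_nonneg
        have h4 : -Real.exp (-llr Q U f) ≤ max (-(n : ℝ)) (min n (llr Q U f)) :=
          le_max_of_le_right (le_min (by linarith) (by linarith))
        simp only [Pi.zero_apply]
        rw [hf n]
        linarith
      have heq : ∫⁻ f, ‖X n f + Real.exp (-llr Q U f)‖ₑ ∂Q =
          ENNReal.ofReal (∫ f, (X n f + Real.exp (-llr Q U f)) ∂Q) := by
        have hi : Integrable (fun f => X n f + Real.exp (-llr Q U f)) Q := (hXi n).add hE
        rw [ofReal_integral_eq_lintegral_ofReal hi hnn]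
        refine lintegral_congr_ae ?_
        filter_upwards [hnn] with f hf
        exact Real.enorm_of_nonneg hf
      rw [heq, integral_add (hXi n) hE]
      refine ENNReal.ofReal_le_ofReal ?_
      have h5 := hXs n
      have h6 : Real.exp (-(n : ℝ)) ≤ 1 := Real.exp_le_one_iff.2 (by simp)
      linarith
    refine lt_of_le_of_lt (hF.trans ((Filter.liminf_le_liminf
      (Filter.Eventually.of_forall hB)).trans (Filter.liminf_const _).le)) ENNReal.ofReal_lt_top
  have hint : Integrable (llr Q U) Q := by
    refine (hsum.sub hE).congr (Filter.Eventually.of_forall fun f => ?_)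
    simp
  refine ⟨hint, ?_⟩
  have hT := tendsto_integral_of_dominated_convergence (μ := Q) (F := X) (f := llr Q U)
    (fun f => |llr Q U f|) (fun n => (hXm n).aestronglyMeasurable) hint.abs (fun n => by
      filter_upwards [hXe] with f hf
      rw [hf n, Real.norm_eq_abs]
      have : (0 : ℝ) ≤ n := n.cast_nonneg
      rw [abs_le]
      constructor
      · refine le_max_of_le_right (le_min ?_ (neg_abs_le _))
        linarith [abs_nonneg (llr Q U f)]
      · exact max_le (by linarith [abs_nonneg (llr Q U f)]) ((min_le_right _ _).trans (le_abs_self _)))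
    hlim
  have hR : Filter.Tendsto (fun n : ℕ => s + Real.exp (-n)) Filter.atTop (nhds (s + 0)) :=
    (Real.tendsto_exp_neg_atTop_nhds_zero.comp tendsto_natCast_atTop_atTop).const_add s
  have := le_of_tendsto_of_tendsto' hT hR hXs
  linarith

/-- **Donsker--Varadhan variational formula.**  For probability measures `Q, U` on a
measurable space `F`, the KL divergence equals the supremum, over bounded measurable
`X : F → ℝ`, of `∫ X dQ − log ∫ e^X dU`; in particular every bounded measurable `X`
satisfies `∫ X dQ ≤ D_KL(Q‖U) + log ∫ e^X dU`. -/
theorem donsker_varadhan {F : Type*} [MeasurableSpace F]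
    (Q U : Measure F) [IsProbabilityMeasure Q] [IsProbabilityMeasure U] :
    (klDiv Q U =
      ⨆ X : {X : F → ℝ // Measurable X ∧ ∃ C : ℝ, ∀ f, |X f| ≤ C},
        (((∫ f, X.1 f ∂Q) - Real.log (∫ f, Real.exp (X.1 f) ∂U) : ℝ) : EReal)) ∧
    (∀ X : F → ℝ, Measurable X → (∃ C : ℝ, ∀ f, |X f| ≤ C) →
      ((∫ f, X f ∂Q : ℝ) : EReal) ≤
        klDiv Q U + ((Real.log (∫ f, Real.exp (X f) ∂U) : ℝ) : EReal)) := by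
  have key : ∀ X : F → ℝ, Measurable X → (∃ C : ℝ, ∀ f, |X f| ≤ C) →
      (((∫ f, X f ∂Q) - Real.log (∫ f, Real.exp (X f) ∂U) : ℝ) : EReal) ≤ klDiv Q U := by
    rintro X hX ⟨C, hC⟩
    unfold klDiv
    split_ifs with hc
    · exact EReal.coe_le_coe_iff.2 (dv_upper Q U hc.1 hc.2 X hX C hC)
    · exact le_top
  refine ⟨le_antisymm ?_ (iSup_le fun X => key X.1 X.2.1 X.2.2), fun X hX hC => ?_⟩
  · refine EReal.le_of_forall_lt_iff_le.1 fun s hs => ?_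
    have h : ∀ X : F → ℝ, Measurable X → (∃ C : ℝ, ∀ f, |X f| ≤ C) →
        (∫ f, X f ∂Q) - Real.log (∫ f, Real.exp (X f) ∂U) ≤ s := fun X hX hC =>
      EReal.coe_le_coe_iff.1 ((le_iSup (fun X : {X : F → ℝ // Measurable X ∧ ∃ C : ℝ, ∀ f, |X f| ≤ C} =>
        (((∫ f, X.1 f ∂Q) - Real.log (∫ f, Real.exp (X.1 f) ∂U) : ℝ) : EReal)) ⟨X, hX, hC⟩).trans hs.le)
    have hac := dv_ac Q U s h
    obtain ⟨hi, hle⟩ := dv_lower Q U s h hac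
    unfold klDiv
    rw [if_pos ⟨hac, hi⟩]
    exact EReal.coe_le_coe_iff.2 hle
  · have h1 := add_le_add_left (key X hX hC) ((Real.log (∫ f, Real.exp (X f) ∂U) : ℝ) : EReal)
    rw [← EReal.coe_add, sub_add_cancel] at h1
    exact h1
end

section
/- (Rademacher centrality.) Let P be a probability measure on a measurable space Z and let X : Z → ℝ be measurable with ∫ X dP = 0 and ∫ X² dP < ∞. Then ∫_Z exp( X(z) − ( X(z)² + ∫ X² dP ) / 2 ) dP(z) ≤ 1. -/
open MeasureTheory Real

/-- **Rademacher centrality.**  If `X` is centered and square-integrable under the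
probability measure `P`, then `∫ exp(X − (X² + E[X²])/2) dP ≤ 1`; that is, `X` is
`(X² + E[X²])/2`-central. -/
theorem rademacher_centrality
    {Z : Type*} [MeasurableSpace Z] (P : Measure Z) [IsProbabilityMeasure P]
    (X : Z → ℝ) (hXmeas : Measurable X)
    (hcentered : ∫ z, X z ∂P = 0)
    (hL2 : Integrable (fun z => (X z)^2) P) :
    ∫ z, Real.exp (X z - ((X z)^2 + ∫ z', (X z')^2 ∂P) / 2) ∂P ≤ 1 := by
  have key : ∀ x : ℝ, Real.exp (x - x^2/2) ≤ 1 + x + x^2/2 := by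
    intro x
    have h1 := Real.add_one_le_exp (-(x - x^2/2))
    have hp : 0 < 1 - x + x^2/2 := by nlinarith [sq_nonneg (x-1)]
    have hq : 0 < 1 + x + x^2/2 := by nlinarith [sq_nonneg (x+1)]
    have hm : Real.exp (x - x^2/2) * Real.exp (-(x - x^2/2)) = 1 := by
      rw [← Real.exp_add]; simp
    have he := Real.exp_pos (x - x^2/2)
    have h2 : Real.exp (x - x^2/2) * (1 - x + x^2/2) ≤ 1 := by
      rw [← hm]
      exact mul_le_mul_of_nonneg_left (by linarith) he.le
    have h3 : 1 ≤ (1 + x + x^2/2) * (1 - x + x^2/2) := by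
      nlinarith [sq_nonneg (x^2)]
    exact le_of_mul_le_mul_right (h2.trans h3) hp
  have hX : Integrable X P :=
    ((memLp_two_iff_integrable_sq hXmeas.aestronglyMeasurable).2 hL2).integrable (by norm_num)
  set v := ∫ z', (X z')^2 ∂P with hv
  have hi : Integrable (fun z => 1 + X z + (X z)^2/2) P :=
    ((integrable_const 1).add hX).add (hL2.div_const 2)
  have hI : ∫ z, (1 + X z + (X z)^2/2) ∂P = 1 + v/2 := by
    have h1X : Integrable (fun z => 1 + X z) P := (integrable_const 1).add hX
    rw [integral_add h1X (hL2.div_const 2),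
      integral_add (integrable_const 1) hX, integral_div, hcentered]
    simp [hv]
  have hle : ∫ z, Real.exp (X z - (X z)^2/2) ∂P ≤ 1 + v/2 := by
    rw [← hI]
    exact integral_mono_of_nonneg (Filter.Eventually.of_forall fun z => (Real.exp_pos _).le) hi
      (Filter.Eventually.of_forall fun z => key (X z))
  have heq : ∀ z, Real.exp (X z - ((X z)^2 + v) / 2)
      = Real.exp (X z - (X z)^2/2) * Real.exp (-(v/2)) := by
    intro z
    rw [← Real.exp_add]; congr 1; ring
  simp_rw [heq]
  rw [integral_mul_const]
  calc _ ≤ Real.exp (v/2) * Real.exp (-(v/2)) :=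
        mul_le_mul_of_nonneg_right (hle.trans (by linarith [Real.add_one_le_exp (v/2)]))
          (Real.exp_pos _).le
    _ = 1 := by rw [← Real.exp_add]; simp
end

section
/- Let N = N(λ̄, ρ²) be the Gaussian probability measure on ℝ with mean λ̄ ∈ ℝ and variance ρ² > 0, and let 𝒰₁ be the standard Cauchy distribution on ℝ, with Lebesgue density t ↦ 1/(π(1+t²)). Then D_KL(N‖𝒰₁) ≤ log( π(1 + λ̄² + ρ²) ) − (1/2)·log(2π e ρ²), and consequently D_KL(N‖𝒰₁) ≤ λ̄² + log( ρ + 1/ρ ). -/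
open MeasureTheory Real
open scoped Classical

/-- The standard Cauchy distribution on `ℝ`, with Lebesgue density `t ↦ 1/(π(1+t²))`. -/
noncomputable def stdCauchy : Measure ℝ :=
  volume.withDensity fun t => ENNReal.ofReal (1 / (Real.pi * (1 + t^2)))

open ProbabilityTheory in
theorem llr_gc (l ρ : ℝ) (hρ : 0 < ρ) :
    llr (gaussianReal l (ρ^2).toNNReal) stdCauchy =ᵐ[gaussianReal l (ρ^2).toNNReal]
      fun t => Real.log Real.pi + Real.log (1 + t^2) - (1/2) * Real.log (2 * Real.pi * ρ^2)
        - (t - l)^2 / (2 * ρ^2) := by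
  have hv : (ρ^2).toNNReal ≠ 0 := by
    have : 0 < ρ^2 := by positivity
    simpa using hρ.ne'
  have hac := gaussianReal_absolutelyContinuous l hv
  have h1 : Measure.rnDeriv (gaussianReal l (ρ^2).toNNReal) stdCauchy =ᵐ[volume] _ :=
    Measure.rnDeriv_withDensity_right _ volume
    (f := fun t : ℝ => ENNReal.ofReal (1 / (Real.pi * (1 + t^2))))
    (by fun_prop) (ae_of_all _ fun t => by
      have : 0 < 1 / (Real.pi * (1 + t^2)) := by positivity
      simpa only [ne_eq, ENNReal.ofReal_eq_zero, not_le] using this)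
    (ae_of_all _ fun t => ENNReal.ofReal_ne_top)
  have h2 := rnDeriv_gaussianReal l (ρ^2).toNNReal
  filter_upwards [hac.ae_le h1, hac.ae_le h2] with t ht1 ht2
  have hp : 0 < 1 / (Real.pi * (1 + t^2)) := by positivity
  have hq : (0:ℝ) < 1 + t^2 := by positivity
  rw [llr, ht1, ht2, ENNReal.toReal_mul, toReal_gaussianPDF, ENNReal.toReal_inv,
    ENNReal.toReal_ofReal hp.le, gaussianPDFReal, Real.coe_toNNReal _ (sq_nonneg ρ)]
  rw [one_div, inv_inv, Real.log_mul (by positivity) (by positivity),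
    Real.log_mul (by positivity) (by positivity), Real.log_mul (by positivity) (by positivity),
    Real.log_exp, Real.log_inv, Real.log_sqrt (by positivity)]
  ring

theorem bound2 (l ρ : ℝ) (hρ : 0 < ρ) :
    Real.log (Real.pi * (1 + l^2 + ρ^2)) - (1/2) * Real.log (2 * Real.pi * Real.exp 1 * ρ^2)
      ≤ l^2 + Real.log (ρ + 1/ρ) := by
  have hpi := Real.pi_pos
  have h1 : Real.log (1 + l^2 + ρ^2) ≤ l^2 + Real.log (1 + ρ^2) := by
    rw [← Real.log_exp (l^2), ← Real.log_mul (by positivity) (by positivity), Real.log_exp]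
    apply Real.log_le_log (by positivity)
    have := Real.add_one_le_exp (l^2)
    nlinarith [sq_nonneg (l*ρ), sq_nonneg ρ, mul_le_mul_of_nonneg_right this (by positivity : 0 ≤ 1 + ρ^2)]
  have h2 : Real.log (ρ + 1/ρ) = Real.log (1 + ρ^2) - Real.log ρ := by
    rw [← Real.log_div (by positivity) (by positivity)]
    congr 1
    field_simp
    ring
  have h3 : Real.log Real.pi ≤ Real.log 2 + 1 := by
    rw [← Real.log_exp 1, ← Real.log_mul (by positivity) (by positivity)]
    apply Real.log_le_log hpi
    have := Real.add_one_le_exp (1:ℝ)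
    linarith [Real.pi_lt_four]
  rw [Real.log_mul (by positivity) (by positivity), Real.log_mul (by positivity) (by positivity),
    Real.log_mul (by positivity) (by positivity), Real.log_mul (by positivity) (by positivity),
    Real.log_exp, Real.log_pow]
  push_cast
  linarith

open ProbabilityTheory in
theorem bound1 (l ρ : ℝ) (hρ : 0 < ρ) :
    klDiv (gaussianReal l (ρ^2).toNNReal) stdCauchy ≤
        ((Real.log (Real.pi * (1 + l^2 + ρ^2))
          - (1/2) * Real.log (2 * Real.pi * Real.exp 1 * ρ^2) : ℝ) : EReal) := by
  have hv : (ρ^2).toNNReal ≠ 0 := by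
    have : 0 < ρ^2 := by positivity
    simpa using hρ.ne'
  have hllr := llr_gc l ρ hρ
  have hvc : (((ρ^2).toNNReal : NNReal) : ℝ) = ρ^2 := Real.coe_toNNReal _ (sq_nonneg ρ)
  have hvar := variance_fun_id_gaussianReal (μ := l) (v := (ρ^2).toNNReal)
  have hmean := integral_id_gaussianReal (μ := l) (v := (ρ^2).toNNReal)
  have hmem : MemLp (fun x : ℝ => x) 2 (gaussianReal l (ρ^2).toNNReal) :=
    memLp_id_gaussianReal 2
  have hac : gaussianReal l (ρ^2).toNNReal ≪ stdCauchy := by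
    refine (gaussianReal_absolutelyContinuous l hv).trans ?_
    refine withDensity_absolutelyContinuous' (by fun_prop) (ae_of_all _ fun t => ?_)
    have : 0 < 1 / (Real.pi * (1 + t^2)) := by positivity
    simpa only [ne_eq, ENNReal.ofReal_eq_zero, not_le] using this
  have hm2 : ∫ x, (x - l)^2 ∂(gaussianReal l (ρ^2).toNNReal) = ρ^2 := by
    rw [variance_eq_integral (by fun_prop), hmean, hvc] at hvar
    exact hvar
  have hs2 : ∫ x, x^2 ∂(gaussianReal l (ρ^2).toNNReal) = l^2 + ρ^2 := by
    have h := variance_eq_sub hmem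
    rw [variance_fun_id_gaussianReal, hvc, hmean] at h
    simp only [Pi.pow_apply] at h
    linarith
  have hi2 : Integrable (fun x : ℝ => x^2) (gaussianReal l (ρ^2).toNNReal) := hmem.integrable_sq
  have him2 : Integrable (fun x : ℝ => (x-l)^2) (gaussianReal l (ρ^2).toNNReal) :=
    (hmem.sub (memLp_const l)).integrable_sq
  have hlog : Integrable (fun x : ℝ => Real.log (1 + x^2)) (gaussianReal l (ρ^2).toNNReal) := by
    refine hi2.mono' (Measurable.aestronglyMeasurable (Real.measurable_log.comp (by fun_prop))) (ae_of_all _ fun x => ?_)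
    have h0 : 0 ≤ Real.log (1 + x^2) := Real.log_nonneg (by nlinarith [sq_nonneg x])
    rw [Real.norm_eq_abs, abs_of_nonneg h0]
    have := Real.log_le_sub_one_of_pos (show 0 < 1 + x^2 by positivity)
    linarith
  have hint : Integrable (fun t => Real.log Real.pi + Real.log (1 + t^2)
      - (1/2) * Real.log (2 * Real.pi * ρ^2) - (t - l)^2 / (2 * ρ^2))
      (gaussianReal l (ρ^2).toNNReal) :=
    (((integrable_const _).add hlog).sub (integrable_const _)).sub (him2.div_const _)
  have hA : 0 < 1 + l^2 + ρ^2 := by positivity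
  have hlogle : ∫ x, Real.log (1 + x^2) ∂(gaussianReal l (ρ^2).toNNReal)
      ≤ Real.log (1 + l^2 + ρ^2) := by
    have hb : Integrable (fun x : ℝ => Real.log (1 + l^2 + ρ^2) - 1 + 1 / (1 + l^2 + ρ^2)
        + x^2 / (1 + l^2 + ρ^2)) (gaussianReal l (ρ^2).toNNReal) :=
      (integrable_const _).add (hi2.div_const _)
    refine (integral_mono hlog hb fun x => ?_).trans (le_of_eq ?_)
    · have hx : 0 < 1 + x^2 := by positivity
      have := Real.log_le_sub_one_of_pos (div_pos hx hA)
      rw [Real.log_div hx.ne' hA.ne', add_div] at this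
      simp only
      linarith
    · rw [integral_add (integrable_const _) (hi2.div_const _), integral_div, hs2]
      simp
      field_simp
      ring
  have hI1 : Integrable (fun t => Real.log Real.pi + Real.log (1 + t^2)) (gaussianReal l (ρ^2).toNNReal) :=
    (integrable_const _).add hlog
  have hI2 : Integrable (fun t => Real.log Real.pi + Real.log (1 + t^2)
      - (1/2) * Real.log (2 * Real.pi * ρ^2)) (gaussianReal l (ρ^2).toNNReal) := hI1.sub (integrable_const _)
  unfold klDiv
  rw [if_pos ⟨hac, hint.congr hllr.symm⟩, EReal.coe_le_coe_iff, integral_congr_ae hllr,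
    integral_sub hI2 (him2.div_const _),
    integral_sub hI1 (integrable_const _),
    integral_add (integrable_const _) hlog, integral_div, hm2]
  have e1 : ρ^2 / (2 * ρ^2) = 1/2 := by field_simp
  have e2 : Real.log (2 * Real.pi * Real.exp 1 * ρ^2) = Real.log (2 * Real.pi * ρ^2) + 1 := by
    rw [show 2 * Real.pi * Real.exp 1 * ρ^2 = 2 * Real.pi * ρ^2 * Real.exp 1 by ring,
      Real.log_mul (by positivity) (by positivity), Real.log_exp]
  rw [e1, e2, Real.log_mul Real.pi_ne_zero hA.ne']
  simp only [integral_const, probReal_univ, one_smul]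
  linarith

/-- The KL divergence from the Gaussian `N(λ̄, ρ²)` to the standard Cauchy distribution
is at most `log(π(1 + λ̄² + ρ²)) − (1/2)log(2πeρ²)`, and consequently at most
`λ̄² + log(ρ + 1/ρ)`. -/
theorem kl_gaussian_cauchy (lamBar ρ : ℝ) (hρ : 0 < ρ) :
    klDiv (ProbabilityTheory.gaussianReal lamBar (ρ^2).toNNReal) stdCauchy ≤
        ((Real.log (Real.pi * (1 + lamBar^2 + ρ^2))
          - (1/2) * Real.log (2 * Real.pi * Real.exp 1 * ρ^2) : ℝ) : EReal) ∧
    klDiv (ProbabilityTheory.gaussianReal lamBar (ρ^2).toNNReal) stdCauchy ≤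
        ((lamBar^2 + Real.log (ρ + 1/ρ) : ℝ) : EReal) := by
  exact ⟨bound1 lamBar ρ hρ, (bound1 lamBar ρ hρ).trans (EReal.coe_le_coe_iff.2 (bound2 lamBar ρ hρ))⟩
end

section
/- Let N = N(ᾱ, σ²) be the Gaussian probability measure on ℝ with mean ᾱ ∈ ℝ and variance σ² > 0, and let 𝒰₁(σ) be the Cauchy distribution with scale σ, i.e. the probability measure on ℝ with Lebesgue density α ↦ 1/(σπ(1 + α²/σ²)). Then D_KL(N(ᾱ,σ²)‖𝒰₁(σ)) ≤ log( 2 + ᾱ²/σ² ). -/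
open MeasureTheory Real
open scoped Classical

/-- The Cauchy distribution on `ℝ` with scale `σ`, having Lebesgue density
`α ↦ 1/(σπ(1 + α²/σ²))`. -/
noncomputable def cauchyScale (σ : ℝ) : Measure ℝ :=
  volume.withDensity fun α => ENNReal.ofReal (1 / (σ * Real.pi * (1 + α^2 / σ^2)))

open ProbabilityTheory in
lemma gauss_eq (a σ : ℝ) (hσ : 0 < σ) :
    gaussianReal a (σ^2).toNNReal = (cauchyScale σ).withDensity (fun x => ENNReal.ofReal
      (Real.exp (Real.log (Real.pi / 2) / 2 - (x - a)^2 / (2 * σ^2) + Real.log (1 + x^2/σ^2)))) := by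
  have hv : (σ^2).toNNReal ≠ 0 := by
    simp only [ne_eq, Real.toNNReal_eq_zero, not_le]; positivity
  rw [gaussianReal_of_var_ne_zero _ hv, cauchyScale, ← withDensity_mul _ (by fun_prop) (by fun_prop)]
  congr 1
  ext x
  have h1 : 0 < 1 + x^2/σ^2 := by positivity
  have hpi := Real.pi_pos
  simp only [Pi.mul_apply, gaussianPDF]
  rw [← ENNReal.ofReal_mul (by positivity)]
  congr 1
  rw [gaussianPDFReal, Real.coe_toNNReal _ (by positivity), Real.exp_add, Real.exp_log h1,
    sub_eq_add_neg (Real.log _ / 2), Real.exp_add, neg_div]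
  have h2 : Real.exp (Real.log (Real.pi/2) / 2) = √(Real.pi/2) := by
    rw [← Real.log_sqrt (by positivity), Real.exp_log (by positivity)]
  have h3 : √(2 * Real.pi * σ^2) = 2 * √(Real.pi/2) * σ := by
    rw [Real.sqrt_eq_iff_mul_self_eq_of_pos (by positivity)]
    have := Real.mul_self_sqrt (show 0 ≤ Real.pi/2 by positivity)
    linear_combination 4 * σ^2 * this
  rw [h2, h3]
  have h4 := Real.sq_sqrt (show 0 ≤ Real.pi/2 by positivity)
  have h5 : 0 < √(Real.pi/2) := by positivity
  have h6 : Real.pi = 2 * √(Real.pi/2)^2 := by linarith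
  generalize √(Real.pi/2) = s at *
  rw [h6]
  field_simp

open ProbabilityTheory in
theorem kl_gaussian_cauchy_scale (alphaBar σ : ℝ) (hσ : 0 < σ) :
    klDiv (ProbabilityTheory.gaussianReal alphaBar (σ^2).toNNReal) (cauchyScale σ) ≤
      ((Real.log (2 + alphaBar^2 / σ^2) : ℝ) : EReal) := by
  have hE := gauss_eq alphaBar σ hσ
  set Q := gaussianReal alphaBar (σ^2).toNNReal with hQ
  have : SigmaFinite (cauchyScale σ) := by
    unfold cauchyScale
    exact SigmaFinite.withDensity_ofReal _
  have hac : Q ≪ cauchyScale σ := by rw [hE]; exact withDensity_absolutelyContinuous _ _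
  set g : ℝ → ℝ := fun x => Real.log (Real.pi / 2) / 2 - (x - alphaBar)^2 / (2 * σ^2)
    + Real.log (1 + x^2/σ^2) with hg
  have hae : llr Q (cauchyScale σ) =ᵐ[Q] g := by
    have h := Measure.rnDeriv_withDensity (cauchyScale σ)
      (f := fun x => ENNReal.ofReal (Real.exp (g x))) (by fun_prop)
    rw [← hE] at h
    filter_upwards [hac.ae_le h] with x hx
    rw [llr, hx, ENNReal.toReal_ofReal (Real.exp_pos _).le, Real.log_exp]
  have hv : ((σ^2).toNNReal : ℝ) = σ^2 := Real.coe_toNNReal _ (by positivity)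
  have hL : MemLp id 2 Q := memLp_id_gaussianReal 2
  have hi2 : Integrable (fun x : ℝ => x^2) Q := hL.integrable_sq
  have hi1 : Integrable (fun x : ℝ => x) Q := hL.integrable (by norm_num)
  have hm : ∫ x, x ∂Q = alphaBar := integral_id_gaussianReal
  have hvar : ∫ x, (x - alphaBar)^2 ∂Q = σ^2 := by
    have h := variance_eq_integral (μ := Q) (X := fun x : ℝ => x) (by fun_prop)
    rw [hm] at h
    rw [← h, hQ, variance_fun_id_gaussianReal, hv]
  have hi3 : Integrable (fun x : ℝ => (x - alphaBar)^2) Q :=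
    (hL.sub (memLp_const alphaBar)).integrable_sq
  have hsq : ∫ x, x^2 ∂Q = σ^2 + alphaBar^2 := by
    have : ∀ x : ℝ, x^2 = (x-alphaBar)^2 + (2*alphaBar*x - alphaBar^2) := fun x => by ring
    have hi6 : Integrable (fun x : ℝ => 2*alphaBar*x - alphaBar^2) Q :=
      (hi1.const_mul _).sub (integrable_const _)
    rw [integral_congr_ae (.of_forall this), integral_add hi3 hi6,
      integral_sub (hi1.const_mul _) (integrable_const _), integral_const_mul, hm, hvar]
    simp
    ring
  have hil : Integrable (fun x : ℝ => Real.log (1 + x^2/σ^2)) Q := by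
    refine (hi2.div_const (σ^2)).mono' (Measurable.aestronglyMeasurable (by fun_prop)) (.of_forall fun x => ?_)
    have h0 : 0 ≤ x^2/σ^2 := by positivity
    rw [Real.norm_of_nonneg (Real.log_nonneg (by linarith))]
    linarith [Real.log_le_sub_one_of_pos (show 0 < 1 + x^2/σ^2 by linarith)]
  have hi4 : Integrable (fun x : ℝ => Real.log (Real.pi / 2) / 2 - (x - alphaBar)^2 / (2 * σ^2)) Q :=
    (integrable_const _).sub (hi3.div_const _)
  have hgi : Integrable g Q := hi4.add hil
  have hli : Integrable (llr Q (cauchyScale σ)) Q := hgi.congr hae.symm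
  rw [klDiv, if_pos ⟨hac, hli⟩, EReal.coe_le_coe_iff, integral_congr_ae hae, hg,
    integral_add hi4 hil, integral_sub (integrable_const _) (hi3.div_const _), integral_div (2 * σ^2), hvar]
  set M := 2 + alphaBar^2/σ^2 with hM
  have hMpos : 0 < M := by positivity
  have hi5 : Integrable (fun x : ℝ => (x^2/σ^2) / M) Q := (hi2.div_const _).div_const _
  have hlog : ∫ x, Real.log (1 + x^2/σ^2) ∂Q ≤ Real.log M := by
    calc ∫ x, Real.log (1 + x^2/σ^2) ∂Q
        ≤ ∫ x, ((x^2/σ^2) / M + (Real.log M + 1/M - 1)) ∂Q := by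
          refine integral_mono hil (hi5.add (integrable_const _)) fun x => ?_
          have h1 : 0 < 1 + x^2/σ^2 := by positivity
          have h2 := Real.log_le_sub_one_of_pos (div_pos h1 hMpos)
          rw [Real.log_div h1.ne' hMpos.ne', add_div] at h2
          simp only
          linarith
      _ = Real.log M := by
          rw [integral_add hi5 (integrable_const _), integral_div, integral_div, hsq]
          simp
          have : (σ^2 + alphaBar^2)/σ^2 = M - 1 := by rw [hM]; field_simp; ring
          rw [this]
          field_simp
          ring
  have hc : Real.log (Real.pi/2) ≤ 1 := by
    have := Real.log_le_sub_one_of_pos (show 0 < Real.pi/2 by positivity)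
    linarith [Real.pi_le_four]
  have hd : σ^2 / (2*σ^2) = 1/2 := by field_simp
  rw [hd]
  simp
  linarith
end

section
/- (Expected Gaussian spectral norms.) Let m ≥ 1 and let G = (g_{ij}) be an m × m random matrix whose entries are independent, with g_{ij} Gaussian of mean m_{ij} ∈ ℝ and variance v_{ij} ≥ 0 for i, j ∈ {1,…,m}. Let M = (m_{ij}), let v = max( max_i Σ_{j=1}^m v_{ij}, max_j Σ_{i=1}^m v_{ij} ), and let γ_m = sqrt(2·log(2em)). Then sqrt( E[ ‖G‖₂² ] ) ≤ ‖M‖₂ + γ_m · sqrt(v), where ‖A‖₂ denotes the spectral (ℓ²-operator) norm of the matrix A. -/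
open MeasureTheory Real ProbabilityTheory

/-- The spectral (ℓ²-operator) norm of a real square matrix. -/
noncomputable def specNorm {m : ℕ} (A : Matrix (Fin m) (Fin m) ℝ) : ℝ :=
  ‖LinearMap.toContinuousLinearMap (Matrix.toEuclideanLin A)‖


lemma gauss_int_pow (v : NNReal) (n : ℕ) : Integrable (fun x : ℝ => x ^ n) (gaussianReal 0 v) := by
  have h := (memLp_id_gaussianReal (μ := 0) (v := v) (n : NNReal)).integrable_norm_pow' 
  simp only [id] at h
  refine h.mono (by fun_prop) ?_
  simp

lemma gauss_moment (v : NNReal) (n : ℕ) :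
    ∫ x, x ^ (n + 1) ∂(gaussianReal 0 v) = v * (n * ∫ x, x ^ (n - 1) ∂(gaussianReal 0 v)) := by
  by_cases hv : v = 0
  · subst hv
    simp
  have hv' : (v : ℝ) ≠ 0 := by exact_mod_cast hv
  have hvp : 0 < (v : ℝ) := by positivity
  rw [integral_gaussianReal_eq_integral_smul hv, integral_gaussianReal_eq_integral_smul hv]
  have hint : ∀ k : ℕ, Integrable (fun x : ℝ => x ^ k * gaussianPDFReal 0 v x) := by
    intro k
    have := integrable_rpow_mul_exp_neg_mul_sq (b := 1 / (2 * v)) (by positivity) (s := k)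
      (by have : (0:ℝ) ≤ k := by positivity
          linarith)
    refine (this.const_mul ((√(2 * π * v))⁻¹)).congr (Filter.Eventually.of_forall fun x => ?_)
    simp only [gaussianPDFReal, rpow_natCast, sub_zero]
    rw [show -x ^ 2 / (2 * (v:ℝ)) = -(1 / (2 * v)) * x ^ 2 by ring]
    ring
  have hd : ∀ x : ℝ, HasDerivAt (fun x => -(v : ℝ) * gaussianPDFReal 0 v x)
      (x * gaussianPDFReal 0 v x) x := by
    intro x
    have h1 : HasDerivAt (fun x : ℝ => -x ^ 2 / (2 * (v:ℝ))) (-(2 * x) / (2 * v)) x := by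
      simpa using ((hasDerivAt_pow 2 x).neg).div_const (2 * (v:ℝ))
    have h2 := (h1.exp.const_mul ((√(2 * π * v))⁻¹)).const_mul (-(v:ℝ))
    simp only [gaussianPDFReal, sub_zero]
    refine h2.congr_deriv ?_
    rw [show -(2 * x) / (2 * (v:ℝ)) = - x / v by field_simp]
    generalize rexp (-x ^ 2 / (2 * ↑v)) = E
    field_simp
  have key := integral_mul_deriv_eq_deriv_mul_of_integrable
    (u := fun x : ℝ => x ^ n) (u' := fun x : ℝ => n * x ^ (n - 1))
    (v := fun x => -(v : ℝ) * gaussianPDFReal 0 v x) (v' := fun x => x * gaussianPDFReal 0 v x)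
    (fun x _ => hasDerivAt_pow n x) (fun x _ => hd x) ?_ ?_ ?_
  · simp only [smul_eq_mul]
    calc _ = ∫ x : ℝ, x ^ n * (x * gaussianPDFReal 0 v x) := by
          congr 1; ext x; ring
      _ = _ := by
          rw [key, ← integral_neg, ← integral_const_mul, ← integral_const_mul]
          congr 1; ext x; ring
  · refine (hint (n + 1)).congr (Filter.Eventually.of_forall fun x => ?_)
    simp only [Pi.mul_apply]; ring
  · refine ((hint (n - 1)).const_mul (-(v * n : ℝ))).congr (Filter.Eventually.of_forall fun x => ?_)
    simp only [Pi.mul_apply]; ring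
  · refine ((hint n).const_mul (-(v : ℝ))).congr (Filter.Eventually.of_forall fun x => ?_)
    simp only [Pi.mul_apply]; ring

section ibp
variable {ι : Type*} [Fintype ι]

lemma mv_integrable (w : ι → NNReal) (P : MvPolynomial ι ℝ) :
    Integrable (fun x => MvPolynomial.eval x P) (Measure.pi fun k => gaussianReal 0 (w k)) := by
  induction P using MvPolynomial.induction_on' with
  | monomial s a =>
    simp only [MvPolynomial.eval_monomial, Finsupp.prod_fintype _ _ (fun i => pow_zero _)]
    exact (Integrable.fintype_prod_dep (f := fun i (t : ℝ) => t ^ s i)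
      (fun i => gauss_int_pow (w i) (s i))).const_mul a
  | add p q hp hq =>
    simp only [map_add]
    exact hp.add hq

lemma mv_ibp (w : ι → NNReal) (k : ι) (P : MvPolynomial ι ℝ) :
    ∫ x, x k * MvPolynomial.eval x P ∂(Measure.pi fun k => gaussianReal 0 (w k)) =
    w k * ∫ x, MvPolynomial.eval x (MvPolynomial.pderiv k P)
      ∂(Measure.pi fun k => gaussianReal 0 (w k)) := by
  classical
  induction P using MvPolynomial.induction_on' with
  | monomial s a =>
    simp only [MvPolynomial.pderiv_monomial, MvPolynomial.eval_monomial,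
      Finsupp.prod_fintype _ _ (fun i => pow_zero _)]
    have e1 : ∀ x : ι → ℝ, x k * (a * ∏ i, x i ^ s i) =
        a * ∏ i, (if i = k then x i ^ (s k + 1) else x i ^ s i) := by
      intro x
      rw [← Finset.mul_prod_erase _ _ (Finset.mem_univ k),
        ← Finset.mul_prod_erase _ (fun i => (if i = k then x i ^ (s k + 1) else x i ^ s i))
          (Finset.mem_univ k)]
      rw [Finset.prod_congr rfl (g := fun i => x i ^ s i)
        (f := fun i => (if i = k then x i ^ (s k + 1) else x i ^ s i))]
      · simp only [if_true]; ring
      · intro i hi; simp [Finset.ne_of_mem_erase hi]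
    simp only [e1]
    rw [integral_const_mul, integral_const_mul,
      integral_fintype_prod_eq_prod (fun i (t : ℝ) => if i = k then t ^ (s k + 1) else t ^ s i),
      integral_fintype_prod_eq_prod (fun i (t : ℝ) => t ^ ((s - Finsupp.single k 1 : ι →₀ ℕ) i)),
      ← Finset.mul_prod_erase _ _ (Finset.mem_univ k), 
      ← Finset.mul_prod_erase _ (fun i => ∫ t, t ^ ((s - Finsupp.single k 1 : ι →₀ ℕ) i) ∂(gaussianReal 0 (w i)))
          (Finset.mem_univ k)]
    rw [Finset.prod_congr rfl (g := fun i => ∫ t, t ^ s i ∂(gaussianReal 0 (w i))),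
      Finset.prod_congr (s₂ := Finset.univ.erase k) rfl (g := fun i => ∫ t, t ^ s i ∂(gaussianReal 0 (w i)))
        (f := fun i => ∫ t, t ^ ((s - Finsupp.single k 1 : ι →₀ ℕ) i) ∂(gaussianReal 0 (w i)))]
    · simp only [if_true, gauss_moment]
      simp
      ring
    · intro i hi; simp [Finsupp.single_apply, (Finset.ne_of_mem_erase hi).symm]
    · intro i hi; simp [Finset.ne_of_mem_erase hi]
  | add p q hp hq =>
    simp only [map_add, mul_add]
    have h : ∀ p : MvPolynomial ι ℝ, Integrable (fun x => x k * MvPolynomial.eval x p)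
        (Measure.pi fun k => gaussianReal 0 (w k)) := by
      intro p
      have := mv_integrable w (MvPolynomial.X k * p)
      simp only [map_mul, MvPolynomial.eval_X] at this
      exact this
    rw [integral_add (h p) (h q), integral_add (mv_integrable w _) (mv_integrable w _), hp, hq]
    ring
end ibp

section mat
open Matrix
variable {n : Type*} [Fintype n] [DecidableEq n]

lemma sym_diag (H : Matrix n n ℝ) (hH : Hᵀ = H) :
    ∃ (U : Matrix n n ℝ) (l : n → ℝ), U * Uᵀ = 1 ∧ Uᵀ * U = 1 ∧
      ∀ q : ℕ, H ^ q = U * diagonal (fun i => l i ^ q) * Uᵀ := by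
  have hh : H.IsHermitian := by
    rw [Matrix.IsHermitian, conjTranspose_eq_transpose_of_trivial, hH]
  refine ⟨hh.eigenvectorUnitary, hh.eigenvalues, ?_, ?_, ?_⟩
  · have := Unitary.mul_star_self_of_mem hh.eigenvectorUnitary.2
    rwa [star_eq_conjTranspose, conjTranspose_eq_transpose_of_trivial] at this
  · have := Unitary.star_mul_self_of_mem hh.eigenvectorUnitary.2
    rwa [star_eq_conjTranspose, conjTranspose_eq_transpose_of_trivial] at this
  · have h2 := Unitary.star_mul_self_of_mem hh.eigenvectorUnitary.2
    have h3 := Unitary.mul_star_self_of_mem hh.eigenvectorUnitary.2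
    rw [star_eq_conjTranspose, conjTranspose_eq_transpose_of_trivial] at h2 h3
    have h1 : H = (hh.eigenvectorUnitary : Matrix n n ℝ) * diagonal hh.eigenvalues *
        (hh.eigenvectorUnitary : Matrix n n ℝ)ᵀ := by
      have := hh.spectral_theorem
      rw [Unitary.conjStarAlgAut_apply, star_eq_conjTranspose,
        conjTranspose_eq_transpose_of_trivial] at this
      exact this
    generalize (hh.eigenvectorUnitary : Matrix n n ℝ) = U at *
    generalize hh.eigenvalues = l at *
    intro q
    induction q with
    | zero => simp [h3]
    | succ q ih =>
      rw [pow_succ, ih]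
      rw [h1]
      calc _ = U * diagonal (fun i => l i ^ q) * (Uᵀ * U) * diagonal l * Uᵀ := by noncomm_ring
        _ = _ := by
          rw [h2, mul_one, mul_assoc U, diagonal_mul_diagonal]
          simp only [pow_succ]

lemma scal_ineq (a b : ℝ) (q r : ℕ) (h : Even (q + r)) :
    a ^ q * b ^ r + b ^ q * a ^ r ≤ a ^ (q + r) + b ^ (q + r) := by
  have key : 0 ≤ (|a| ^ q - |b| ^ q) * (|a| ^ r - |b| ^ r) := by
    rcases le_total |a| |b| with hab | hab
    · have h1 := pow_le_pow_left₀ (abs_nonneg a) hab q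
      have h2 := pow_le_pow_left₀ (abs_nonneg a) hab r
      exact mul_nonneg_of_nonpos_of_nonpos (by linarith) (by linarith)
    · have h1 := pow_le_pow_left₀ (abs_nonneg b) hab q
      have h2 := pow_le_pow_left₀ (abs_nonneg b) hab r
      exact mul_nonneg (by linarith) (by linarith)
  have e1 : a ^ q * b ^ r ≤ |a| ^ q * |b| ^ r := by
    rw [← abs_pow, ← abs_pow, ← abs_mul]; exact le_abs_self _
  have e2 : b ^ q * a ^ r ≤ |b| ^ q * |a| ^ r := by
    rw [← abs_pow, ← abs_pow, ← abs_mul]; exact le_abs_self _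
  have e3 : a ^ (q + r) = |a| ^ q * |a| ^ r := by rw [← pow_add, h.pow_abs]
  have e4 : b ^ (q + r) = |b| ^ q * |b| ^ r := by rw [← pow_add, h.pow_abs]
  rw [e3, e4]
  linarith

lemma trace_ineq (A H : Matrix n n ℝ) (hA : Aᵀ = A) (hH : Hᵀ = H) (q r : ℕ) (h : Even (q + r)) :
    trace (A * H ^ q * A * H ^ r) ≤ trace (A * A * H ^ (q + r)) := by
  obtain ⟨U, l, h1, h2, h3⟩ := sym_diag H hH
  set B := Uᵀ * A * U with hB
  have hBs : ∀ i j, B j i = B i j := by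
    intro i j
    have : Bᵀ = B := by
      rw [hB]; simp only [transpose_mul, transpose_transpose, hA, mul_assoc]
    exact congrFun (congrFun this i) j
  have e1 : trace (A * H ^ q * A * H ^ r) =
      trace (B * diagonal (fun i => l i ^ q) * B * diagonal (fun i => l i ^ r)) := by
    rw [h3, h3]
    calc _ = trace ((A * U * diagonal (fun i => l i ^ q) * Uᵀ * A * U * diagonal (fun i => l i ^ r)) * Uᵀ) := by
          congr 1; simp only [mul_assoc]
      _ = _ := by rw [trace_mul_comm, hB]; congr 1; simp only [mul_assoc]
  have e2 : trace (A * A * H ^ (q + r)) = trace (B * B * diagonal (fun i => l i ^ (q + r))) := by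
    rw [h3]
    calc _ = trace ((A * A * U * diagonal (fun i => l i ^ (q + r))) * Uᵀ) := by
          congr 1; simp only [mul_assoc]
      _ = trace (Uᵀ * A * (U * Uᵀ) * A * U * diagonal (fun i => l i ^ (q + r))) := by
          rw [trace_mul_comm, h1]; congr 1; simp only [mul_assoc, one_mul]
      _ = _ := by rw [hB]; congr 1; simp only [mul_assoc]
  have f1 : trace (B * diagonal (fun i => l i ^ q) * B * diagonal (fun i => l i ^ r)) =
      ∑ i, ∑ j, B i j ^ 2 * (l j ^ q * l i ^ r) := by
    simp only [trace, diag_apply]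
    refine Finset.sum_congr rfl fun i _ => ?_
    rw [mul_diagonal, mul_apply, Finset.sum_mul]
    refine Finset.sum_congr rfl fun j _ => ?_
    rw [mul_diagonal, hBs i j]; ring
  have f2 : trace (B * B * diagonal (fun i => l i ^ (q + r))) =
      ∑ i, ∑ j, B i j ^ 2 * l i ^ (q + r) := by
    simp only [trace, diag_apply]
    refine Finset.sum_congr rfl fun i _ => ?_
    rw [mul_diagonal, mul_apply, Finset.sum_mul]
    refine Finset.sum_congr rfl fun j _ => ?_
    rw [hBs i j]; ring
  have g1 : ∑ i, ∑ j, B i j ^ 2 * (l j ^ q * l i ^ r) =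
      ∑ i, ∑ j, B i j ^ 2 * (l i ^ q * l j ^ r) := by
    rw [Finset.sum_comm]
    simp only [hBs]
  have g2 : ∑ i, ∑ j, B i j ^ 2 * l i ^ (q + r) = ∑ i, ∑ j, B i j ^ 2 * l j ^ (q + r) := by
    rw [Finset.sum_comm]
    simp only [hBs]
  rw [e1, e2, f1, f2]
  have : ∑ i, ∑ j, B i j ^ 2 * (l j ^ q * l i ^ r) + ∑ i, ∑ j, B i j ^ 2 * (l i ^ q * l j ^ r) ≤
      ∑ i, ∑ j, B i j ^ 2 * l i ^ (q + r) + ∑ i, ∑ j, B i j ^ 2 * l j ^ (q + r) := by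
    simp only [← Finset.sum_add_distrib, ← mul_add]
    refine Finset.sum_le_sum fun i _ => Finset.sum_le_sum fun j _ => ?_
    refine mul_le_mul_of_nonneg_left ?_ (sq_nonneg _)
    have := scal_ineq (l i) (l j) q r h
    linarith
  linarith

lemma sym_pow {H : Matrix n n ℝ} (hH : Hᵀ = H) (q : ℕ) : (H ^ q)ᵀ = H ^ q := by
  rw [transpose_pow, hH]

lemma diag_pow_nonneg (H : Matrix n n ℝ) (hH : Hᵀ = H) (q : ℕ) (i : n) :
    0 ≤ (H ^ (2 * q)) i i := by
  have : (H ^ (2 * q)) i i = ∑ j, (H ^ q) i j * (H ^ q) i j := by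
    rw [two_mul, pow_add, mul_apply]
    refine Finset.sum_congr rfl fun j _ => ?_
    rw [← congrFun (congrFun (sym_pow hH q) i) j]
    rfl
  rw [this]
  exact Finset.sum_nonneg fun j _ => mul_self_nonneg _

lemma trace_diag_le (H : Matrix n n ℝ) (hH : Hᵀ = H) (q : ℕ) (d : n → ℝ) (s : ℝ)
    (hd : ∀ i, d i ≤ s) : trace (diagonal d * H ^ (2 * q)) ≤ s * trace (H ^ (2 * q)) := by
  simp only [trace, diag_apply, diagonal_mul, Finset.mul_sum]
  exact Finset.sum_le_sum fun i _ => mul_le_mul_of_nonneg_right (hd i) (diag_pow_nonneg H hH q i)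

lemma op_bound (H : Matrix n n ℝ) (hH : Hᵀ = H) (p : ℕ) (hp : p ≠ 0) (t : ℝ) (ht : 0 ≤ t)
    (hT : trace (H ^ (2 * p)) ≤ t ^ (2 * p)) (y : n → ℝ) :
    (H *ᵥ y) ⬝ᵥ (H *ᵥ y) ≤ t ^ 2 * (y ⬝ᵥ y) := by
  obtain ⟨U, l, h1, h2, h3⟩ := sym_diag H hH
  have htr : trace (H ^ (2 * p)) = ∑ i, l i ^ (2 * p) := by
    rw [h3, mul_assoc, trace_mul_comm, mul_assoc, h2, mul_one, trace_diagonal]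
  have hl : ∀ i, l i ^ 2 ≤ t ^ 2 := by
    intro i
    have : l i ^ (2 * p) ≤ t ^ (2 * p) := by
      refine le_trans ?_ (htr ▸ hT)
      refine Finset.single_le_sum (f := fun i => l i ^ (2 * p)) (fun j _ => ?_) (Finset.mem_univ i)
      simp only [pow_mul]; positivity
    rw [pow_mul, pow_mul] at this
    exact le_of_pow_le_pow_left₀ hp (sq_nonneg t) this
  set z := Uᵀ *ᵥ y with hz
  have e1 : (H *ᵥ y) ⬝ᵥ (H *ᵥ y) = ∑ i, l i ^ 2 * z i ^ 2 := by
    have : (H *ᵥ y) ⬝ᵥ (H *ᵥ y) = y ⬝ᵥ ((H ^ 2) *ᵥ y) := by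
      rw [pow_two, ← mulVec_mulVec, dotProduct_mulVec y, ← mulVec_transpose, hH]
    rw [this, h3, ← mulVec_mulVec, ← mulVec_mulVec, ← hz, dotProduct_mulVec, ← mulVec_transpose,
      ← hz]
    simp only [dotProduct, mulVec_diagonal]
    refine Finset.sum_congr rfl fun i _ => by ring
  have e2 : y ⬝ᵥ y = ∑ i, z i ^ 2 := by
    have : z ⬝ᵥ z = y ⬝ᵥ y := by
      rw [hz, dotProduct_mulVec, ← mulVec_transpose, transpose_transpose, mulVec_mulVec, h1,
        one_mulVec]
    rw [← this]
    simp only [dotProduct]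
    refine Finset.sum_congr rfl fun i _ => by ring
  rw [e1, e2, Finset.mul_sum]
  exact Finset.sum_le_sum fun i _ => mul_le_mul_of_nonneg_right (hl i) (sq_nonneg _)

lemma map_der_mul {R : Type*} [CommRing R] [Algebra ℝ R] (D : Derivation ℝ R R)
    (N K : Matrix n n R) : (N * K).map D = N.map D * K + N * K.map D := by
  ext i j
  simp only [map_apply, mul_apply, Matrix.add_apply, map_sum, Derivation.leibniz, smul_eq_mul,
    Finset.sum_add_distrib]
  rw [add_comm]
  congr 1
  exact Finset.sum_congr rfl fun k _ => by ring

lemma map_der_pow {R : Type*} [CommRing R] [Algebra ℝ R] (D : Derivation ℝ R R)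
    (Z : Matrix n n R) (p : ℕ) :
    (Z ^ (p + 1)).map D = ∑ q ∈ Finset.range (p + 1), Z ^ q * Z.map D * Z ^ (p - q) := by
  induction p with
  | zero => simp
  | succ p ih =>
    rw [pow_succ, map_der_mul, ih, Finset.sum_range_succ _ (p + 1), Finset.sum_mul]
    congr 1
    · refine Finset.sum_congr rfl fun q hq => ?_
      have : p + 1 - q = p - q + 1 := by
        have := Finset.mem_range.mp hq
        omega
      rw [this, pow_succ]
      simp only [mul_assoc]
    · simp

end mat

section moment
open Matrix
variable {n ι : Type*} [Fintype n] [DecidableEq n] [Fintype ι]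

lemma moment_step (A : ι → Matrix n n ℝ) (hA : ∀ k, (A k)ᵀ = A k) (w : ι → NNReal)
    (d : n → ℝ) (s : ℝ) (hV : ∑ k, (w k : ℝ) • (A k * A k) = diagonal d) (hd : ∀ i, d i ≤ s)
    (p : ℕ) :
    Integrable (fun x : ι → ℝ => trace ((∑ k, x k • A k) ^ p))
      (Measure.pi fun k => gaussianReal 0 (w k)) ∧
    ∫ x : ι → ℝ, trace ((∑ k, x k • A k) ^ (2 * (p + 1)))
      ∂(Measure.pi fun k => gaussianReal 0 (w k)) ≤ (2 * p + 1) * (s *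
    ∫ x : ι → ℝ, trace ((∑ k, x k • A k) ^ (2 * p)) ∂(Measure.pi fun k => gaussianReal 0 (w k))) := by
  classical
  set μ := Measure.pi fun k => gaussianReal 0 (w k) with hμ
  let Zp : Matrix n n (MvPolynomial ι ℝ) :=
    ∑ k, (MvPolynomial.X k : MvPolynomial ι ℝ) • (A k).map MvPolynomial.C
  have hZ : ∀ x : ι → ℝ, Zp.map (MvPolynomial.eval x) = ∑ k, x k • A k := by
    intro x
    ext i j
    simp [Zp, Matrix.sum_apply]
  have hev : ∀ (x : ι → ℝ) (B : Matrix n n ℝ) (q : ℕ),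
      MvPolynomial.eval x (trace (B.map MvPolynomial.C * Zp ^ q)) =
        trace (B * (∑ k, x k • A k) ^ q) := by
    intro x B q
    rw [← hZ x]
    have e : ∀ N : Matrix n n (MvPolynomial ι ℝ), N.map (MvPolynomial.eval x) =
      (MvPolynomial.eval x).mapMatrix N := fun _ => rfl
    have e' : B = (MvPolynomial.eval x).mapMatrix (B.map MvPolynomial.C) := by
      ext i j; simp
    rw [e, ← map_pow]
    nth_rewrite 2 [e']
    rw [← map_mul]
    simp only [trace, map_sum, diag_apply, RingHom.mapMatrix_apply, map_apply]
  have hint : ∀ (B : Matrix n n ℝ) (q : ℕ),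
      Integrable (fun x : ι → ℝ => trace (B * (∑ k, x k • A k) ^ q)) μ := by
    intro B q
    simp only [← hev]
    exact mv_integrable w _
  have hint1 : ∀ (q : ℕ),
      Integrable (fun x : ι → ℝ => trace ((∑ k, x k • A k) ^ q)) μ := by
    intro q
    simpa using hint 1 q
  refine ⟨hint1 p, ?_⟩
  have hsym : ∀ x : ι → ℝ, (∑ k, x k • A k)ᵀ = ∑ k, x k • A k := by
    intro x
    simp [transpose_sum, hA]
  have hDZ : ∀ k, Zp.map (MvPolynomial.pderiv k) = (A k).map MvPolynomial.C := by
    intro k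
    ext i j : 1
    simp [Zp, Matrix.sum_apply, MvPolynomial.pderiv_X, Pi.single_apply]
  have hder : ∀ (x : ι → ℝ) (k : ι),
      MvPolynomial.eval x (MvPolynomial.pderiv k (trace ((A k).map MvPolynomial.C * Zp ^ (2 * p + 1))))
        = ∑ q ∈ Finset.range (2 * p + 1),
          trace (A k * (∑ k, x k • A k) ^ q * A k * (∑ k, x k • A k) ^ (2 * p - q)) := by
    intro x k
    have t1 : MvPolynomial.pderiv k (trace ((A k).map MvPolynomial.C * Zp ^ (2 * p + 1))) =
        trace (((A k).map MvPolynomial.C * Zp ^ (2 * p + 1)).map (MvPolynomial.pderiv k)) := by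
      simp [trace, map_sum]
    have t0 : ((A k).map MvPolynomial.C).map (MvPolynomial.pderiv k) =
        (0 : Matrix n n (MvPolynomial ι ℝ)) := by
      ext i j : 1
      simp
    rw [t1, map_der_mul, t0, zero_mul, zero_add, map_der_pow, hDZ, Finset.mul_sum, trace_sum,
      map_sum]
    refine Finset.sum_congr rfl fun q _ => ?_
    rw [← hZ x]
    have e : ∀ N : Matrix n n (MvPolynomial ι ℝ), N.map (MvPolynomial.eval x) =
      (MvPolynomial.eval x).mapMatrix N := fun _ => rfl
    have e' : A k = (MvPolynomial.eval x).mapMatrix ((A k).map MvPolynomial.C) := by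
      ext i j; simp
    have e2 : ∀ N : Matrix n n (MvPolynomial ι ℝ), MvPolynomial.eval x (trace N) =
        trace ((MvPolynomial.eval x).mapMatrix N) := by
      intro N; simp [trace, map_sum]
    rw [e2, map_mul, map_mul, map_mul, map_pow, map_pow, ← e', e]
    simp only [mul_assoc]
  calc ∫ x : ι → ℝ, trace ((∑ k, x k • A k) ^ (2 * (p + 1))) ∂μ
      = ∫ x : ι → ℝ, ∑ k, x k * trace (A k * (∑ k, x k • A k) ^ (2 * p + 1)) ∂μ := by
        congr 1
        ext x
        rw [show 2 * (p + 1) = (2 * p + 1) + 1 by ring, pow_succ']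
        nth_rewrite 1 [Finset.sum_mul]
        rw [trace_sum]
        simp [trace_smul]
    _ = ∑ k, ∫ x : ι → ℝ, x k * trace (A k * (∑ k, x k • A k) ^ (2 * p + 1)) ∂μ := by
        rw [integral_finsetSum]
        intro k _
        have := mv_integrable w (MvPolynomial.X k * trace ((A k).map MvPolynomial.C * Zp ^ (2 * p + 1)))
        simp only [map_mul, MvPolynomial.eval_X, hev] at this
        exact this
    _ = ∑ k, w k * ∫ x : ι → ℝ, ∑ q ∈ Finset.range (2 * p + 1),
          trace (A k * (∑ k, x k • A k) ^ q * A k * (∑ k, x k • A k) ^ (2 * p - q)) ∂μ := by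
        refine Finset.sum_congr rfl fun k _ => ?_
        simp only [← hder]
        simp only [← hev]
        exact mv_ibp w k _
    _ ≤ ∑ k, w k * ∫ x : ι → ℝ, (2 * p + 1) * trace (A k * A k * (∑ k, x k • A k) ^ (2 * p)) ∂μ := by
        refine Finset.sum_le_sum fun k _ => mul_le_mul_of_nonneg_left ?_ (w k).2
        refine integral_mono ?_ ((hint _ _).const_mul _) ?_
        · simp only [← hder]
          exact mv_integrable w _
        · intro x
          have : ∀ q ∈ Finset.range (2 * p + 1),
              trace (A k * (∑ k, x k • A k) ^ q * A k * (∑ k, x k • A k) ^ (2 * p - q)) ≤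
              trace (A k * A k * (∑ k, x k • A k) ^ (2 * p)) := by
            intro q hq
            have hq' : q + (2 * p - q) = 2 * p := by
              have := Finset.mem_range.mp hq
              omega
            have := trace_ineq (A k) (∑ k, x k • A k) (hA k) (hsym x) q (2 * p - q)
              (by rw [hq']; simp)
            rwa [hq'] at this
          refine (Finset.sum_le_card_nsmul _ _ _ this).trans ?_
          simp
    _ = (2 * p + 1) * ∫ x : ι → ℝ, trace (diagonal d * (∑ k, x k • A k) ^ (2 * p)) ∂μ := by
        simp only [← hV, Finset.sum_mul, trace_sum, smul_mul_assoc, trace_smul, smul_eq_mul]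
        rw [integral_finsetSum _ (fun k _ => (hint _ _).const_mul _), Finset.mul_sum]
        refine Finset.sum_congr rfl fun k _ => ?_
        rw [integral_const_mul, integral_const_mul]
        ring
    _ ≤ _ := by
        refine mul_le_mul_of_nonneg_left ?_ (by positivity)
        rw [← integral_const_mul]
        exact integral_mono (hint _ _) ((hint1 _).const_mul _)
          (fun x => trace_diag_le _ (hsym x) p d s hd)

open Nat in
lemma moment_bound (A : ι → Matrix n n ℝ) (hA : ∀ k, (A k)ᵀ = A k) (w : ι → NNReal)
    (d : n → ℝ) (s : ℝ) (hs : 0 ≤ s)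
    (hV : ∑ k, (w k : ℝ) • (A k * A k) = diagonal d) (hd : ∀ i, d i ≤ s)
    (p : ℕ) :
    ∫ x : ι → ℝ, trace ((∑ k, x k • A k) ^ (2 * p))
      ∂(Measure.pi fun k => gaussianReal 0 (w k)) ≤
      (2 * p)! / (2 ^ p * p !) * s ^ p * Fintype.card n := by
  induction p with
  | zero => simp
  | succ p ih =>
    refine (moment_step A hA w d s hV hd p).2.trans ?_
    have := mul_le_mul_of_nonneg_left (mul_le_mul_of_nonneg_left ih hs)
      (show (0:ℝ) ≤ 2 * p + 1 by positivity)
    refine this.trans (le_of_eq ?_)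
    rw [show 2 * (p + 1) = 2 * p + 1 + 1 by ring, Nat.factorial_succ (2 * p + 1),
      Nat.factorial_succ (2 * p), Nat.factorial_succ p]
    push_cast
    field_simp
    ring
end moment

open Nat in
lemma num_bound (m : ℕ) (hm : 1 ≤ m) : ∃ p : ℕ, p ≠ 0 ∧
    ((2 * p)! / (2 ^ p * p !) : ℝ) * (2 * m) ≤ (2 * Real.log (2 * Real.exp 1 * m)) ^ p := by
  have hm' : (1:ℝ) ≤ m := by exact_mod_cast hm
  set L := Real.log (2 * m) with hL
  have hlog : Real.log (2 * Real.exp 1 * m) = L + 1 := by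
    rw [show 2 * Real.exp 1 * (m:ℝ) = (2 * m) * Real.exp 1 by ring,
      Real.log_mul (by positivity) (by positivity), Real.log_exp]
  have hL0 : 0 ≤ L := Real.log_nonneg (by linarith)
  have hexpL : Real.exp L = 2 * m := Real.exp_log (by positivity)
  obtain ⟨k, hk1, hk2⟩ : ∃ k : ℕ, (k:ℝ) ≤ L ∧ L < k + 1 :=
    ⟨⌊L⌋₊, Nat.floor_le hL0, Nat.lt_floor_add_one L⟩
  refine ⟨k + 1, by omega, ?_⟩
  rw [hlog]
  set p := k + 1 with hp
  have hpr : (p:ℝ) = k + 1 := by rw [hp]; push_cast; ring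
  have hk0 : (0:ℝ) ≤ k := by positivity
  have hp0 : (0:ℝ) < p := by linarith
  have hst : Stirling.stirlingSeq (2 * p) ≤ Stirling.stirlingSeq p := by
    have := Stirling.stirlingSeq'_antitone (show k ≤ 2 * k + 1 by omega)
    simpa [Function.comp, hp, mul_add] using this
  have h1 : ((2 * p)! / (2 ^ p * p !) : ℝ) ≤ √2 * (2 * p / Real.exp 1) ^ p := by
    simp only [Stirling.stirlingSeq] at hst
    rw [div_le_div_iff₀ (by positivity) (by positivity)] at hst
    rw [div_le_iff₀ (by positivity)]
    push_cast at hst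
    have e1 : √(2 * (2 * (p:ℝ))) = √2 * √(2 * p) := Real.sqrt_mul (by norm_num) _
    have e2 : (2 * (p:ℝ) / Real.exp 1) ^ (2 * p) = ((p:ℝ) / Real.exp 1) ^ p *
        ((2 * (p:ℝ) / Real.exp 1) ^ p * 2 ^ p) := by
      rw [two_mul p, pow_add, ← mul_pow, ← mul_pow, ← mul_pow]
      congr 1; ring
    rw [e1, e2] at hst
    have hpos : 0 < √(2 * (p:ℝ)) * ((p:ℝ) / Real.exp 1) ^ p := by positivity
    refine le_of_mul_le_mul_right ?_ hpos
    refine hst.trans (le_of_eq ?_)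
    ring
  have h2 : √2 ≤ Real.exp (1 / 2) := by
    rw [Real.exp_half]
    apply Real.sqrt_le_sqrt
    have := Real.add_one_le_exp 1
    linarith
  have h3 : √2 * (2 * p / Real.exp 1) ^ p * (2 * m) ≤
      (Real.exp (-(1 - (L + 1 / 2) / p)) * (2 * p)) ^ p := by
    have e : Real.exp (-(1 - (L + 1 / 2) / p)) ^ p = Real.exp (1 / 2) * (2 * m) * (1 / Real.exp 1) ^ p := by
      rw [← hexpL, ← Real.exp_nat_mul, one_div (Real.exp 1), ← Real.exp_neg, ← Real.exp_nat_mul, ← Real.exp_add,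
        ← Real.exp_add]
      congr 1
      field_simp
      ring
    rw [mul_pow, e]
    calc _ ≤ Real.exp (1 / 2) * (2 * p / Real.exp 1) ^ p * (2 * m) := by gcongr
      _ = _ := by
        rw [show 2 * (p:ℝ) / Real.exp 1 = (1 / Real.exp 1) * (2 * p) by ring, mul_pow]
        ring
  have h4 : Real.exp (-(1 - (L + 1 / 2) / p)) * (2 * p) ≤ 2 * (L + 1) := by
    have hx : 0 < 2 - (L + 1 / 2) / p := by
      rw [sub_pos, div_lt_iff₀ hp0]; linarith
    have ha := Real.add_one_le_exp (1 - (L + 1 / 2) / p)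
    rw [Real.exp_neg]
    have hb : (Real.exp (1 - (L + 1 / 2) / p))⁻¹ ≤ (2 - (L + 1 / 2) / p)⁻¹ :=
      inv_anti₀ hx (by linarith)
    refine (mul_le_mul_of_nonneg_right hb (by positivity)).trans ?_
    rw [inv_mul_le_iff₀ hx]
    have e : (2 - (L + 1 / 2) / (p:ℝ)) * (2 * (L + 1)) = ((2 * p - L - 1 / 2) * (2 * (L + 1))) / p := by
      field_simp
      ring
    rw [e, le_div_iff₀ hp0]
    rw [hpr]
    nlinarith [mul_nonneg (sub_nonneg.2 hk1) (sub_nonneg.2 hk2.le)]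
  calc _ ≤ √2 * (2 * p / Real.exp 1) ^ p * (2 * m) := by gcongr
    _ ≤ _ := h3
    _ ≤ _ := pow_le_pow_left₀ (by positivity) h4 p

section final
open Matrix

def dilat {m : ℕ} (k : Fin m × Fin m) : Matrix (Fin m ⊕ Fin m) (Fin m ⊕ Fin m) ℝ :=
  fromBlocks 0 (Matrix.single k.1 k.2 1) (Matrix.single k.2 k.1 1) 0

lemma dilat_sum {m : ℕ} (x : Fin m × Fin m → ℝ) :
    ∑ k, x k • dilat k = fromBlocks 0 (of fun i j => x (i, j)) (of fun i j => x (i, j))ᵀ 0 := by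
  ext i j
  rcases i with i | i <;> rcases j with j | j <;>
    simp [dilat, Matrix.sum_apply, Matrix.single_apply, Fintype.sum_prod_type, ite_and,
      Finset.sum_ite_eq]

lemma dilat_sq {m : ℕ} (w : Fin m × Fin m → ℝ) :
    ∑ k, w k • (dilat k * dilat k) =
      diagonal (Sum.elim (fun i => ∑ j, w (i, j)) (fun j => ∑ i, w (i, j))) := by
  have : ∀ k : Fin m × Fin m, dilat k * dilat k =
      fromBlocks (Matrix.single k.1 k.1 1) 0 0 (Matrix.single k.2 k.2 1) := by
    intro k
    simp [dilat, fromBlocks_multiply]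
  simp only [this]
  ext i j
  rcases i with i | i <;> rcases j with j | j <;>
    simp [Matrix.sum_apply, Matrix.single_apply, Fintype.sum_prod_type, ite_and,
      Finset.sum_ite_eq, diagonal_apply]
  · by_cases h : i = j <;> simp [h]
  · by_cases h : i = j <;> simp [h]

lemma dilat_sym {m : ℕ} (k : Fin m × Fin m) : (dilat k)ᵀ = dilat k := by
  simp [dilat, fromBlocks_transpose]

lemma specNorm_nonneg {m : ℕ} (A : Matrix (Fin m) (Fin m) ℝ) : 0 ≤ specNorm A := norm_nonneg _

lemma specNorm_add {m : ℕ} (A B : Matrix (Fin m) (Fin m) ℝ) :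
    specNorm (A + B) ≤ specNorm A + specNorm B := by
  simp only [specNorm, map_add]
  exact norm_add_le _ _

lemma specNorm_cont {m : ℕ} :
    Continuous fun x : Fin m × Fin m → ℝ => specNorm (of fun i j => x (i, j)) := by
  let T : (Fin m × Fin m → ℝ) →ₗ[ℝ] (EuclideanSpace ℝ (Fin m) →L[ℝ] EuclideanSpace ℝ (Fin m)) :=
    { toFun := fun x => LinearMap.toContinuousLinearMap
        (Matrix.toEuclideanLin (of fun i j => x (i, j)))
      map_add' := fun x y => by
        rw [← map_add, ← map_add]; rfl
      map_smul' := fun c x => by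
        rw [RingHom.id_apply, ← map_smul, ← map_smul]; rfl }
  exact (T.continuous_of_finiteDimensional).norm

lemma specNorm_pow_le {m : ℕ} (x : Fin m × Fin m → ℝ) (p : ℕ) (hp : p ≠ 0) :
    specNorm (of fun i j => x (i, j)) ^ (2 * p) ≤ trace ((∑ k, x k • dilat k) ^ (2 * p)) := by
  have hsym : (∑ k, x k • dilat k)ᵀ = ∑ k, x k • dilat k := by
    simp [transpose_sum, dilat_sym]
  set H := ∑ k, x k • dilat k with hH
  set T := trace (H ^ (2 * p)) with hT
  have hT0 : 0 ≤ T := Finset.sum_nonneg fun i _ => diag_pow_nonneg H hsym p i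
  have h2p : 2 * p ≠ 0 := by omega
  set t := T ^ ((↑(2 * p) : ℝ)⁻¹) with ht
  have ht0 : 0 ≤ t := Real.rpow_nonneg hT0 _
  have htp : t ^ (2 * p) = T := Real.rpow_inv_natCast_pow hT0 h2p
  have hop := op_bound H hsym p hp t ht0 htp.ge
  rw [← htp]
  refine pow_le_pow_left₀ (specNorm_nonneg _) ?_ _
  refine ContinuousLinearMap.opNorm_le_bound _ ht0 fun z => ?_
  have h := hop (Sum.elim 0 z.ofLp)
  rw [hH, dilat_sum, fromBlocks_mulVec] at h
  simp at h
  have e1 : ‖(toEuclideanLin (of fun i j => x (i, j))) z‖ ^ 2 =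
      ((of fun i j => x (i, j)) *ᵥ z.ofLp) ⬝ᵥ ((of fun i j => x (i, j)) *ᵥ z.ofLp) := by
    rw [EuclideanSpace.real_norm_sq_eq]
    simp [dotProduct, pow_two]
  have e2 : ‖z‖ ^ 2 = z.ofLp ⬝ᵥ z.ofLp := by
    rw [EuclideanSpace.real_norm_sq_eq]
    simp [dotProduct, pow_two]
  rw [← e1, ← e2, ← mul_pow] at h
  exact le_of_sq_le_sq h (by positivity)

end final

/-- **Expected Gaussian spectral norms.**  If `G` is an `m × m` random matrix with
independent Gaussian entries `g_{ij} ∼ N(m_{ij}, v_{ij})`, then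
`√(E‖G‖₂²) ≤ ‖M‖₂ + √(2 log(2em)) √v`, where `M = (m_{ij})` and
`v = max(maxᵢ Σⱼ v_{ij}, maxⱼ Σᵢ v_{ij})`. -/
theorem expected_gaussian_spectral_norm
    (m : ℕ) (hm : 1 ≤ m)
    (M : Matrix (Fin m) (Fin m) ℝ) (v : Fin m → Fin m → ℝ) (hv : ∀ i j, 0 ≤ v i j) :
    Real.sqrt (∫ A : Fin m × Fin m → ℝ,
        (specNorm (Matrix.of fun i j => A (i, j)))^2
        ∂(Measure.pi fun p : Fin m × Fin m => gaussianReal (M p.1 p.2) (v p.1 p.2).toNNReal))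
      ≤ specNorm M +
        Real.sqrt (2 * Real.log (2 * Real.exp 1 * m)) *
          Real.sqrt
            (max
              (Finset.univ.sup' (Finset.univ_nonempty_iff.mpr ⟨⟨0, hm⟩⟩)
                (fun i => ∑ j, v i j))
              (Finset.univ.sup' (Finset.univ_nonempty_iff.mpr ⟨⟨0, hm⟩⟩)
                (fun j => ∑ i, v i j))) := by
  classical
  set s := max
      (Finset.univ.sup' (Finset.univ_nonempty_iff.mpr ⟨⟨0, hm⟩⟩) (fun i => ∑ j, v i j))
      (Finset.univ.sup' (Finset.univ_nonempty_iff.mpr ⟨⟨0, hm⟩⟩) (fun j => ∑ i, v i j)) with hs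
  have hrow : ∀ i, ∑ j, v i j ≤ s := fun i =>
    (Finset.le_sup' (fun i => ∑ j, v i j) (Finset.mem_univ i)).trans (le_max_left _ _)
  have hcol : ∀ j, ∑ i, v i j ≤ s := fun j =>
    (Finset.le_sup' (fun j => ∑ i, v i j) (Finset.mem_univ j)).trans (le_max_right _ _)
  have hs0 : 0 ≤ s := (Finset.sum_nonneg fun j _ => hv ⟨0, hm⟩ j).trans (hrow ⟨0, hm⟩)
  set w : Fin m × Fin m → NNReal := fun p => (v p.1 p.2).toNNReal with hw
  have hwv : ∀ p, (w p : ℝ) = v p.1 p.2 := fun p => Real.coe_toNNReal _ (hv _ _)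
  set μ := Measure.pi fun p => gaussianReal 0 (w p) with hμ
  set N : (Fin m × Fin m → ℝ) → ℝ := fun x => specNorm (Matrix.of fun i j => x (i, j)) with hN
  have hNc : Continuous N := specNorm_cont
  have hN0 : ∀ x, 0 ≤ N x := fun x => specNorm_nonneg _
  have hV : ∑ k, (w k : ℝ) • (dilat k * dilat k) = Matrix.diagonal
      (Sum.elim (fun i => ∑ j, v i j) (fun j => ∑ i, v i j)) := by
    rw [dilat_sq fun k => (w k : ℝ)]
    simp only [hwv]
  have hd : ∀ i, (Sum.elim (fun i => ∑ j, v i j) (fun j => ∑ i, v i j)) i ≤ s := by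
    rintro (i | i)
    · exact hrow i
    · exact hcol i
  have htr : ∀ q, Integrable (fun x : Fin m × Fin m → ℝ => Matrix.trace ((∑ k, x k • dilat k) ^ q)) μ :=
    fun q => (moment_step dilat dilat_sym w _ s hV hd q).1
  have hNint : ∀ p, p ≠ 0 → Integrable (fun x => N x ^ (2 * p)) μ := by
    intro p hp
    refine (htr (2 * p)).mono' (hNc.pow _).aestronglyMeasurable
      (Filter.Eventually.of_forall fun x => ?_)
    rw [Real.norm_of_nonneg (pow_nonneg (hN0 x) _)]
    exact specNorm_pow_le x p hp
  have hN2 : Integrable (fun x => N x ^ 2) μ := hNint 1 one_ne_zero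
  have hmain : ∫ x, N x ^ 2 ∂μ ≤ 2 * Real.log (2 * Real.exp 1 * m) * s := by
    obtain ⟨p, hp, hnum⟩ := num_bound m hm
    have hlog : 0 ≤ Real.log (2 * Real.exp 1 * m) := by
      apply Real.log_nonneg
      have h1 := Real.add_one_le_exp 1
      have h2 : (1:ℝ) ≤ m := by exact_mod_cast hm
      nlinarith
    refine le_of_pow_le_pow_left₀ hp (by positivity) ?_
    have hJ : (∫ x, N x ^ 2 ∂μ) ^ p ≤ ∫ x, (N x ^ 2) ^ p ∂μ := by
      refine ConvexOn.map_integral_le (g := fun t : ℝ => t ^ p) (convexOn_pow p)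
        (continuous_pow p).continuousOn isClosed_Ici
        (Filter.Eventually.of_forall fun x => sq_nonneg (N x)) hN2 ?_
      simpa [Function.comp_def, ← pow_mul] using hNint p hp
    refine hJ.trans ?_
    simp only [← pow_mul]
    refine (integral_mono (hNint p hp) (htr (2 * p)) fun x => specNorm_pow_le x p hp).trans ?_
    refine (moment_bound dilat dilat_sym w _ s hs0 hV hd p).trans ?_
    rw [mul_pow]
    have := mul_le_mul_of_nonneg_right hnum (pow_nonneg hs0 p)
    refine le_trans (le_of_eq ?_) this
    simp only [Fintype.card_sum, Fintype.card_fin]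
    push_cast
    ring
  have hmap : (Measure.pi fun p : Fin m × Fin m => gaussianReal (M p.1 p.2) (v p.1 p.2).toNNReal) =
      μ.map (fun x p => x p + M p.1 p.2) := by
    have h1 : ∀ p : Fin m × Fin m, (gaussianReal 0 (w p)).map (fun t => t + M p.1 p.2) =
        gaussianReal (M p.1 p.2) (v p.1 p.2).toNNReal := by
      intro p
      rw [gaussianReal_map_add_const, zero_add]
    have h2 := Measure.pi_map_pi (μ := fun p => gaussianReal 0 (w p))
      (f := fun (p : Fin m × Fin m) (t : ℝ) => t + M p.1 p.2)
      (hμ := fun p => by rw [h1]; infer_instance) (fun p => by fun_prop)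
    rw [hμ, h2]
    simp only [h1]
  have hmeas : Measurable (fun (x : Fin m × Fin m → ℝ) (p : Fin m × Fin m) => x p + M p.1 p.2) := by
    fun_prop
  have hNs : AEStronglyMeasurable (fun x : Fin m × Fin m → ℝ =>
      specNorm (Matrix.of fun i j => x (i, j)) ^ 2)
      (μ.map (fun x p => x p + M p.1 p.2)) := (hNc.pow 2).aestronglyMeasurable
  rw [hmap, integral_map hmeas.aemeasurable hNs]
  have hM0 : 0 ≤ specNorm M := specNorm_nonneg M
  have hN1 : Integrable N μ := by
    refine (hN2.add (integrable_const 1)).mono' hNc.aestronglyMeasurable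
      (Filter.Eventually.of_forall fun x => ?_)
    rw [Real.norm_of_nonneg (hN0 x)]
    simp only [Pi.add_apply]
    nlinarith [sq_nonneg (N x - 1), hN0 x]
  set e := ∫ x, N x ^ 2 ∂μ with he
  have he0 : 0 ≤ e := integral_nonneg fun x => sq_nonneg _
  have hEN : ∫ x, N x ∂μ ≤ √e := by
    apply Real.le_sqrt_of_sq_le
    exact ConvexOn.map_integral_le (g := fun t : ℝ => t ^ 2) (convexOn_pow 2)
        (continuous_pow 2).continuousOn isClosed_Ici
        (Filter.Eventually.of_forall fun x => hN0 x) hN1 hN2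
  have hbnd : ∫ x, (specNorm (Matrix.of fun i j => x (i, j) + M i j)) ^ 2 ∂μ ≤
      (specNorm M + √e) ^ 2 := by
    have hint : Integrable (fun x => specNorm M ^ 2 + 2 * specNorm M * N x + N x ^ 2) μ :=
      ((integrable_const _).add (hN1.const_mul _)).add hN2
    have hle : ∀ x : Fin m × Fin m → ℝ, (specNorm (Matrix.of fun i j => x (i, j) + M i j)) ^ 2 ≤
        specNorm M ^ 2 + 2 * specNorm M * N x + N x ^ 2 := by
      intro x
      have h1 : specNorm (Matrix.of fun i j => x (i, j) + M i j) ≤ N x + specNorm M :=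
        specNorm_add (Matrix.of fun i j => x (i, j)) M
      have h2 := pow_le_pow_left₀ (specNorm_nonneg _) h1 2
      linarith [h2, show (N x + specNorm M) ^ 2 =
        specNorm M ^ 2 + 2 * specNorm M * N x + N x ^ 2 by ring]
    calc _ ≤ ∫ x, (specNorm M ^ 2 + 2 * specNorm M * N x + N x ^ 2) ∂μ :=
          integral_mono_of_nonneg (Filter.Eventually.of_forall fun x => sq_nonneg _) hint
            (Filter.Eventually.of_forall hle)
      _ = specNorm M ^ 2 + 2 * specNorm M * ∫ x, N x ∂μ + e := by
          have hi : Integrable (fun x => specNorm M ^ 2 + 2 * specNorm M * N x) μ :=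
            (integrable_const _).add (hN1.const_mul _)
          rw [integral_add hi hN2,
            integral_add (integrable_const _) (hN1.const_mul _), integral_const_mul]
          simp [he]
      _ ≤ specNorm M ^ 2 + 2 * specNorm M * √e + e := by gcongr
      _ = _ := by
          nth_rewrite 2 [← Real.sq_sqrt he0]
          ring
  refine (Real.sqrt_le_sqrt hbnd).trans ?_
  have h1 : 0 ≤ specNorm M + √e := add_nonneg hM0 (Real.sqrt_nonneg e)
  rw [Real.sqrt_sq h1, ← Real.sqrt_mul' _ hs0]
  exact add_le_add le_rfl (Real.sqrt_le_sqrt hmain)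
end

section
/- (Gaussian–generalized-Cauchy KL divergence, first bound.) Let d ≥ 1. Let N_d(μ, ρ²I_d) be the spherical Gaussian probability measure on ℝ^d with mean μ ∈ ℝ^d and covariance ρ²I_d, ρ > 0, and let 𝒰_d be the generalized Cauchy distribution on ℝ^d, i.e. the probability measure with Lebesgue density x ↦ 2 / ( π · S_{d−1} · ( |x|^{d−1} + |x|^{d+1} ) ), where S_{d−1} = d·π^{d/2}/Γ(d/2 + 1) is the surface area of the unit sphere in ℝ^d and |·| is the Euclidean norm. Then D_KL( N_d(μ, ρ²I_d) ‖ 𝒰_d ) ≤ ((d+1)/2)·log( 1 + |μ|²/(d ρ²) ) + log( (1 + d ρ²)/ρ ). -/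
open MeasureTheory Real
open scoped Classical

/-- The spherical Gaussian measure `N_d(μ, ρ²I_d)` on `ℝ^d`, with Lebesgue density
`x ↦ (2πρ²)^{−d/2} exp(−|x−μ|²/(2ρ²))`. -/
noncomputable def gaussSph (d : ℕ) (μ : EuclideanSpace ℝ (Fin d)) (ρ : ℝ) :
    Measure (EuclideanSpace ℝ (Fin d)) :=
  volume.withDensity fun x =>
    ENNReal.ofReal ((2 * Real.pi * ρ^2) ^ (-(d:ℝ)/2) * Real.exp (-‖x - μ‖^2 / (2 * ρ^2)))

/-- The surface area `S_{d−1} = d·π^{d/2}/Γ(d/2+1)` of the unit sphere in `ℝ^d`. -/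
noncomputable def sphereArea (d : ℕ) : ℝ :=
  d * Real.pi ^ ((d:ℝ)/2) / Real.Gamma ((d:ℝ)/2 + 1)

/-- The generalized Cauchy distribution on `ℝ^d`, with Lebesgue density
`x ↦ 2/(π S_{d−1} (|x|^{d−1} + |x|^{d+1}))`. -/
noncomputable def genCauchy (d : ℕ) : Measure (EuclideanSpace ℝ (Fin d)) :=
  volume.withDensity fun x =>
    ENNReal.ofReal (2 / (Real.pi * sphereArea d * (‖x‖^(d-1) + ‖x‖^(d+1))))


lemma gamma_stirling (d : ℕ) (hd : 1 ≤ d) :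
    log (2*π) / 2 + ((d:ℝ)/2 + 1/2) * log ((d:ℝ)/2) - (d:ℝ)/2 ≤ log (Gamma ((d:ℝ)/2 + 1)) := by
  have hd0 : (0:ℝ) < d := by exact_mod_cast hd
  set x : ℝ := (d:ℝ)/2 with hx
  have hx0 : 0 < x := by positivity
  have hG1 : 0 < Gamma (x+1) := Gamma_pos_of_pos (by positivity)
  have hG2 : 0 < Gamma (x+1/2) := Gamma_pos_of_pos (by positivity)
  have hG0 : 0 < Gamma x := Gamma_pos_of_pos hx0
  have hc := convexOn_log_Gamma.2 (show x ∈ Set.Ioi 0 from hx0)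
    (show x + 1 ∈ Set.Ioi 0 from (by positivity : 0 < x + 1))
    (show (0:ℝ) ≤ 1/2 by norm_num) (show (0:ℝ) ≤ 1/2 by norm_num) (by norm_num)
  simp only [Function.comp, smul_eq_mul] at hc
  rw [show 1/2 * x + 1/2*(x+1) = x + 1/2 by ring] at hc
  have h1 : log (Gamma (x+1)) = log x + log (Gamma x) := by
    rw [Gamma_add_one hx0.ne', log_mul hx0.ne' hG0.ne']
  have h2 := Real.Gamma_mul_Gamma_add_half (x + 1/2)
  rw [show x + 1/2 + 1/2 = x + 1 by ring, show 2 * (x + 1/2) = d + 1 by rw [hx]; ring,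
    Gamma_nat_eq_factorial] at h2
  have h3 := Stirling.le_factorial_stirling d
  have hf : (0:ℝ) < d.factorial := by positivity
  have h4 := congrArg log h2
  rw [log_mul hG2.ne' hG1.ne', log_mul (by positivity) (by positivity), log_mul (by positivity) (by positivity), log_rpow (by norm_num), log_sqrt pi_pos.le] at h4
  have h5 := log_le_log (by positivity) h3
  rw [log_mul (by positivity) (by positivity), log_pow, log_div (by positivity) (by positivity), log_exp, log_sqrt (by positivity), log_mul (by positivity) (by positivity), log_mul (by positivity) (by positivity)] at h5
  have h6 : log x = log d - log 2 := by rw [hx, log_div (by positivity) (by positivity)]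
  rw [log_mul (by positivity) (by positivity)]
  have h7 : (d:ℝ) = 2 * x := by rw [hx]; ring
  rw [h7] at h4 h5 
  rw [h7] at h6
  set L := log (2*x)
  rw [h6] at h1 ⊢
  nlinarith

lemma const_bound (d : ℕ) (hd : 1 ≤ d) :
    ((d:ℝ)+1)/2 * log d - d/2 * log 2 - d/2 + log (π/2) - log (Gamma ((d:ℝ)/2+1)) ≤ 0 := by
  have hd0 : (0:ℝ) < d := by exact_mod_cast hd
  have h := gamma_stirling d hd
  rw [log_div (by positivity) (by positivity), log_mul (by positivity) (by positivity)] at h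
  rw [log_div (by positivity) (by positivity)]
  have : log π ≤ 2 * log 2 := by
    rw [← log_rpow (by norm_num)]
    exact log_le_log pi_pos (by norm_num; exact pi_le_four)
  nlinarith

section
variable (d : ℕ) (b : ℝ)
local notation "E" => EuclideanSpace ℝ (Fin d)

lemma G1_int (hd : 1 ≤ d) (hb : 0 < b) (k : ℕ) : Integrable (fun x : E => ‖x‖^k * exp (-b * ‖x‖^2)) := by
  have : Nontrivial E := by
    have : Nonempty (Fin d) := ⟨⟨0, hd⟩⟩
    infer_instance
  refine (integrable_fun_norm_addHaar (volume : Measure E) (f := fun y => y^k * exp (-b*y^2))).2 ?_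
  have := integrableOn_rpow_mul_exp_neg_mul_sq hb (s := ((d - 1 + k : ℕ):ℝ)) (by have : (0:ℝ) ≤ ((d - 1 + k : ℕ):ℝ) := by positivity
                                                                                 linarith)
  refine this.congr_fun (fun y hy => ?_) measurableSet_Ioi
  simp only [finrank_euclideanSpace_fin, smul_eq_mul, rpow_natCast]
  ring

lemma G1_val (hb : 0 < b) : ∫ x : E, exp (-b * ‖x‖^2) = (π/b)^((d:ℝ)/2) := by
  have := GaussianFourier.integral_rexp_neg_mul_sq_norm (V := E) hb
  simpa using this

lemma G2_val (hd : 1 ≤ d) (hb : 0 < b) : ∫ x : E, ‖x‖^2 * exp (-b * ‖x‖^2) = d/(2*b) * (π/b)^((d:ℝ)/2) := by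
  have : Nontrivial E := by
    have : Nonempty (Fin d) := ⟨⟨0, hd⟩⟩
    infer_instance
  have hd0 : (0:ℝ) < d := by exact_mod_cast hd
  rw [← G1_val d b hb]
  rw [integral_fun_norm_addHaar (volume : Measure E) (f := fun y => y^2 * exp (-b*y^2)), integral_fun_norm_addHaar (volume : Measure E) (f := fun y => exp (-b*y^2))]
  have key : ∀ k : ℕ, ∫ y in Set.Ioi (0:ℝ), y^k * exp (-b*y^2) = b ^ (-((k:ℝ) + 1) / 2) * (1 / 2) * Gamma (((k:ℝ) + 1) / 2) := by
    intro k
    rw [← integral_rpow_mul_exp_neg_mul_rpow (by norm_num : (0:ℝ) < 2) (by have : (0:ℝ) ≤ k := by positivity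
                                                                           linarith) hb]
    simp
  obtain ⟨n, rfl⟩ : ∃ n, d = n + 1 := ⟨d-1, by omega⟩
  have h1 := key n
  have h2 := key (n+2)
  simp only [finrank_euclideanSpace_fin, smul_eq_mul, nsmul_eq_mul, Nat.add_sub_cancel]
  simp_rw [← mul_assoc _ (_ ^ 2), ← pow_add]
  rw [h1, h2]
  have e1 : ((n+2:ℕ):ℝ) + 1 = (n+1) + 2 := by push_cast; ring
  rw [e1, show ((n:ℝ)+1+2)/2 = (n+1)/2 + 1 by ring, Gamma_add_one (by positivity), show -((n:ℝ)+1+2)/2 = -(n+1)/2 - 1 by ring, rpow_sub_one hb.ne']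
  push_cast
  field_simp

lemma G3_int (hd : 1 ≤ d) (hb : 0 < b) (μ : E) : Integrable (fun x : E => inner ℝ x μ * exp (-b * ‖x‖^2)) := by
  refine ((G1_int d b hd hb 1).const_mul ‖μ‖).mono' (by fun_prop) (ae_of_all _ fun x => ?_)
  rw [norm_mul, Real.norm_of_nonneg (exp_pos _).le, ← mul_assoc]
  gcongr
  rw [pow_one, mul_comm]
  exact norm_inner_le_norm _ _

lemma G3_val (μ : E) : ∫ x : E, inner ℝ x μ * exp (-b * ‖x‖^2) = 0 := by
  have := integral_neg_eq_self (fun x : E => inner ℝ x μ * exp (-b * ‖x‖^2)) volume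
  simp only [inner_neg_left, norm_neg, neg_mul, integral_neg] at this
  simp only [neg_mul]
  linarith

lemma log_int (hd : 1 ≤ d) : IntegrableOn (fun x : E => log ‖x‖) (Metric.ball 0 1) := by
  have : Nontrivial E := by
    have : Nonempty (Fin d) := ⟨⟨0, hd⟩⟩
    infer_instance
  have h : IntegrableOn log (Set.Ioo 0 1) := by
    have := intervalIntegral.intervalIntegrable_log' (a := 0) (b := 1)
    rw [intervalIntegrable_iff_integrableOn_Ioo_of_le zero_le_one] at this
    exact this
  rw [integrableOn_fun_norm_addHaar]
  refine Integrable.mono' h.norm (by fun_prop) ?_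
  filter_upwards [ae_restrict_mem measurableSet_Ioo] with y hy
  rw [norm_smul]
  refine mul_le_of_le_one_left (norm_nonneg _) ?_
  rw [norm_pow, Real.norm_of_nonneg hy.1.le]
  exact pow_le_one₀ hy.1.le hy.2.le
end

section
variable (d : ℕ) (μ : EuclideanSpace ℝ (Fin d)) (ρ : ℝ)
local notation "E" => EuclideanSpace ℝ (Fin d)

noncomputable def gaussW (x : EuclideanSpace ℝ (Fin d)) : ℝ :=
  (2 * Real.pi * ρ^2) ^ (-(d:ℝ)/2) * Real.exp (-‖x - μ‖^2 / (2 * ρ^2))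

lemma gaussW_eq : gaussW d μ ρ =
    fun x => (2 * Real.pi * ρ^2) ^ (-(d:ℝ)/2) * exp (-(1/(2*ρ^2)) * ‖x - μ‖^2) := by
  funext x
  unfold gaussW
  congr 2
  ring

lemma gaussW_pos (hρ : 0 < ρ) (x : E) : 0 < gaussW d μ ρ x := by
  unfold gaussW; positivity

lemma gaussW_meas : Measurable (gaussW d μ ρ) := by
  unfold gaussW; fun_prop

lemma gaussSph_eq : gaussSph d μ ρ = volume.withDensity fun x => ENNReal.ofReal (gaussW d μ ρ x) := rfl

lemma Q_int (hρ : 0 < ρ) (h : E → ℝ) :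
    Integrable h (gaussSph d μ ρ) ↔ Integrable (fun x => gaussW d μ ρ x * h x) := by
  rw [gaussSph_eq, integrable_withDensity_iff_integrable_smul'
    (gaussW_meas d μ ρ).ennreal_ofReal (by simp)]
  simp only [ENNReal.toReal_ofReal (gaussW_pos d μ ρ hρ _).le, smul_eq_mul]

lemma Q_integral (hρ : 0 < ρ) (h : E → ℝ) :
    ∫ x, h x ∂(gaussSph d μ ρ) = ∫ x, gaussW d μ ρ x * h x := by
  rw [gaussSph_eq, integral_withDensity_eq_integral_toReal_smul
    (gaussW_meas d μ ρ).ennreal_ofReal (by simp)]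
  simp only [ENNReal.toReal_ofReal (gaussW_pos d μ ρ hρ _).le, smul_eq_mul]

lemma K_mul (hρ : 0 < ρ) :
    (2 * Real.pi * ρ^2) ^ (-(d:ℝ)/2) * (π/(1/(2*ρ^2)))^((d:ℝ)/2) = 1 := by
  rw [show π/(1/(2*ρ^2)) = 2 * π * ρ^2 by field_simp, ← rpow_add (by positivity),
    show -(d:ℝ)/2 + d/2 = 0 by ring, rpow_zero]

lemma Q_one (hd : 1 ≤ d) (hρ : 0 < ρ) (c : ℝ) :
    Integrable (fun _ => c) (gaussSph d μ ρ) ∧ ∫ _, c ∂(gaussSph d μ ρ) = c := by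
  have hb : 0 < 1/(2*ρ^2) := by positivity
  rw [Q_int d μ ρ hρ, Q_integral d μ ρ hρ]
  have h1 := G1_int d _ hd hb 0
  simp only [pow_zero, one_mul] at h1
  constructor
  · rw [gaussW_eq]
    exact ((h1.comp_sub_right μ).const_mul _).mul_const _
  · rw [integral_mul_const, gaussW_eq, integral_const_mul,
      integral_sub_right_eq_self (fun x : E => exp (-(1/(2*ρ^2)) * ‖x‖^2)) μ, G1_val d _ hb,
      K_mul d ρ hρ, one_mul]

lemma Q_sub (hd : 1 ≤ d) (hρ : 0 < ρ) :
    Integrable (fun x : E => ‖x - μ‖^2) (gaussSph d μ ρ) ∧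
      ∫ x : E, ‖x - μ‖^2 ∂(gaussSph d μ ρ) = d * ρ^2 := by
  have hb : 0 < 1/(2*ρ^2) := by positivity
  rw [Q_int d μ ρ hρ, Q_integral d μ ρ hρ]
  have h1 := G1_int d _ hd hb 2
  have e : (fun x => gaussW d μ ρ x * ‖x - μ‖^2) = fun x => (2 * Real.pi * ρ^2) ^ (-(d:ℝ)/2) *
      (‖x - μ‖^2 * exp (-(1/(2*ρ^2)) * ‖x - μ‖^2)) := by
    rw [gaussW_eq]; funext x; ring
  rw [e]
  constructor
  · exact (h1.comp_sub_right μ).const_mul _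
  · rw [integral_const_mul,
      integral_sub_right_eq_self (fun x : E => ‖x‖^2 * exp (-(1/(2*ρ^2)) * ‖x‖^2)) μ,
      G2_val d _ hd hb, mul_left_comm, K_mul d ρ hρ]
    field_simp

lemma Q_inner (hd : 1 ≤ d) (hρ : 0 < ρ) :
    Integrable (fun x : E => inner ℝ (x - μ) μ) (gaussSph d μ ρ) ∧
      ∫ x : E, inner ℝ (x - μ) μ ∂(gaussSph d μ ρ) = 0 := by
  have hb : 0 < 1/(2*ρ^2) := by positivity
  rw [Q_int d μ ρ hρ, Q_integral d μ ρ hρ]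
  have h1 := G3_int d _ hd hb μ
  have e : (fun x => gaussW d μ ρ x * inner ℝ (x - μ) μ) = fun x => (2 * Real.pi * ρ^2) ^ (-(d:ℝ)/2) *
      (inner ℝ (x - μ) μ * exp (-(1/(2*ρ^2)) * ‖x - μ‖^2)) := by
    rw [gaussW_eq]; funext x; ring
  rw [e]
  constructor
  · exact (h1.comp_sub_right μ).const_mul _
  · rw [integral_const_mul,
      integral_sub_right_eq_self (fun x : E => inner ℝ x μ * exp (-(1/(2*ρ^2)) * ‖x‖^2)) μ,
      G3_val d _ μ, mul_zero]

lemma Q_sq (hd : 1 ≤ d) (hρ : 0 < ρ) :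
    Integrable (fun x : E => ‖x‖^2) (gaussSph d μ ρ) ∧
      ∫ x : E, ‖x‖^2 ∂(gaussSph d μ ρ) = ‖μ‖^2 + d * ρ^2 := by
  obtain ⟨a1, a2⟩ := Q_one d μ ρ hd hρ (‖μ‖^2)
  obtain ⟨b1, b2⟩ := Q_sub d μ ρ hd hρ
  obtain ⟨c1, c2⟩ := Q_inner d μ ρ hd hρ
  have e : (fun x : E => ‖x‖^2) =
      fun x => (‖x - μ‖^2 + 2 * inner ℝ (x - μ) μ) + ‖μ‖^2 := by
    funext x
    rw [← norm_add_sq_real, sub_add_cancel]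
  rw [e]
  have i1 : Integrable (fun x : E => ‖x - μ‖^2 + 2 * inner ℝ (x - μ) μ) (gaussSph d μ ρ) :=
    b1.add (c1.const_mul 2)
  refine ⟨i1.add a1, ?_⟩
  rw [integral_add i1 a1, integral_add b1 (c1.const_mul 2), integral_const_mul, a2, b2, c2]
  ring

lemma Q_log (hd : 1 ≤ d) (hρ : 0 < ρ) :
    Integrable ((Metric.ball (0:E) 1).indicator (fun x => log ‖x‖)) (gaussSph d μ ρ) := by
  rw [Q_int d μ ρ hρ]
  have h := (integrable_indicator_iff Metric.isOpen_ball.measurableSet).2 (log_int d hd)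
  refine h.bdd_mul (c := (2 * Real.pi * ρ^2) ^ (-(d:ℝ)/2))
    (gaussW_meas d μ ρ).aestronglyMeasurable (ae_of_all _ fun x => ?_)
  rw [Real.norm_of_nonneg (gaussW_pos d μ ρ hρ x).le]
  unfold gaussW
  refine mul_le_of_le_one_right (by positivity) ?_
  rw [exp_le_one_iff]
  exact div_nonpos_of_nonpos_of_nonneg (by simp) (by positivity)

noncomputable def cauchyW (x : EuclideanSpace ℝ (Fin d)) : ℝ :=
    2 / (Real.pi * sphereArea d * (‖x‖^(d-1) + ‖x‖^(d+1)))

lemma sphereArea_pos (hd : 1 ≤ d) : 0 < sphereArea d := by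
  have hd0 : (0:ℝ) < d := by exact_mod_cast hd
  have : 0 < Gamma ((d:ℝ)/2+1) := Gamma_pos_of_pos (by positivity)
  unfold sphereArea; positivity

lemma cauchyW_pos (hd : 1 ≤ d) (x : E) (hx : x ≠ 0) : 0 < cauchyW d x := by
  have := sphereArea_pos d hd
  have : 0 < ‖x‖ := norm_pos_iff.2 hx
  unfold cauchyW; positivity

lemma cauchyW_meas : Measurable (cauchyW d) := by
  unfold cauchyW; fun_prop

lemma genCauchy_eq : genCauchy d = volume.withDensity fun x => ENNReal.ofReal (cauchyW d x) := rfl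

lemma Q_eq (hd : 1 ≤ d) (hρ : 0 < ρ) : gaussSph d μ ρ =
    (genCauchy d).withDensity fun x => ENNReal.ofReal (gaussW d μ ρ x / cauchyW d x) := by
  have : Nontrivial E := by
    have : Nonempty (Fin d) := ⟨⟨0, hd⟩⟩
    infer_instance
  have hq : Measurable fun x => gaussW d μ ρ x / cauchyW d x :=
    (gaussW_meas d μ ρ).div (cauchyW_meas d)
  rw [genCauchy_eq, ← withDensity_mul _ (cauchyW_meas d).ennreal_ofReal
    hq.ennreal_ofReal, gaussSph_eq]
  refine withDensity_congr_ae ?_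
  filter_upwards [Measure.ae_ne volume (0:E)] with x hx
  have h := cauchyW_pos d hd x hx
  simp only [Pi.mul_apply]
  rw [← ENNReal.ofReal_mul h.le, mul_div_cancel₀ _ h.ne']

lemma Q_ac (hd : 1 ≤ d) (hρ : 0 < ρ) : gaussSph d μ ρ ≪ genCauchy d := by
  rw [Q_eq d μ ρ hd hρ]
  exact withDensity_absolutelyContinuous _ _

lemma Q_llr (hd : 1 ≤ d) (hρ : 0 < ρ) : ∀ᵐ x ∂(gaussSph d μ ρ), 0 < ‖x‖ ∧
    llr (gaussSph d μ ρ) (genCauchy d) x =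
      (-(d:ℝ)/2 * log (2 * π * ρ^2) + log (π * sphereArea d / 2)) - ‖x - μ‖^2 / (2*ρ^2)
        + ((d:ℝ) - 1) * log ‖x‖ + log (1 + ‖x‖^2) := by
  have : Nontrivial E := by
    have : Nonempty (Fin d) := ⟨⟨0, hd⟩⟩
    infer_instance
  have hS := sphereArea_pos d hd
  have h1 : (gaussSph d μ ρ).rnDeriv (genCauchy d) =ᵐ[genCauchy d]
      fun x => ENNReal.ofReal (gaussW d μ ρ x / cauchyW d x) := by
    rw [Q_eq d μ ρ hd hρ, genCauchy_eq]
    exact Measure.rnDeriv_withDensity _ ((gaussW_meas d μ ρ).div (cauchyW_meas d)).ennreal_ofReal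
  have h2 : ∀ᵐ x ∂(gaussSph d μ ρ), x ≠ 0 :=
    (withDensity_absolutelyContinuous _ _).ae_le (Measure.ae_ne volume (0:E))
  filter_upwards [(Q_ac d μ ρ hd hρ).ae_le h1, h2] with x hx hx0
  have hn : 0 < ‖x‖ := norm_pos_iff.2 hx0
  refine ⟨hn, ?_⟩
  have hg := gaussW_pos d μ ρ hρ x
  have hc := cauchyW_pos d hd x hx0
  rw [llr, hx, ENNReal.toReal_ofReal (by positivity), log_div hg.ne' hc.ne']
  have l1 : log (gaussW d μ ρ x) = -(d:ℝ)/2 * log (2 * π * ρ^2) - ‖x - μ‖^2 / (2*ρ^2) := by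
    unfold gaussW
    rw [log_mul (by positivity) (by positivity), log_exp, log_rpow (by positivity)]
    ring
  have l2 : cauchyW d x = (π * sphereArea d / 2 * (‖x‖^(d-1) * (1 + ‖x‖^2)))⁻¹ := by
    obtain ⟨n, rfl⟩ : ∃ n, d = n + 1 := ⟨d-1, by omega⟩
    unfold cauchyW
    rw [Nat.add_sub_cancel]
    field_simp
    ring
  have l3 : log (π * sphereArea d / 2 * (‖x‖^(d-1) * (1 + ‖x‖^2))) =
      log (π * sphereArea d / 2) + (((d - 1 : ℕ) : ℝ) * log ‖x‖ + log (1 + ‖x‖^2)) := by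
    rw [log_mul (by positivity) (by positivity), log_mul (by positivity) (by positivity), log_pow]
  rw [l1, l2, log_inv, l3, Nat.cast_sub hd]
  push_cast
  ring

lemma log_tangent (y m : ℝ) (hy : 0 < y) (hm : 0 < m) : log y ≤ log m + y / m - 1 := by
  have := log_le_sub_one_of_pos (div_pos hy hm)
  rw [log_div hy.ne' hm.ne'] at this
  linarith

lemma final_ineq (hd : 1 ≤ d) (hρ : 0 < ρ) (M : ℝ) (hM : 0 ≤ M) :
    (-(d:ℝ)/2 * log (2 * π * ρ^2) + log (π * sphereArea d / 2)) - (d * ρ^2) / (2*ρ^2)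
        + ((d:ℝ) - 1) / 2 * log (M + d * ρ^2) + log (1 + (M + d * ρ^2)) ≤
      ((d:ℝ) + 1) / 2 * log (1 + M / (d * ρ^2)) + log ((1 + d * ρ^2) / ρ) := by
  have hd0 : (0:ℝ) < d := by exact_mod_cast hd
  have hG : 0 < Gamma ((d:ℝ)/2+1) := Gamma_pos_of_pos (by positivity)
  have hc := const_bound d hd
  have e1 : log (M + d * ρ^2) = log (1 + M / (d * ρ^2)) + log d + 2 * log ρ := by
    rw [show M + d * ρ^2 = (1 + M / (d * ρ^2)) * d * ρ^2 by field_simp; ring,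
      log_mul (by positivity) (by positivity), log_mul (by positivity) (by positivity), log_pow]
    push_cast; ring
  have e2 : log (1 + (M + d * ρ^2)) ≤ log (1 + M / (d * ρ^2)) + log (1 + d * ρ^2) := by
    rw [← log_mul (by positivity) (by positivity)]
    refine log_le_log (by positivity) ?_
    have : (1 + M / (d * ρ^2)) * (1 + d * ρ^2) = 1 + (M + d * ρ^2) + M / (d * ρ^2) := by
      field_simp; ring
    rw [this]
    have : 0 ≤ M / (d * ρ^2) := by positivity
    linarith
  have e3 : log (π * sphereArea d / 2) =
      log (π/2) + log d + (d:ℝ)/2 * log π - log (Gamma ((d:ℝ)/2+1)) := by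
    rw [show π * sphereArea d / 2 = π / 2 * d * π ^ ((d:ℝ)/2) / Gamma ((d:ℝ)/2+1) by
        unfold sphereArea; ring, log_div (by positivity) (by positivity),
      log_mul (by positivity) (by positivity), log_mul (by positivity) (by positivity),
      log_rpow pi_pos]
  have e4 : (d * ρ^2) / (2*ρ^2) = (d:ℝ)/2 := by field_simp
  rw [e1, e3, e4, log_div (by positivity) hρ.ne', log_mul (by positivity) (by positivity),
    log_mul (by positivity) (by positivity), log_pow]
  push_cast
  linarith

end

/-- **Gaussian--generalized-Cauchy KL divergence, first bound.**
`D_KL(N_d(μ,ρ²I)‖𝒰_d) ≤ ((d+1)/2) log(1 + |μ|²/(dρ²)) + log((1+dρ²)/ρ)`. -/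
theorem kl_gauss_genCauchy_first (d : ℕ) (hd : 1 ≤ d)
    (μ : EuclideanSpace ℝ (Fin d)) (ρ : ℝ) (hρ : 0 < ρ) :
    klDiv (gaussSph d μ ρ) (genCauchy d) ≤
      ((((d:ℝ) + 1) / 2 * Real.log (1 + ‖μ‖^2 / (d * ρ^2))
        + Real.log ((1 + d * ρ^2) / ρ) : ℝ) : EReal) := by
  have hd1 : (1:ℝ) ≤ d := by exact_mod_cast hd
  have hllr := Q_llr d μ ρ hd hρ
  set A : ℝ := -(d:ℝ)/2 * log (2 * π * ρ^2) + log (π * sphereArea d / 2) with hA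
  set m : ℝ := ‖μ‖^2 + d * ρ^2 with hm
  have hm0 : 0 < m := by positivity
  obtain ⟨b1, b2⟩ := Q_sub d μ ρ hd hρ
  obtain ⟨c1, c2⟩ := Q_sq d μ ρ hd hρ
  have hlog := Q_log d μ ρ hd hρ
  set B : ℝ := A + ((d:ℝ)-1)/2 * (log m - 1) + (log (1+m) + 1 / (1+m) - 1) with hB
  set C : ℝ := ((d:ℝ)-1)/2 / m + 1 / (1+m) with hC
  obtain ⟨a1, a2⟩ := Q_one d μ ρ hd hρ B
  obtain ⟨a1', -⟩ := Q_one d μ ρ hd hρ A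
  have i1 : Integrable (fun x => B - ‖x - μ‖^2 / (2*ρ^2)) (gaussSph d μ ρ) :=
    a1.sub (b1.div_const (2*ρ^2))
  have i2 := i1.add (c1.const_mul C)
  have hup : llr (gaussSph d μ ρ) (genCauchy d) ≤ᵐ[gaussSph d μ ρ]
      fun x => B - ‖x - μ‖^2 / (2*ρ^2) + C * ‖x‖^2 := by
    filter_upwards [hllr] with x hx
    obtain ⟨hx0, hx⟩ := hx
    rw [hx]
    have t1 := log_tangent (‖x‖^2) m (by positivity) hm0
    have t2 := log_tangent (1 + ‖x‖^2) (1+m) (by positivity) (by positivity)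
    rw [log_pow] at t1
    push_cast at t1
    have t3 := mul_le_mul_of_nonneg_left t1 (show 0 ≤ ((d:ℝ)-1)/2 by linarith)
    have e : C * ‖x‖^2 = ((d:ℝ)-1)/2 * (‖x‖^2 / m) + ‖x‖^2/(1+m) := by rw [hC]; ring
    rw [e, hB]
    rw [add_div] at t2
    linarith
  have hlow : (fun x => A - ‖x - μ‖^2 / (2*ρ^2) + ((d:ℝ)-1) *
      (Metric.ball (0:EuclideanSpace ℝ (Fin d)) 1).indicator (fun x => log ‖x‖) x)
      ≤ᵐ[gaussSph d μ ρ] llr (gaussSph d μ ρ) (genCauchy d) := by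
    filter_upwards [hllr] with x hx
    obtain ⟨hx0, hx⟩ := hx
    rw [hx]
    have t2 : 0 ≤ log (1 + ‖x‖^2) := log_nonneg (by nlinarith [sq_nonneg ‖x‖])
    have t1 : (Metric.ball (0:EuclideanSpace ℝ (Fin d)) 1).indicator (fun x => log ‖x‖) x
        ≤ log ‖x‖ := by
      by_cases h : x ∈ Metric.ball (0:EuclideanSpace ℝ (Fin d)) 1
      · rw [Set.indicator_of_mem h]
      · rw [Set.indicator_of_notMem h]
        rw [mem_ball_zero_iff, not_lt] at h
        exact log_nonneg h
    have t3 := mul_le_mul_of_nonneg_left t1 (show 0 ≤ (d:ℝ)-1 by linarith)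
    linarith
  have hint : Integrable (llr (gaussSph d μ ρ) (genCauchy d)) (gaussSph d μ ρ) := by
    refine integrable_of_le_of_le (stronglyMeasurable_llr _ _).aestronglyMeasurable hlow hup ?_ i2
    exact (a1'.sub (b1.div_const (2*ρ^2))).add (hlog.const_mul _)
  rw [klDiv, if_pos ⟨Q_ac d μ ρ hd hρ, hint⟩, EReal.coe_le_coe_iff]
  refine (integral_mono_ae hint i2 hup).trans ?_
  have hval : ∫ x, (B - ‖x - μ‖^2 / (2*ρ^2) + C * ‖x‖^2) ∂(gaussSph d μ ρ) =
      B - (d * ρ^2) / (2*ρ^2) + C * m := by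
    rw [integral_add i1 (c1.const_mul C), integral_sub a1 (b1.div_const _), integral_const_mul,
      integral_div, a2, b2, c2]
  refine hval.le.trans ?_
  refine le_trans (le_of_eq ?_) (final_ineq d ρ hd hρ (‖μ‖^2) (by positivity))
  rw [hB, hC, ← hm, ← hA]
  field_simp
  ring
end

section
/- (Gaussian–generalized-Cauchy KL divergence, second bound.) Let d ≥ 1. Let N_d(μ, ρ²I_d) be the spherical Gaussian probability measure on ℝ^d with mean μ ∈ ℝ^d and covariance ρ²I_d, ρ > 0, and let 𝒰_d be the generalized Cauchy distribution on ℝ^d, i.e. the probability measure with Lebesgue density x ↦ 2 / ( π · S_{d−1} · ( |x|^{d−1} + |x|^{d+1} ) ), where S_{d−1} = d·π^{d/2}/Γ(d/2 + 1) is the surface area of the unit sphere in ℝ^d and |·| is the Euclidean norm. Then D_KL( N_d(μ, ρ²I_d) ‖ 𝒰_d ) ≤ |μ|²/(2ρ²) + log( (1 + 2 d ρ²)/ρ ). -/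
open MeasureTheory Real
open scoped Classical

theorem aux_gamma (d : ℕ) (hd : 1 ≤ d) :
    log (π/2) + log d / 2 + (d:ℝ)/2 * (log d - log 2 - 1) ≤ log (Gamma ((d:ℝ)/2+1)) := by
  have hπ4 : log π ≤ 2 * log 2 := by
    have : (2:ℝ) * log 2 = log (2^2) := by rw [log_pow]; norm_num
    rw [this]; exact log_le_log pi_pos (by norm_num; exact pi_le_four)
  rw [log_div pi_ne_zero two_ne_zero]
  obtain ⟨n, rfl | rfl⟩ := Nat.even_or_odd' d
  · have hn : n ≠ 0 := by omega
    have hn0 : (n:ℝ) ≠ 0 := by exact_mod_cast hn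
    have h := Stirling.le_log_factorial_stirling hn
    have : ((2*n:ℕ):ℝ)/2+1 = n + 1 := by push_cast; ring
    rw [this, Gamma_nat_eq_factorial]
    push_cast
    rw [log_mul two_ne_zero pi_ne_zero] at h
    rw [log_mul two_ne_zero hn0]
    nlinarith
  · have e1 : (((2*n+1:ℕ):ℝ)/2+1) = ((n:ℝ)+1/2) + 1 := by push_cast; ring
    have hL : log ((2*n+1:ℕ):ℝ) = log ((n:ℝ)+1/2) + log 2 := by
      rw [← log_mul (by positivity) two_ne_zero]; congr 1; push_cast; ring
    have hG : log (Gamma ((n:ℝ)+1/2+1)) = log ((n:ℝ)+1/2) + log (Gamma ((n:ℝ)+1/2)) := by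
      rw [Gamma_add_one (by positivity), log_mul (by positivity) (Gamma_pos_of_pos (by positivity)).ne']
    rw [e1, hL]
    have h2 : (((2*n+1:ℕ):ℝ)/2) = ((n:ℝ)+1/2) := by push_cast; ring
    rw [h2]
    have hGh : log (Gamma (1/2)) = log π / 2 := by
      rw [Gamma_one_half_eq, log_sqrt pi_pos.le]
    have hl2 : log (1/2) = - log 2 := by rw [one_div, log_inv]
    rcases Nat.lt_or_ge n 2 with hn | hn
    · interval_cases n
      · have : log π ≤ log 2 + 1 := by
          have h1 : log 2 + 1 = log (2 * exp 1) := by rw [log_mul two_ne_zero (exp_pos 1).ne', log_exp]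
          rw [h1]
          exact log_le_log pi_pos (by have := exp_one_gt_d9; have := pi_lt_d2; linarith)
        rw [hG]
        norm_num [hl2] 
        norm_num at hGh
        rw [hGh]
        linarith
      · have e : log (Gamma ((1:ℕ)+1/2)) = log (1/2) + log (Gamma (1/2)) := by
          rw [← log_mul (by positivity) (Gamma_pos_of_pos (by norm_num)).ne', ← Gamma_add_one (by norm_num)]
          congr 2; norm_num
        rw [hG, e, hl2, hGh]
        have h3 : log (((1:ℕ):ℝ) + 1/2) = log 3 - log 2 := by
          rw [← log_div (by norm_num) (by norm_num)]; norm_num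
        rw [h3]
        have h4 : log π + 2 * log 3 - log 2 ≤ 3 := by
          have h6 : (3:ℝ) = log (exp 3) := by rw [log_exp]
          refine le_of_le_of_eq ?_ h6.symm
          rw [show (2:ℝ) * log 3 = log (3^2) by rw [log_pow]; norm_num, 
            ← log_mul (by positivity) (by positivity), ← log_div (by positivity) (by positivity)]
          apply log_le_log (by positivity)
          have : exp 3 = exp 1 ^ 3 := by rw [← exp_nat_mul]; norm_num
          rw [this]
          have h5 : (2.7:ℝ)^3 ≤ exp 1 ^3 := by gcongr; have := exp_one_gt_d9; linarith
          have := pi_lt_d2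
          norm_num at h5
          linarith
        push_cast
        linarith
    · have hn2 : (2:ℝ) ≤ n := by exact_mod_cast hn
      have h := Stirling.le_log_factorial_stirling (n := n) (by omega)
      rw [log_mul two_ne_zero pi_ne_zero] at h
      have hc : log (Gamma ((n:ℝ)+1)) ≤ (1/2) * log (Gamma ((n:ℝ)+1/2)) + (1/2) * log (Gamma ((n:ℝ)+1/2+1)) := by
        have := convexOn_log_Gamma.2 (show (n:ℝ)+1/2 ∈ Set.Ioi 0 by simp; positivity) (show (n:ℝ)+1/2+1 ∈ Set.Ioi 0 by simp; positivity)
          (show (0:ℝ) ≤ 1/2 by norm_num) (show (0:ℝ) ≤ 1/2 by norm_num) (by norm_num)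
        simp only [smul_eq_mul, Function.comp] at this
        rwa [show (1:ℝ)/2 * ((n:ℝ)+1/2) + 1/2 * ((n:ℝ)+1/2+1) = (n:ℝ)+1 by ring] at this
      rw [Gamma_nat_eq_factorial] at hc
      have ha : log ((n:ℝ)+1/2) - log n ≤ 1/(2*n) := by
        rw [← log_div (by positivity) (by positivity)]
        refine (log_le_sub_one_of_pos (by positivity)).trans (le_of_eq ?_)
        field_simp; ring
      have hb : n * (log ((n:ℝ)+1/2) - log n) ≤ 1/2 := by
        refine (mul_le_mul_of_nonneg_left ha (by positivity)).trans (le_of_eq ?_)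
        field_simp
      have hc2 : log π + log ((n:ℝ)+1/2) ≤ 2 * log 2 + log n := by
        rw [show (2:ℝ) * log 2 = log (2^2) by rw [log_pow]; norm_num, ← log_mul (by positivity) (by positivity),
          ← log_mul (by positivity) (by positivity)]
        apply log_le_log (by positivity)
        have := pi_lt_d2
        nlinarith
      nlinarith

theorem aux_const (d : ℕ) (hd : 1 ≤ d) (s ρ : ℝ) (hs : 0 ≤ s) (hρ : 0 < ρ) :
    log ((2 * π * ρ^2) ^ (-(d:ℝ)/2)) - d / 2 +
      log (π * (d * π ^ ((d:ℝ)/2) / Gamma ((d:ℝ)/2 + 1)) / 2) +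
      ((d:ℝ)-1) / 2 * log (s + d * ρ^2) + log (1 + (s + d * ρ^2)) ≤
    s / (2 * ρ^2) + log ((1 + 2 * d * ρ^2) / ρ) := by
  have hd1 : (1:ℝ) ≤ d := by exact_mod_cast hd
  have hd0 : (0:ℝ) < d := by linarith
  have hG : 0 < Gamma ((d:ℝ)/2 + 1) := Gamma_pos_of_pos (by positivity)
  have g := aux_gamma d hd
  rw [log_div pi_ne_zero two_ne_zero] at g
  have hr : log (ρ^2) = 2 * log ρ := by rw [log_pow]; norm_num
  have e1 : log ((2 * π * ρ^2) ^ (-(d:ℝ)/2)) = -(d:ℝ)/2 * (log 2 + log π + 2 * log ρ) := by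
    rw [log_rpow (by positivity), log_mul (by positivity) (by positivity), log_mul (by positivity) (by positivity), hr]
  have e2 : log (π * (d * π ^ ((d:ℝ)/2) / Gamma ((d:ℝ)/2 + 1)) / 2) =
      log π + (log d + d/2 * log π - log (Gamma ((d:ℝ)/2 + 1))) - log 2 := by
    rw [log_div (by positivity) (by positivity), log_mul (by positivity) (by positivity),
      log_div (by positivity) (by positivity), log_mul (by positivity) (by positivity), log_rpow pi_pos]
  obtain ⟨t, ht⟩ : ∃ t, t = s / (d * ρ^2) := ⟨_, rfl⟩
  have ht0 : 0 ≤ t := by rw [ht]; positivity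
  have hst : s = t * (d * ρ^2) := by rw [ht]; field_simp
  have e3 : log (s + d * ρ^2) ≤ log d + 2 * log ρ + t := by
    have : s + d * ρ^2 = d * ρ^2 * (1 + t) := by rw [hst]; ring
    rw [this, log_mul (by positivity) (by positivity), log_mul (by positivity) (by positivity), hr]
    have := log_le_sub_one_of_pos (show 0 < 1 + t by positivity)
    linarith
  have e4 : log (1 + (s + d * ρ^2)) ≤ log (1 + 2 * d * ρ^2) + t / 2 := by
    have h1 : 1 + (s + d * ρ^2) ≤ (1 + 2 * d * ρ^2) * (1 + t/2) := by
      rw [hst]; have : 0 ≤ d * ρ^2 := by positivity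
      nlinarith
    refine (log_le_log (by positivity) h1).trans ?_
    rw [log_mul (by positivity) (by positivity)]
    have := log_le_sub_one_of_pos (show 0 < 1 + t/2 by positivity)
    linarith
  have e5 : s / (2 * ρ^2) = d * t / 2 := by rw [hst]; field_simp
  rw [e1, e2, e5, log_div (by positivity) (by positivity)]
  have e6 := mul_le_mul_of_nonneg_left e3 (show 0 ≤ ((d:ℝ)-1)/2 by linarith)
  nlinarith

theorem aux_radial (d : ℕ) (hd : 1 ≤ d) (b : ℝ) (hb : 0 < b) (k : ℕ) :
    Integrable (fun x : EuclideanSpace ℝ (Fin d) => ‖x‖^k * exp (-b * ‖x‖^2)) ∧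
    ∫ x : EuclideanSpace ℝ (Fin d), ‖x‖^k * exp (-b * ‖x‖^2) =
      d * (volume : Measure (EuclideanSpace ℝ (Fin d))).real (Metric.ball 0 1) *
       (b ^ (-((d:ℝ)+k)/2) * (1/2) * Gamma (((d:ℝ)+k)/2)) := by
  have : Nonempty (Fin d) := ⟨⟨0, hd⟩⟩
  have hd1 : (1:ℝ) ≤ d := by exact_mod_cast hd
  have key : ∀ y ∈ Set.Ioi (0:ℝ), y^(d-1) • (y^k * exp (-b * y^2)) =
      y ^ (((d:ℝ)-1+k)) * exp (-b * y ^ (2:ℝ)) := by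
    intro y hy
    have hy : 0 < y := hy
    rw [smul_eq_mul, ← mul_assoc, ← pow_add, ← rpow_natCast y (d-1+k)]
    push_cast [Nat.cast_sub hd]
    norm_num
  have hq : -1 < (d:ℝ)-1+k := by have : (0:ℝ) ≤ k := by positivity
                                 linarith
  constructor
  · rw [integrable_fun_norm_addHaar volume (f := fun y => y^k * exp (-b * y^2))]
    simp only [finrank_euclideanSpace, Fintype.card_fin]
    rw [integrableOn_congr_fun key measurableSet_Ioi]
    exact integrableOn_rpow_mul_exp_neg_mul_rpow hq two_pos hb
  · rw [integral_fun_norm_addHaar volume (fun y => y^k * exp (-b * y^2))]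
    simp only [finrank_euclideanSpace, Fintype.card_fin]
    rw [setIntegral_congr_fun measurableSet_Ioi key, integral_rpow_mul_exp_neg_mul_rpow two_pos hq hb]
    simp only [nsmul_eq_mul, smul_eq_mul]
    rw [show (d:ℝ)-1+k+1 = d + k by ring]
    ring

theorem aux_M2 (d : ℕ) (hd : 1 ≤ d) (b : ℝ) (hb : 0 < b) :
    ∫ x : EuclideanSpace ℝ (Fin d), ‖x‖^2 * exp (-b * ‖x‖^2) =
      d / (2*b) * ∫ x : EuclideanSpace ℝ (Fin d), exp (-b * ‖x‖^2) := by
  have h0 := (aux_radial d hd b hb 0).2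
  simp only [pow_zero, one_mul] at h0
  rw [(aux_radial d hd b hb 2).2, h0]
  have hd1 : (1:ℝ) ≤ d := by exact_mod_cast hd
  have e1 : Gamma (((d:ℝ)+(2:ℕ))/2) = d/2 * Gamma (((d:ℝ)+(0:ℕ))/2) := by
    rw [show ((d:ℝ)+(2:ℕ))/2 = d/2 + 1 by push_cast; ring, Gamma_add_one (by positivity)]
    norm_num
  have e2 : b ^ (-((d:ℝ)+(2:ℕ))/2) = b ^ (-((d:ℝ)+(0:ℕ))/2) / b := by
    rw [show -((d:ℝ)+(2:ℕ))/2 = -((d:ℝ)+(0:ℕ))/2 - 1 by push_cast; ring, rpow_sub hb, rpow_one]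
  rw [e1, e2]
  field_simp

theorem aux_log (d : ℕ) (hd : 1 ≤ d) :
    Integrable (fun x : EuclideanSpace ℝ (Fin d) => (Set.Iic (1:ℝ)).indicator (fun y => |log y|) ‖x‖) := by
  have : Nonempty (Fin d) := ⟨⟨0, hd⟩⟩
  rw [integrable_fun_norm_addHaar volume (f := (Set.Iic (1:ℝ)).indicator (fun y => |log y|))]
  have h1 : IntegrableOn (fun y => log y) (Set.Ioc 0 1) volume :=
    (intervalIntegrable_iff_integrableOn_Ioc_of_le zero_le_one).1 intervalIntegral.intervalIntegrable_log'
  have h2 : Integrable ((Set.Ioc (0:ℝ) 1).indicator (fun y => log y)) := 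
    (integrable_indicator_iff measurableSet_Ioc).2 h1
  refine Integrable.mono h2.integrableOn ?_ ?_
  · refine Measurable.aestronglyMeasurable ?_
    have hm : Measurable (fun y : ℝ => |log y|) := by fun_prop
    exact Measurable.smul (measurable_id.pow_const _) (hm.indicator measurableSet_Iic)
  · refine (ae_restrict_iff' measurableSet_Ioi).2 (Filter.Eventually.of_forall ?_)
    intro y hy
    have hy : 0 < y := hy
    by_cases h : y ≤ 1
    · simp only [Set.indicator, Set.mem_Iic, h, Set.mem_Ioc, hy, and_self, if_true, smul_eq_mul, norm_mul, norm_pow, norm_eq_abs, abs_abs, abs_of_pos hy]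
      exact mul_le_of_le_one_left (abs_nonneg _) (pow_le_one₀ hy.le h)
    · simp [Set.indicator, h]

theorem aux_gint (d : ℕ) (μ : EuclideanSpace ℝ (Fin d)) (ρ : ℝ) (f : EuclideanSpace ℝ (Fin d) → ℝ) :
    (Integrable f (gaussSph d μ ρ) ↔ Integrable (fun x =>
      ((2 * Real.pi * ρ^2) ^ (-(d:ℝ)/2) * Real.exp (-‖x - μ‖^2 / (2 * ρ^2))) * f x)) ∧
    ∫ x, f x ∂(gaussSph d μ ρ) = ∫ x, 
      ((2 * Real.pi * ρ^2) ^ (-(d:ℝ)/2) * Real.exp (-‖x - μ‖^2 / (2 * ρ^2))) * f x := by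
  have hm : Measurable (fun x : EuclideanSpace ℝ (Fin d) => 
    ENNReal.ofReal ((2 * Real.pi * ρ^2) ^ (-(d:ℝ)/2) * Real.exp (-‖x - μ‖^2 / (2 * ρ^2)))) := by
    fun_prop
  have hp : ∀ x : EuclideanSpace ℝ (Fin d), 0 ≤ ((2 * Real.pi * ρ^2) ^ (-(d:ℝ)/2) * Real.exp (-‖x - μ‖^2 / (2 * ρ^2))) :=
    fun x => by positivity
  unfold gaussSph
  constructor
  · rw [integrable_withDensity_iff_integrable_smul' hm (by simp)]
    simp only [ENNReal.toReal_ofReal (hp _), smul_eq_mul]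
  · rw [integral_withDensity_eq_integral_toReal_smul hm (by simp)]
    simp only [ENNReal.toReal_ofReal (hp _), smul_eq_mul]

theorem aux_prob (d : ℕ) (hd : 1 ≤ d) (μ : EuclideanSpace ℝ (Fin d)) (ρ : ℝ) (hρ : 0 < ρ) :
    Integrable (fun x => Real.exp (-‖x - μ‖^2 / (2 * ρ^2))) ∧
    ∫ x, (2 * Real.pi * ρ^2) ^ (-(d:ℝ)/2) * Real.exp (-‖x - μ‖^2 / (2 * ρ^2)) = 1 := by
  have hb : 0 < 1 / (2*ρ^2) := by positivity
  have he : ∀ x : EuclideanSpace ℝ (Fin d), -‖x‖^2 / (2 * ρ^2) = -(1/(2*ρ^2)) * ‖x‖^2 := by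
    intro x; ring
  have h0 := (aux_radial d hd _ hb 0).1
  simp only [pow_zero, one_mul] at h0
  simp only [he]
  refine ⟨h0.comp_sub_right μ, ?_⟩
  rw [integral_const_mul, integral_sub_right_eq_self (fun x : EuclideanSpace ℝ (Fin d) => Real.exp (-(1/(2*ρ^2)) * ‖x‖^2)) μ,
    GaussianFourier.integral_rexp_neg_mul_sq_norm hb]
  simp only [finrank_euclideanSpace, Fintype.card_fin]
  rw [show π / (1 / (2*ρ^2)) = 2 * π * ρ^2 by field_simp, ← rpow_add (by positivity)]
  rw [show -(d:ℝ)/2 + d/2 = 0 by ring, rpow_zero]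

theorem aux_m2 (d : ℕ) (hd : 1 ≤ d) (μ : EuclideanSpace ℝ (Fin d)) (ρ : ℝ) (hρ : 0 < ρ) :
    Integrable (fun x => ‖x - μ‖^2) (gaussSph d μ ρ) ∧
    ∫ x, ‖x - μ‖^2 ∂(gaussSph d μ ρ) = d * ρ^2 := by
  have hb : 0 < 1 / (2*ρ^2) := by positivity
  have he : ∀ x : EuclideanSpace ℝ (Fin d), -‖x‖^2 / (2 * ρ^2) = -(1/(2*ρ^2)) * ‖x‖^2 := by
    intro x; ring
  have h2 := (aux_radial d hd _ hb 2).1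
  have hM := aux_M2 d hd _ hb
  have h1 := (aux_prob d hd μ ρ hρ).2
  rw [(aux_gint d μ ρ _).1, (aux_gint d μ ρ _).2]
  simp only [he] at *
  have e : ∀ x : EuclideanSpace ℝ (Fin d), (2 * Real.pi * ρ^2) ^ (-(d:ℝ)/2) * Real.exp (-(1/(2*ρ^2)) * ‖x - μ‖^2) * ‖x - μ‖^2
     = (2 * Real.pi * ρ^2) ^ (-(d:ℝ)/2) * (‖x - μ‖^2 * Real.exp (-(1/(2*ρ^2)) * ‖x - μ‖^2)) := by
    intro x; ring
  simp only [e]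
  refine ⟨(h2.comp_sub_right μ).const_mul _, ?_⟩
  rw [integral_const_mul, integral_sub_right_eq_self (fun x : EuclideanSpace ℝ (Fin d) => Real.exp (-(1/(2*ρ^2)) * ‖x‖^2)) μ] at h1
  rw [integral_const_mul, integral_sub_right_eq_self (fun x : EuclideanSpace ℝ (Fin d) => ‖x‖^2 * Real.exp (-(1/(2*ρ^2)) * ‖x‖^2)) μ,
    hM, mul_left_comm, h1]
  field_simp

theorem aux_isProb (d : ℕ) (hd : 1 ≤ d) (μ : EuclideanSpace ℝ (Fin d)) (ρ : ℝ) (hρ : 0 < ρ) :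
    IsProbabilityMeasure (gaussSph d μ ρ) := by
  obtain ⟨h1, h2⟩ := aux_prob d hd μ ρ hρ
  constructor
  unfold gaussSph
  rw [withDensity_apply _ MeasurableSet.univ, Measure.restrict_univ,
    ← ofReal_integral_eq_lintegral_ofReal (h1.const_mul _) (Filter.Eventually.of_forall fun x => by positivity), h2]
  simp

theorem aux_cross (d : ℕ) (hd : 1 ≤ d) (μ : EuclideanSpace ℝ (Fin d)) (ρ : ℝ) (hρ : 0 < ρ) :
    Integrable (fun x => inner ℝ (x - μ) μ) (gaussSph d μ ρ) ∧
    ∫ x, inner ℝ (x - μ) μ ∂(gaussSph d μ ρ) = 0 := by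
  have := aux_isProb d hd μ ρ hρ
  constructor
  · refine Integrable.mono' (((aux_m2 d hd μ ρ hρ).1).add (integrable_const (‖μ‖^2))) (by fun_prop) ?_
    refine Filter.Eventually.of_forall fun x => ?_
    refine (norm_inner_le_norm _ _).trans ?_
    simp only [Pi.add_apply]
    nlinarith [sq_nonneg (‖x - μ‖ - ‖μ‖), sq_nonneg (‖x - μ‖), sq_nonneg ‖μ‖]
  · rw [(aux_gint d μ ρ _).2]
    rw [integral_sub_right_eq_self (fun x : EuclideanSpace ℝ (Fin d) => 
      (2 * Real.pi * ρ^2) ^ (-(d:ℝ)/2) * Real.exp (-‖x‖^2 / (2 * ρ^2)) * inner ℝ x μ) μ]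
    have h := integral_neg_eq_self (fun x : EuclideanSpace ℝ (Fin d) => 
      (2 * Real.pi * ρ^2) ^ (-(d:ℝ)/2) * Real.exp (-‖x‖^2 / (2 * ρ^2)) * inner ℝ x μ) volume
    simp only [norm_neg, inner_neg_left, mul_neg, integral_neg] at h
    linarith

theorem aux_n2 (d : ℕ) (hd : 1 ≤ d) (μ : EuclideanSpace ℝ (Fin d)) (ρ : ℝ) (hρ : 0 < ρ) :
    Integrable (fun x => ‖x‖^2) (gaussSph d μ ρ) ∧
    ∫ x, ‖x‖^2 ∂(gaussSph d μ ρ) = ‖μ‖^2 + d * ρ^2 := by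
  have := aux_isProb d hd μ ρ hρ
  obtain ⟨a1, a2⟩ := aux_m2 d hd μ ρ hρ
  obtain ⟨b1, b2⟩ := aux_cross d hd μ ρ hρ
  have e : (fun x : EuclideanSpace ℝ (Fin d) => ‖x‖^2) = fun x => (‖x - μ‖^2 + 2 * inner ℝ (x - μ) μ) + ‖μ‖^2 := by
    ext x
    rw [← norm_add_sq_real, sub_add_cancel]
  rw [e]
  refine ⟨(a1.add (b1.const_mul 2)).add (integrable_const _), ?_⟩
  have ab : Integrable (fun x => ‖x - μ‖^2 + 2 * inner ℝ (x - μ) μ) (gaussSph d μ ρ) := a1.add (b1.const_mul 2)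
  rw [integral_add ab (integrable_const _), integral_add a1 (b1.const_mul 2), integral_const_mul,
    a2, b2]
  simp; ring

theorem aux_logint (d : ℕ) (hd : 1 ≤ d) (μ : EuclideanSpace ℝ (Fin d)) (ρ : ℝ) (hρ : 0 < ρ) :
    Integrable (fun x => Real.log ‖x‖) (gaussSph d μ ρ) := by
  have := aux_isProb d hd μ ρ hρ
  have h1 : Integrable (fun x : EuclideanSpace ℝ (Fin d) => (Set.Iic (1:ℝ)).indicator (fun y => |Real.log y|) ‖x‖) (gaussSph d μ ρ) := by
    rw [(aux_gint d μ ρ _).1]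
    refine (aux_log d hd).bdd_mul (c := (2 * Real.pi * ρ^2) ^ (-(d:ℝ)/2)) (by fun_prop) ?_
    refine Filter.Eventually.of_forall fun x => ?_
    rw [norm_of_nonneg (by positivity)]
    refine mul_le_of_le_one_right (by positivity) (exp_le_one_iff.2 ?_)
    rw [neg_div]
    have : 0 ≤ ‖x - μ‖^2 / (2 * ρ^2) := by positivity
    linarith
  refine Integrable.mono' (h1.add (aux_n2 d hd μ ρ hρ).1) (Measurable.aestronglyMeasurable (by fun_prop)) ?_
  refine Filter.Eventually.of_forall fun x => ?_
  simp only [Pi.add_apply, Set.indicator, Set.mem_Iic, norm_eq_abs]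
  split_ifs with h
  · have := sq_nonneg ‖x‖
    linarith
  · push Not at h
    rw [abs_of_nonneg (log_nonneg h.le)]
    have := log_le_sub_one_of_pos (show 0 < ‖x‖ by linarith)
    nlinarith

theorem aux_llr (d : ℕ) (hd : 1 ≤ d) (μ : EuclideanSpace ℝ (Fin d)) (ρ : ℝ) (hρ : 0 < ρ) :
    gaussSph d μ ρ ≪ genCauchy d ∧ llr (gaussSph d μ ρ) (genCauchy d) =ᵐ[gaussSph d μ ρ]
      fun x => Real.log ((2 * Real.pi * ρ^2) ^ (-(d:ℝ)/2)) - ‖x - μ‖^2 / (2 * ρ^2) +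
        Real.log (Real.pi * sphereArea d / 2) + ((d:ℝ) - 1) * Real.log ‖x‖ + Real.log (1 + ‖x‖^2) := by
  have : Nonempty (Fin d) := ⟨⟨0, hd⟩⟩
  have hd1 : (1:ℝ) ≤ d := by exact_mod_cast hd
  have hd0 : (0:ℝ) < d := by linarith
  have hS : 0 < sphereArea d := by
    have hG : 0 < Gamma ((d:ℝ)/2 + 1) := Gamma_pos_of_pos (by positivity)
    unfold sphereArea; positivity
  have hmu : Measurable (fun x : EuclideanSpace ℝ (Fin d) =>
      ENNReal.ofReal (2 / (Real.pi * sphereArea d * (‖x‖^(d-1) + ‖x‖^(d+1))))) := by fun_prop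
  have hmq : Measurable (fun x : EuclideanSpace ℝ (Fin d) => 
    ENNReal.ofReal ((2 * Real.pi * ρ^2) ^ (-(d:ℝ)/2) * Real.exp (-‖x - μ‖^2 / (2 * ρ^2)))) := by
    fun_prop
  have hne : ∀ᵐ x : EuclideanSpace ℝ (Fin d), x ≠ 0 := by
    rw [ae_iff]; simp
  have hu0 : ∀ᵐ x : EuclideanSpace ℝ (Fin d),
      ENNReal.ofReal (2 / (Real.pi * sphereArea d * (‖x‖^(d-1) + ‖x‖^(d+1)))) ≠ 0 := by
    filter_upwards [hne] with x hx
    have : 0 < ‖x‖ := norm_pos_iff.2 hx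
    simp only [ne_eq, ENNReal.ofReal_eq_zero, not_le]
    positivity
  have hQv : gaussSph d μ ρ ≪ volume := withDensity_absolutelyContinuous _ _
  have hVU : volume ≪ genCauchy d := withDensity_absolutelyContinuous' hmu.aemeasurable hu0
  refine ⟨hQv.trans hVU, ?_⟩
  have := aux_isProb d hd μ ρ hρ
  have r1 := Measure.rnDeriv_withDensity_right (gaussSph d μ ρ) volume hmu.aemeasurable hu0 (by simp)
  have r2 := Measure.rnDeriv_withDensity (volume : Measure (EuclideanSpace ℝ (Fin d))) hmq
  filter_upwards [hQv r1, hQv r2, hQv hne] with x h1 h2 hx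
  have hx0 : 0 < ‖x‖ := norm_pos_iff.2 hx
  rw [llr]
  change (Measure.rnDeriv (gaussSph d μ ρ) (genCauchy d)) x = _ at h1
  change (Measure.rnDeriv (gaussSph d μ ρ) volume) x = _ at h2
  rw [h1, h2, ENNReal.toReal_mul, ENNReal.toReal_inv, ENNReal.toReal_ofReal (by positivity), ENNReal.toReal_ofReal (by positivity)]
  have e : ‖x‖^(d-1) + ‖x‖^(d+1) = ‖x‖^(d-1) * (1 + ‖x‖^2) := by
    rw [mul_add, ← pow_add, mul_one]; congr 2; omega
  rw [e, inv_div, show Real.pi * sphereArea d * (‖x‖^(d-1) * (1 + ‖x‖^2)) / 2 = 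
    (Real.pi * sphereArea d / 2) * (‖x‖^(d-1) * (1 + ‖x‖^2)) by ring,
    log_mul (by positivity) (by positivity), log_mul (by positivity) (by positivity), log_mul (by positivity) (by positivity),
    log_mul (by positivity) (by positivity), log_exp, log_pow]
  push_cast [Nat.cast_sub hd]
  ring

/-- **Gaussian--generalized-Cauchy KL divergence, second bound.**
`D_KL(N_d(μ,ρ²I)‖𝒰_d) ≤ |μ|²/(2ρ²) + log((1+2dρ²)/ρ)`. -/
theorem kl_gauss_genCauchy_second (d : ℕ) (hd : 1 ≤ d)
    (μ : EuclideanSpace ℝ (Fin d)) (ρ : ℝ) (hρ : 0 < ρ) :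
    klDiv (gaussSph d μ ρ) (genCauchy d) ≤
      ((‖μ‖^2 / (2 * ρ^2) + Real.log ((1 + 2 * d * ρ^2) / ρ) : ℝ) : EReal) := by
  have := aux_isProb d hd μ ρ hρ
  have hd1 : (1:ℝ) ≤ d := by exact_mod_cast hd
  have hd0 : (0:ℝ) < d := by linarith
  obtain ⟨hac, hllr⟩ := aux_llr d hd μ ρ hρ
  obtain ⟨a1, a2⟩ := aux_m2 d hd μ ρ hρ
  obtain ⟨b1, b2⟩ := aux_n2 d hd μ ρ hρ
  have hlog := aux_logint d hd μ ρ hρ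
  have hlog2 : Integrable (fun x => Real.log (1 + ‖x‖^2)) (gaussSph d μ ρ) := by
    refine Integrable.mono' b1 (Measurable.aestronglyMeasurable (by fun_prop)) ?_
    refine Filter.Eventually.of_forall fun x => ?_
    have h := sq_nonneg ‖x‖
    rw [norm_eq_abs, abs_of_nonneg (log_nonneg (by linarith))]
    have := log_le_sub_one_of_pos (show 0 < 1 + ‖x‖^2 by linarith)
    linarith
  obtain ⟨A, hA⟩ : ∃ A, A = ‖μ‖^2 + d * ρ^2 := ⟨_, rfl⟩
  have hA0 : 0 < A := by rw [hA]; positivity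
  rw [← hA] at b2
  have t1 : ∫ x, Real.log ‖x‖ ∂(gaussSph d μ ρ) ≤ Real.log A / 2 := by
    have hne : ∀ᵐ x ∂(gaussSph d μ ρ), x ≠ 0 := by
      have : Nonempty (Fin d) := ⟨⟨0, hd⟩⟩
      have h : ∀ᵐ x : EuclideanSpace ℝ (Fin d), x ≠ 0 := by
        rw [ae_iff]; simp
      exact (withDensity_absolutelyContinuous _ _ : gaussSph d μ ρ ≪ volume) h
    have hi : Integrable (fun x : EuclideanSpace ℝ (Fin d) => 1 / (2*A) * ‖x‖^2 + (Real.log A - 1) / 2) (gaussSph d μ ρ) :=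
      (b1.const_mul _).add (integrable_const _)
    calc _ ≤ ∫ x, (1 / (2*A) * ‖x‖^2 + (Real.log A - 1) / 2) ∂(gaussSph d μ ρ) := by
          refine integral_mono_ae hlog hi ?_
          filter_upwards [hne] with x hx
          have hx0 : 0 < ‖x‖ := norm_pos_iff.2 hx
          have h := log_le_sub_one_of_pos (show 0 < ‖x‖^2 / A by positivity)
          rw [log_div (by positivity) (by positivity), log_pow] at h
          push_cast at h
          have e : 1 / (2*A) * ‖x‖^2 = ‖x‖^2 / A / 2 := by field_simp
          rw [e]; linarith
      _ = _ := by
          rw [integral_add (b1.const_mul _) (integrable_const _), integral_const_mul, b2]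
          simp; field_simp; ring
  have t2 : ∫ x, Real.log (1 + ‖x‖^2) ∂(gaussSph d μ ρ) ≤ Real.log (1 + A) := by
    have hi : Integrable (fun x : EuclideanSpace ℝ (Fin d) => 1 / (1+A) * ‖x‖^2 + (Real.log (1+A) - A / (1+A))) (gaussSph d μ ρ) :=
      (b1.const_mul _).add (integrable_const _)
    calc _ ≤ ∫ x, (1 / (1+A) * ‖x‖^2 + (Real.log (1+A) - A / (1+A))) ∂(gaussSph d μ ρ) := by
          refine integral_mono hlog2 hi fun x => ?_
          have h := log_le_sub_one_of_pos (show 0 < (1 + ‖x‖^2) / (1 + A) by positivity)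
          rw [log_div (by positivity) (by positivity)] at h
          have e : (1 + ‖x‖^2) / (1 + A) - 1 = 1 / (1+A) * ‖x‖^2 - A / (1+A) := by field_simp; ring
          rw [e] at h
          dsimp only
          linarith
      _ = _ := by
          rw [integral_add (b1.const_mul _) (integrable_const _), integral_const_mul, b2]
          simp; field_simp; ring
  have i0 := integrable_const (μ := gaussSph d μ ρ) (Real.log ((2 * Real.pi * ρ^2) ^ (-(d:ℝ)/2)))
  have i1 : Integrable (fun x : EuclideanSpace ℝ (Fin d) => Real.log ((2 * Real.pi * ρ^2) ^ (-(d:ℝ)/2)) - ‖x - μ‖^2 / (2 * ρ^2)) (gaussSph d μ ρ) := i0.sub (a1.div_const (2 * ρ^2))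
  have i2 : Integrable (fun x : EuclideanSpace ℝ (Fin d) => Real.log ((2 * Real.pi * ρ^2) ^ (-(d:ℝ)/2)) - ‖x - μ‖^2 / (2 * ρ^2) + Real.log (Real.pi * sphereArea d / 2)) (gaussSph d μ ρ) := i1.add (integrable_const (μ := gaussSph d μ ρ) (Real.log (Real.pi * sphereArea d / 2)))
  have i3 : Integrable (fun x : EuclideanSpace ℝ (Fin d) => Real.log ((2 * Real.pi * ρ^2) ^ (-(d:ℝ)/2)) - ‖x - μ‖^2 / (2 * ρ^2) + Real.log (Real.pi * sphereArea d / 2) + ((d:ℝ) - 1) * Real.log ‖x‖) (gaussSph d μ ρ) := i2.add (hlog.const_mul ((d:ℝ) - 1))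
  have i4 := i3.add hlog2
  have hint : Integrable (llr (gaussSph d μ ρ) (genCauchy d)) (gaussSph d μ ρ) := i4.congr hllr.symm
  rw [klDiv, if_pos ⟨hac, hint⟩, EReal.coe_le_coe_iff, integral_congr_ae hllr]
  have v : ∫ x, (Real.log ((2 * Real.pi * ρ^2) ^ (-(d:ℝ)/2)) - ‖x - μ‖^2 / (2 * ρ^2) +
        Real.log (Real.pi * sphereArea d / 2) + ((d:ℝ) - 1) * Real.log ‖x‖ + Real.log (1 + ‖x‖^2)) ∂(gaussSph d μ ρ)
      = Real.log ((2 * Real.pi * ρ^2) ^ (-(d:ℝ)/2)) - d / 2 + Real.log (Real.pi * sphereArea d / 2) + 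
        ((d:ℝ) - 1) * ∫ x, Real.log ‖x‖ ∂(gaussSph d μ ρ) + ∫ x, Real.log (1 + ‖x‖^2) ∂(gaussSph d μ ρ) := by
    rw [integral_add i3 hlog2, integral_add i2 (hlog.const_mul _), integral_add i1 (integrable_const _),
      integral_sub i0 (a1.div_const _), integral_div, a2, integral_const_mul, integral_const, integral_const]
    simp only [probReal_univ, one_smul]
    congr 4
    field_simp
  rw [v]
  have c := aux_const d hd (‖μ‖^2) ρ (by positivity) hρ
  rw [← hA] at c
  unfold sphereArea
  have := mul_le_mul_of_nonneg_left t1 (show 0 ≤ (d:ℝ) - 1 by linarith)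
  linarith
end

section
/- For every real a > 0 and every b ≥ 0, ∫₀^a sqrt( log( s + 1/s ) + b ) ds ≤ a · sqrt( log( a + 1/a ) + 1 + b ). -/
open MeasureTheory Real

lemma aux_arctan_le (a : ℝ) (ha : 0 < a) : Real.arctan a ≤ a := by
  have h := Real.le_tan (Real.arctan_nonneg.2 ha.le) (Real.arctan_lt_pi_div_two a)
  rwa [Real.tan_arctan] at h

lemma aux_ii (a : ℝ) :
    IntervalIntegrable (fun s : ℝ => Real.log (s ^ 2 + 1) - Real.log s) volume 0 a := by
  refine IntervalIntegrable.sub (Continuous.intervalIntegrable ?_ _ _)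
    intervalIntegral.intervalIntegrable_log'
  exact Continuous.log (by fun_prop) (fun x => by positivity)

lemma aux_int (a : ℝ) (ha : 0 < a) :
    ∫ s in (0:ℝ)..a, (Real.log (s ^ 2 + 1) - Real.log s) =
      a * Real.log (a ^ 2 + 1) - a * Real.log a - a + 2 * Real.arctan a := by
  have := intervalIntegral.integral_eq_sub_of_hasDerivAt_of_le (a := 0) (b := a)
    (f := fun s : ℝ => s * Real.log (s ^ 2 + 1) - s * Real.log s - s + 2 * Real.arctan s)
    (f' := fun s : ℝ => Real.log (s ^ 2 + 1) - Real.log s) ha.le ?_ ?_ (aux_ii a)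
  · rw [this]; simp
  · apply Continuous.continuousOn
    have h1 : Continuous fun s : ℝ => Real.log (s ^ 2 + 1) :=
      Continuous.log (by fun_prop) (fun x => by positivity)
    have h2 := Real.continuous_mul_log
    have h3 := Real.continuous_arctan
    fun_prop
  · intro x hx
    have hx0 : x ≠ 0 := hx.1.ne'
    have hp : x ^ 2 + 1 ≠ 0 := by positivity
    have h1 : HasDerivAt (fun s : ℝ => Real.log (s ^ 2 + 1)) ((2 * x) / (x ^ 2 + 1)) x := by
      have h := (((hasDerivAt_id x).pow 2).add_const (1:ℝ)).log (by simpa using hp)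
      simpa using h
    have h2 := ((((hasDerivAt_id x).mul h1).sub (Real.hasDerivAt_mul_log hx0)).sub
      (hasDerivAt_id x)).add ((Real.hasDerivAt_arctan x).const_mul 2)
    refine h2.congr_deriv ?_
    have hp' : 1 + x ^ 2 ≠ 0 := by positivity
    simp only [id]
    field_simp
    ring

lemma aux_log_s12 (s : ℝ) (hs : 0 < s) :
    Real.log (s + 1/s) = Real.log (s ^ 2 + 1) - Real.log s := by
  rw [← Real.log_div (by positivity) hs.ne']
  congr 1
  field_simp

lemma aux_nonneg (s : ℝ) (hs : 0 < s) : 0 ≤ Real.log (s + 1/s) := by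
  apply Real.log_nonneg
  rw [← sub_nonneg]
  have : s + 1/s - 1 = ((s - 1/2) ^ 2 + 3/4) / s := by field_simp; ring
  rw [this]; positivity

/-- For every `a > 0` and `b ≥ 0`,
`∫₀^a √(log(s + 1/s) + b) ds ≤ a √(log(a + 1/a) + 1 + b)`. -/
theorem integral_sqrt_log_self_add_inv_le (a b : ℝ) (ha : 0 < a) (hb : 0 ≤ b) :
    ∫ s in Set.Ioo (0:ℝ) a, Real.sqrt (Real.log (s + 1/s) + b) ≤
      a * Real.sqrt (Real.log (a + 1/a) + 1 + b) := by
  have hL := aux_nonneg a ha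
  have hcpos : 0 < Real.sqrt (Real.log (a + 1/a) + 1 + b) := Real.sqrt_pos.2 (by linarith)
  have hc2 := Real.sq_sqrt (show 0 ≤ Real.log (a + 1/a) + 1 + b by linarith)
  set c := Real.sqrt (Real.log (a + 1/a) + 1 + b) with hc
  have hii : IntervalIntegrable (fun s : ℝ =>
      ((Real.log (s ^ 2 + 1) - Real.log s) + (b + c ^ 2)) / (2 * c)) volume 0 a :=
    ((aux_ii a).add intervalIntegrable_const).div_const _
  have hle : ∫ s in Set.Ioo (0:ℝ) a, Real.sqrt (Real.log (s + 1/s) + b) ≤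
      ∫ s in Set.Ioo (0:ℝ) a,
        ((Real.log (s ^ 2 + 1) - Real.log s) + (b + c ^ 2)) / (2 * c) := by
    apply integral_mono_of_nonneg
    · exact Filter.Eventually.of_forall fun s => Real.sqrt_nonneg _
    · exact ((intervalIntegrable_iff_integrableOn_Ioo_of_le ha.le).1 hii)
    · filter_upwards [ae_restrict_mem measurableSet_Ioo] with s hs
      have h0 := aux_nonneg s hs.1
      have h2 := Real.sq_sqrt (show 0 ≤ Real.log (s + 1/s) + b by linarith)
      rw [← aux_log_s12 s hs.1, le_div_iff₀ (by positivity)]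
      nlinarith [sq_nonneg (Real.sqrt (Real.log (s + 1/s) + b) - c)]
  refine hle.trans ?_
  rw [← integral_Ioc_eq_integral_Ioo, ← intervalIntegral.integral_of_le ha.le,
    intervalIntegral.integral_div, intervalIntegral.integral_add (aux_ii a)
      intervalIntegrable_const, aux_int a ha, intervalIntegral.integral_const,
    div_le_iff₀ (by positivity)]
  have h1 := aux_arctan_le a ha
  have h2 : a * c * (2 * c) = a * c ^ 2 + a * (Real.log (a ^ 2 + 1) - Real.log a + 1 + b) := by
    rw [← aux_log_s12 a ha, ← hc2]; ring
  rw [h2]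
  simp only [smul_eq_mul, sub_zero]
  nlinarith
end

section
/- Let d ≥ 1, let Λ be a symmetric positive semidefinite d × d real matrix, let Σ be a symmetric positive definite d × d real matrix, and let v ∈ ℝ^d. Then vᵀ Λ v ≤ trace(ΛΣ) · ( vᵀ Σ^{−1} v ). -/
open Matrix

theorem aux_frob {d : ℕ} (M : Matrix (Fin d) (Fin d) ℝ) (w : Fin d → ℝ) :
    (M *ᵥ w) ⬝ᵥ (M *ᵥ w) ≤ (M * Mᵀ).trace * (w ⬝ᵥ w) := by
  simp only [Matrix.trace, Matrix.diag, Matrix.mul_apply, Matrix.transpose_apply, dotProduct,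
    Matrix.mulVec, Finset.sum_mul]
  refine Finset.sum_le_sum fun i _ => ?_
  have h := Finset.sum_mul_sq_le_sq_mul_sq Finset.univ (M i) w
  simp only [sq] at h
  simpa only [← Finset.sum_mul] using h

open scoped MatrixOrder in
theorem aux_fac {d : ℕ} (L : Matrix (Fin d) (Fin d) ℝ) (hL : L.PosSemidef) :
    ∃ C : Matrix (Fin d) (Fin d) ℝ, L = Cᵀ * C := by
  obtain ⟨C, hC⟩ := CStarAlgebra.nonneg_iff_eq_star_mul_self.mp hL.nonneg
  exact ⟨C, by rw [hC, Matrix.star_eq_conjTranspose, Matrix.conjTranspose_eq_transpose_of_trivial]⟩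

/-- For a symmetric positive semidefinite `Λ`, a symmetric positive definite `S`, and
any vector `v`, one has `vᵀ Λ v ≤ trace(ΛS) · (vᵀ S⁻¹ v)`. -/
theorem quad_form_le_trace_mul_quad_form
    (d : ℕ) (hd : 1 ≤ d)
    (L S : Matrix (Fin d) (Fin d) ℝ)
    (hL : L.PosSemidef) (hS : S.PosDef) (v : Fin d → ℝ) :
    v ⬝ᵥ L.mulVec v ≤ (L * S).trace * (v ⬝ᵥ S⁻¹.mulVec v) := by
  obtain ⟨C, rfl⟩ := aux_fac L hL
  obtain ⟨B, rfl⟩ := aux_fac S hS.posSemidef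
  have hB : IsUnit Bᵀ.det := by
    have := hS.det_pos.ne'
    rw [Matrix.det_mul] at this
    exact isUnit_iff_ne_zero.mpr (left_ne_zero_of_mul this)
  have hv : v = Bᵀ *ᵥ (Bᵀ⁻¹ *ᵥ v) := by
    rw [Matrix.mulVec_mulVec, Matrix.mul_nonsing_inv _ hB, Matrix.one_mulVec]
  have key : ∀ (A : Matrix (Fin d) (Fin d) ℝ) (x : Fin d → ℝ),
      x ⬝ᵥ (Aᵀ * A) *ᵥ x = (A *ᵥ x) ⬝ᵥ (A *ᵥ x) := by
    intro A x
    rw [← Matrix.mulVec_mulVec, Matrix.dotProduct_mulVec, Matrix.vecMul_transpose]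
  have hi : (Bᵀ * B)⁻¹ = (Bᵀ⁻¹)ᵀ * Bᵀ⁻¹ := by
    rw [Matrix.mul_inv_rev, Matrix.transpose_nonsing_inv, Matrix.transpose_transpose]
  have ht : (Cᵀ * C * (Bᵀ * B)).trace = ((C * Bᵀ) * (C * Bᵀ)ᵀ).trace := by
    rw [Matrix.transpose_mul, Matrix.transpose_transpose, Matrix.mul_assoc, Matrix.trace_mul_comm]
    simp only [Matrix.mul_assoc]
  have h := aux_frob (C * Bᵀ) (Bᵀ⁻¹ *ᵥ v)
  rw [← Matrix.mulVec_mulVec, ← hv] at h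
  rw [hi, key, key, ht]
  exact h
end

section
/- (KL decomposition for the transportation posterior, finite-dimensional case.) Let d ≥ 1 and let F be a measurable subset of ℝ^d. Let Q and U be probability measures on F, let μ : F → ℝ^d be measurable, let Σ : F → (symmetric positive definite d×d matrices) be measurable, and fix ᾱ ∈ ℝ and σ > 0. Define the probability measure Q̃ on ℝ × F × ℝ^d by Q̃(dα df dh) = N(ᾱ, σ²)(dα) Q(df) N(μ(f), e^{α}Σ(f))(dh), and the probability measure Ũ on ℝ × F × ℝ^d by Ũ(dα df dh) = 𝒰₁(σ)(dα) U(df) N(0, e^{α}Σ(f))(dh), where 𝒰₁(σ) is the Cauchy distribution with density α ↦ 1/(σπ(1+α²/σ²)). Then D_KL(Q̃‖Ũ) ≤ D_KL(Q‖U) + log( 2 + ᾱ²/σ² ) + ( ∫_F μ(f)ᵀ Σ(f)^{−1} μ(f) dQ(f) ) / ( 2 e^{ᾱ − σ²/2} ), where the last integral is assumed finite. -/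
open MeasureTheory Real ProbabilityTheory Matrix
open scoped Classical

/-- The multivariate Gaussian measure on `ℝ^d` with mean `μ` and (positive definite)
covariance matrix `C`, given by its Lebesgue density
`h ↦ ((2π)^d det C)^{−1/2} exp(−(h−μ)ᵀC⁻¹(h−μ)/2)`. -/
noncomputable def gaussMV (d : ℕ) (μ : Fin d → ℝ) (C : Matrix (Fin d) (Fin d) ℝ) :
    Measure (Fin d → ℝ) :=
  volume.withDensity fun h =>
    ENNReal.ofReal (((2 * Real.pi)^d * C.det) ^ (-(1:ℝ)/2) *
      Real.exp (-((h - μ) ⬝ᵥ C⁻¹.mulVec (h - μ)) / 2))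


lemma aux_pi_gauss (d : ℕ) :
    Measure.pi (fun _ : Fin d => gaussianReal 0 1) =
      volume.withDensity fun z : Fin d → ℝ =>
        ENNReal.ofReal (∏ i, gaussianPDFReal 0 1 (z i)) := by
  refine Measure.pi_eq fun s hs => ?_
  rw [withDensity_apply _ (MeasurableSet.univ_pi hs),
    ← lintegral_indicator (MeasurableSet.univ_pi hs)]
  have h1 : ∀ i, gaussianReal 0 1 (s i) =
      ENNReal.ofReal (∫ x, (s i).indicator (gaussianPDFReal 0 1) x) := by
    intro i
    rw [gaussianReal_apply_eq_integral _ one_ne_zero, integral_indicator (hs i)]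
  simp_rw [h1]
  have hnn : ∀ i x, 0 ≤ (s i).indicator (gaussianPDFReal 0 1) x := fun i x =>
    Set.indicator_nonneg (fun _ _ => gaussianPDFReal_nonneg _ _ _) x
  rw [← ENNReal.ofReal_prod_of_nonneg (fun i _ => integral_nonneg (hnn i)),
    ← integral_fintype_prod_volume_eq_prod
      (f := fun i x => (s i).indicator (gaussianPDFReal 0 1) x),
    ofReal_integral_eq_lintegral_ofReal]
  · refine lintegral_congr fun z => ?_
    by_cases hz : z ∈ Set.univ.pi s
    · rw [Set.indicator_of_mem hz]
      congr 1
      refine Finset.prod_congr rfl fun i _ => ?_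
      rw [Set.indicator_of_mem (hz i (Set.mem_univ i))]
    · rw [Set.indicator_of_notMem hz]
      simp only [Set.mem_pi, Set.mem_univ, true_imp_iff, not_forall] at hz
      obtain ⟨i, hi⟩ := hz
      rw [Finset.prod_eq_zero (Finset.mem_univ i) (Set.indicator_of_notMem hi _)]
      simp
  · exact Integrable.fintype_prod
      (f := fun i x => (s i).indicator (gaussianPDFReal 0 1) x)
      (fun i => (integrable_gaussianPDFReal 0 1).indicator (hs i))
  · exact Filter.Eventually.of_forall fun z => Finset.prod_nonneg fun i _ => hnn i _

open scoped MatrixOrder Matrix.Norms.L2Operator in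
lemma aux_factor {d : ℕ} {C : Matrix (Fin d) (Fin d) ℝ} (hC : C.PosDef) :
    ∃ A : Matrix (Fin d) (Fin d) ℝ, A.det ≠ 0 ∧ C = A * Aᵀ := by
  obtain ⟨B, hB⟩ := CStarAlgebra.nonneg_iff_eq_star_mul_self.mp hC.posSemidef.nonneg
  have hB' : C = Bᵀ * B := by
    rw [hB]; rfl
  refine ⟨Bᵀ, ?_, by simpa using hB'⟩
  intro h
  have := hC.det_pos
  rw [hB', det_mul, h] at this
  simp at this

lemma aux_quad {d : ℕ} {A : Matrix (Fin d) (Fin d) ℝ} (hA : A.det ≠ 0) (u z : Fin d → ℝ) :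
    (A *ᵥ u) ⬝ᵥ ((A * Aᵀ)⁻¹ *ᵥ (A *ᵥ z)) = u ⬝ᵥ z := by
  have hu : IsUnit A.det := isUnit_iff_ne_zero.mpr hA
  have hu' : IsUnit Aᵀ.det := by rwa [det_transpose]
  rw [Matrix.mul_inv_rev, mulVec_mulVec, Matrix.mul_assoc, nonsing_inv_mul _ hu, Matrix.mul_one,
    dotProduct_comm, dotProduct_mulVec, ← mulVec_transpose, mulVec_mulVec, mul_nonsing_inv _ hu',
    one_mulVec, dotProduct_comm]

lemma aux_pdf (d : ℕ) (z : Fin d → ℝ) :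
    ∏ i, gaussianPDFReal 0 1 (z i) =
      ((2 * Real.pi)^d) ^ (-(1:ℝ)/2) * Real.exp (-(z ⬝ᵥ z) / 2) := by
  simp only [gaussianPDFReal, NNReal.coe_one, mul_one, sub_zero]
  rw [Finset.prod_mul_distrib, ← Real.exp_sum]
  congr 1
  · rw [Finset.prod_const, Finset.card_univ, Fintype.card_fin, neg_div, Real.rpow_neg (by positivity),
      ← Real.sqrt_eq_rpow, inv_pow]
    congr 1
    rw [Real.sqrt_eq_rpow, Real.sqrt_eq_rpow, ← Real.rpow_natCast, ← Real.rpow_natCast,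
      ← Real.rpow_mul (by positivity), ← Real.rpow_mul (by positivity), mul_comm (1 / 2 : ℝ)]
  · congr 1
    rw [dotProduct, ← Finset.sum_neg_distrib, Finset.sum_div]
    refine Finset.sum_congr rfl fun i _ => by ring

lemma aux_gaussMV_map {d : ℕ} (m : Fin d → ℝ) {A : Matrix (Fin d) (Fin d) ℝ} (hA : A.det ≠ 0) :
    gaussMV d m (A * Aᵀ) =
      (Measure.pi (fun _ : Fin d => gaussianReal 0 1)).map (fun z => m + A *ᵥ z) := by
  have hmm : Measurable fun z : Fin d → ℝ => m + A *ᵥ z := by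
    have : Continuous fun z : Fin d → ℝ => m + A *ᵥ z := by fun_prop
    exact this.measurable
  have hml : Measurable fun z : Fin d → ℝ => A *ᵥ z := by
    have : Continuous fun z : Fin d → ℝ => A *ᵥ z := by fun_prop
    exact this.measurable
  have hvol : ∀ φ : (Fin d → ℝ) → ENNReal, Measurable φ →
      ∫⁻ x, φ x = ENNReal.ofReal |A.det| * ∫⁻ z, φ (A *ᵥ z) := by
    intro φ hφ
    have h := Real.map_matrix_volume_pi_eq_smul_volume_pi hA
    have h2 : ∫⁻ z, φ (A *ᵥ z) = ENNReal.ofReal |A.det⁻¹| * ∫⁻ x, φ x := by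
      have h3 := lintegral_map (μ := (volume : Measure (Fin d → ℝ))) hφ hml
      rw [← h3]
      have : Measure.map (fun z => A *ᵥ z) (volume : Measure (Fin d → ℝ)) = _ := h
      rw [this, lintegral_smul_measure]; rfl
    rw [h2, ← mul_assoc, ← ENNReal.ofReal_mul (abs_nonneg _), ← abs_mul, mul_inv_cancel₀ hA]
    simp
  rw [aux_pi_gauss]
  ext s hs
  rw [gaussMV, withDensity_apply _ hs, Measure.map_apply hmm hs, withDensity_apply _ (hmm hs),
    ← lintegral_indicator hs, ← lintegral_indicator (hmm hs)]
  have hcont : Continuous fun x : Fin d → ℝ => ENNReal.ofReal (((2 * Real.pi)^d * (A * Aᵀ).det) ^ (-(1:ℝ)/2) *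
      Real.exp (-((x) ⬝ᵥ (A * Aᵀ)⁻¹.mulVec (x)) / 2)) := by
    refine ENNReal.continuous_ofReal.comp ?_
    fun_prop
  rw [← lintegral_add_left_eq_self _ m, hvol, ← lintegral_const_mul]
  · refine lintegral_congr fun z => ?_
    simp only [Set.indicator_apply, Set.mem_preimage]
    split_ifs
    · rw [add_sub_cancel_left, aux_quad hA, ← ENNReal.ofReal_mul (abs_nonneg _), aux_pdf]
      congr 1
      rw [det_mul, det_transpose, Real.mul_rpow (by positivity) (mul_self_nonneg _),
        neg_div, Real.rpow_neg (mul_self_nonneg _), ← Real.sqrt_eq_rpow, Real.sqrt_mul_self_eq_abs]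
      have : |A.det| ≠ 0 := abs_ne_zero.mpr hA
      field_simp
    · simp
  · refine Measurable.comp (g := s.indicator _) (Measurable.indicator ?_ hs) hmm
    exact hcont.measurable.comp (measurable_id.sub_const m)
  · refine Measurable.comp (g := s.indicator _) (Measurable.indicator ?_ hs) (by fun_prop)
    exact hcont.measurable.comp (measurable_id.sub_const m)

noncomputable def auxC {d : ℕ} (m : Fin d → ℝ) (C : Matrix (Fin d) (Fin d) ℝ) (h : Fin d → ℝ) : ℝ :=
  m ⬝ᵥ (C⁻¹ *ᵥ (h - m)) + m ⬝ᵥ (C⁻¹ *ᵥ m) / 2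

lemma aux_cont_auxC {d : ℕ} (m : Fin d → ℝ) (C : Matrix (Fin d) (Fin d) ℝ) :
    Continuous (auxC m C) := by
  unfold auxC
  fun_prop

lemma aux_prob_s16 {d : ℕ} (m : Fin d → ℝ) {C : Matrix (Fin d) (Fin d) ℝ} (hC : C.PosDef) :
    IsProbabilityMeasure (gaussMV d m C) := by
  obtain ⟨A, hA, rfl⟩ := aux_factor hC
  rw [aux_gaussMV_map m hA]
  refine Measure.isProbabilityMeasure_map ?_
  have : Continuous fun z : Fin d → ℝ => m + A *ᵥ z := by fun_prop
  exact this.aemeasurable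

lemma aux_fiber {d : ℕ} (m : Fin d → ℝ) {C : Matrix (Fin d) (Fin d) ℝ} (hC : C.PosDef) :
    Integrable (auxC m C) (gaussMV d m C) ∧
    ∫ h, auxC m C h ∂(gaussMV d m C) = m ⬝ᵥ (C⁻¹ *ᵥ m) / 2 ∧
    ∫ h, ‖auxC m C h‖ ∂(gaussMV d m C) ≤ m ⬝ᵥ (C⁻¹ *ᵥ m) + (d : ℝ) / 2 := by
  obtain ⟨A, hA, rfl⟩ := aux_factor hC
  have hmm : Continuous fun z : Fin d → ℝ => m + A *ᵥ z := by fun_prop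
  rw [aux_gaussMV_map m hA]
  obtain ⟨w, hw⟩ : ∃ w, m = A *ᵥ w := by
    refine ⟨A⁻¹ *ᵥ m, ?_⟩
    rw [mulVec_mulVec, mul_nonsing_inv _ (isUnit_iff_ne_zero.mpr hA), one_mulVec]
  have hq : m ⬝ᵥ ((A * Aᵀ)⁻¹ *ᵥ m) = w ⬝ᵥ w := by rw [hw, aux_quad hA]
  have hc : ∀ z, auxC m (A * Aᵀ) (m + A *ᵥ z) = w ⬝ᵥ z + w ⬝ᵥ w / 2 := by
    intro z
    rw [auxC, hq, add_sub_cancel_left]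
    conv_lhs => rw [hw, aux_quad hA]
  set P := Measure.pi (fun _ : Fin d => gaussianReal 0 1) with hP
  have hcm := aux_cont_auxC m (A * Aᵀ)
  have hi1 : ∀ i, Integrable (fun z : Fin d → ℝ => z i) P := fun i =>
    integrable_comp_eval (μ := fun _ : Fin d => gaussianReal 0 1) (i := i) (f := fun x : ℝ => x)
      ((memLp_id_gaussianReal 1).integrable le_rfl)
  have hsqR : Integrable (fun x : ℝ => x ^ 2) (gaussianReal 0 1) :=
    (memLp_id_gaussianReal 2).integrable_sq
  have hi2 : ∀ i, Integrable (fun z : Fin d → ℝ => (z i) ^ 2) P := fun i =>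
    integrable_comp_eval (μ := fun _ : Fin d => gaussianReal 0 1) (i := i)
      (f := fun x : ℝ => x ^ 2) hsqR
  have hI1 : ∀ i, ∫ z : Fin d → ℝ, z i ∂P = 0 := fun i => by
    rw [hP, integral_comp_eval (μ := fun _ : Fin d => gaussianReal 0 1) (i := i)
      (f := fun x : ℝ => x) (by fun_prop), integral_id_gaussianReal]
  have hI2 : ∀ i, ∫ z : Fin d → ℝ, (z i) ^ 2 ∂P = 1 := fun i => by
    rw [hP, integral_comp_eval (μ := fun _ : Fin d => gaussianReal 0 1) (i := i)
      (f := fun x : ℝ => x ^ 2) (by fun_prop)]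
    have := variance_fun_id_gaussianReal (μ := 0) (v := 1)
    rw [variance_of_integral_eq_zero (by fun_prop) integral_id_gaussianReal] at this
    simpa using this
  have hlin : Integrable (fun z : Fin d → ℝ => w ⬝ᵥ z) P := by
    simp only [dotProduct]
    exact integrable_finsetSum _ fun i _ => (hi1 i).const_mul _
  have hlinI : ∫ z : Fin d → ℝ, w ⬝ᵥ z ∂P = 0 := by
    simp only [dotProduct]
    rw [integral_finsetSum _ fun i _ => (hi1 i).const_mul _]
    simp [integral_const_mul, hI1]
  have hsq : Integrable (fun z : Fin d → ℝ => z ⬝ᵥ z) P := by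
    simp only [dotProduct, ← sq]
    exact integrable_finsetSum _ fun i _ => hi2 i
  have hsqI : ∫ z : Fin d → ℝ, z ⬝ᵥ z ∂P = d := by
    simp only [dotProduct, ← sq]
    rw [integral_finsetSum _ fun i _ => hi2 i]
    simp [hI2]
  have hcI : Integrable (fun z => auxC m (A * Aᵀ) (m + A *ᵥ z)) P := by
    simp_rw [hc]
    exact hlin.add (integrable_const _)
  refine ⟨?_, ?_, ?_⟩
  · rw [integrable_map_measure hcm.aestronglyMeasurable hmm.aemeasurable]
    exact hcI
  · rw [integral_map hmm.aemeasurable hcm.aestronglyMeasurable]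
    simp_rw [hc]
    rw [integral_add hlin (integrable_const _), hlinI, hq]
    simp
  · rw [integral_map hmm.aemeasurable hcm.norm.aestronglyMeasurable, hq]
    calc ∫ z, ‖auxC m (A * Aᵀ) (m + A *ᵥ z)‖ ∂P
        ≤ ∫ z : Fin d → ℝ, (w ⬝ᵥ w + (z ⬝ᵥ z) / 2) ∂P := by
          refine integral_mono hcI.norm ((integrable_const _).add (hsq.div_const 2)) fun z => ?_
          simp only [hc, Real.norm_eq_abs]
          have h1 : 0 ≤ (w - z) ⬝ᵥ (w - z) := Finset.sum_nonneg fun i _ => mul_self_nonneg _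
          have h2 : 0 ≤ (w + z) ⬝ᵥ (w + z) := Finset.sum_nonneg fun i _ => mul_self_nonneg _
          have h3 : 0 ≤ w ⬝ᵥ w := Finset.sum_nonneg fun i _ => mul_self_nonneg _
          simp only [sub_dotProduct, dotProduct_sub, add_dotProduct, dotProduct_add,
            dotProduct_comm z w] at h1 h2
          rw [abs_le]; constructor <;> linarith
      _ = w ⬝ᵥ w + (d : ℝ) / 2 := by
          rw [integral_add (integrable_const _) (hsq.div_const 2), integral_div, hsqI]
          simp

lemma aux_density {d : ℕ} (m : Fin d → ℝ) {C : Matrix (Fin d) (Fin d) ℝ} (hC : C.PosDef) :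
    gaussMV d m C = (gaussMV d 0 C).withDensity fun h => ENNReal.ofReal (Real.exp (auxC m C h)) := by
  have hcm := aux_cont_auxC m C
  have hm0 : Continuous fun h : Fin d → ℝ => (((2 * Real.pi)^d * C.det) ^ (-(1:ℝ)/2) *
      Real.exp (-((h - 0) ⬝ᵥ C⁻¹.mulVec (h - 0)) / 2)) := by fun_prop
  rw [gaussMV, gaussMV, ← withDensity_mul]
  · congr 1
    ext h
    have hdet := hC.det_pos
    rw [Pi.mul_apply, ← ENNReal.ofReal_mul (by positivity), mul_assoc, ← Real.exp_add]
    congr 3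
    have hsym : C⁻¹ᵀ = C⁻¹ := by
      have := hC.inv.isHermitian
      simpa [IsHermitian, conjTranspose_eq_transpose_of_trivial] using this
    have hs : h ⬝ᵥ (C⁻¹ *ᵥ m) = m ⬝ᵥ (C⁻¹ *ᵥ h) := by
      rw [dotProduct_mulVec, ← mulVec_transpose, hsym, dotProduct_comm]
    simp only [auxC, sub_zero, sub_dotProduct, dotProduct_sub, mulVec_sub, hs]
    ring
  · exact (ENNReal.continuous_ofReal.comp hm0).measurable
  · exact (ENNReal.continuous_ofReal.comp (Real.continuous_exp.comp hcm)).measurable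

lemma aux_kl {X : Type*} [MeasurableSpace X] (P R : Measure X) [SigmaFinite R]
    (g : X → ENNReal) (hg : Measurable g) (hP : P = R.withDensity g) (c : X → ℝ)
    (hc : ∀ᵐ x ∂P, Real.log (g x).toReal = c x) (hi : Integrable c P) :
    klDiv P R = ((∫ x, c x ∂P : ℝ) : EReal) := by
  have hac : P ≪ R := hP ▸ withDensity_absolutelyContinuous _ _
  have h : llr P R =ᵐ[P] c := by
    have := hac.ae_le (Measure.rnDeriv_withDensity R hg)
    filter_upwards [this, hc] with x hx hx2
    rw [llr, ← hx2, ← hx, hP]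
  rw [klDiv, if_pos ⟨hac, hi.congr h.symm⟩, integral_congr_ae h]

noncomputable def auxA (a σ α : ℝ) : ℝ :=
  Real.log (σ * Real.pi * (1 + α^2 / σ^2)) - Real.log (Real.sqrt (2 * Real.pi * σ^2))
    - (α - a)^2 / (2 * σ^2)

lemma aux_A_density (a σ : ℝ) (hσ : 0 < σ) :
    gaussianReal a (σ^2).toNNReal =
      (cauchyScale σ).withDensity fun α => ENNReal.ofReal (Real.exp (auxA a σ α)) := by
  have hv : (σ^2).toNNReal ≠ 0 := by
    rw [Ne, Real.toNNReal_eq_zero]; push Not; positivity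
  have hm1 : Measurable fun α : ℝ => ENNReal.ofReal (1 / (σ * Real.pi * (1 + α^2 / σ^2))) := by
    fun_prop
  have hm2 : Measurable fun α : ℝ => ENNReal.ofReal (Real.exp (auxA a σ α)) := by
    unfold auxA; fun_prop
  rw [gaussianReal_of_var_ne_zero _ hv, cauchyScale, ← withDensity_mul _ hm1 hm2]
  congr 1
  ext α
  have h1 : 0 < σ * Real.pi * (1 + α^2 / σ^2) := by positivity
  rw [Pi.mul_apply, ← ENNReal.ofReal_mul (by positivity), gaussianPDF, gaussianPDFReal, auxA,
    Real.coe_toNNReal _ (by positivity), sub_sub, Real.exp_sub, Real.exp_log h1, Real.exp_add,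
    Real.exp_log (by positivity), neg_div, Real.exp_neg]
  congr 1
  have h2 : 0 < Real.sqrt (2 * Real.pi * σ^2) := by positivity
  have h3 := Real.exp_pos ((α - a) ^ 2 / (2 * σ ^ 2))
  field_simp

lemma aux_cauchy_prob (σ : ℝ) (hσ : 0 < σ) : IsProbabilityMeasure (cauchyScale σ) := by
  have hne : σ.toNNReal ≠ 0 := by simpa using hσ
  have : cauchyScale σ = volume.withDensity (cauchyPDF 0 σ.toNNReal) := by
    rw [cauchyScale]
    congr 1
    ext α
    rw [cauchyPDF, cauchyPDFReal_def', Real.coe_toNNReal _ hσ.le]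
    congr 1
    rw [sub_zero, div_pow, NNReal.coe_inv, Real.coe_toNNReal _ hσ.le]
    field_simp
  refine ⟨?_⟩
  rw [this, withDensity_apply _ MeasurableSet.univ, Measure.restrict_univ,
    lintegral_cauchyPDF_eq_one 0 hne]

lemma aux_A_int (a σ : ℝ) (hσ : 0 < σ) :
    Integrable (auxA a σ) (gaussianReal a (σ^2).toNNReal) ∧
    ∫ α, auxA a σ α ∂(gaussianReal a (σ^2).toNNReal) ≤ Real.log (2 + a^2 / σ^2) := by
  set N := gaussianReal a (σ^2).toNNReal with hN
  have hi1 : Integrable (fun x : ℝ => x) N := (memLp_id_gaussianReal 1).integrable le_rfl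
  have hi2 : Integrable (fun x : ℝ => x ^ 2) N := (memLp_id_gaussianReal 2).integrable_sq
  have hI1 : ∫ x, x ∂N = a := integral_id_gaussianReal
  have hI2 : ∫ x, x ^ 2 ∂N = a^2 + σ^2 := by
    have h := variance_id_gaussianReal (μ := a) (v := (σ^2).toNNReal)
    rw [variance_eq_sub (memLp_id_gaussianReal 2), Real.coe_toNNReal _ (by positivity)] at h
    simp only [← hN, Pi.pow_apply, id, hI1] at h
    linarith
  have hsub : ∀ x : ℝ, (x - a)^2 / (2 * σ^2)
      = x^2 * (1 / (2 * σ^2)) - x * (a / σ^2) + a^2 / (2 * σ^2) := by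
    intro x; field_simp; ring
  have hi3' : Integrable (fun x : ℝ => x^2 * (1 / (2 * σ^2)) - x * (a / σ^2)) N :=
    (hi2.mul_const _).sub (hi1.mul_const _)
  have hi3 : Integrable (fun x : ℝ => (x - a)^2 / (2 * σ^2)) N := by
    simp_rw [hsub]
    exact hi3'.add (integrable_const _)
  have hI3 : ∫ x, (x - a)^2 / (2 * σ^2) ∂N = 1 / 2 := by
    simp_rw [hsub]
    rw [integral_add hi3' (integrable_const _), integral_sub (hi2.mul_const _) (hi1.mul_const _),
      integral_mul_const, integral_mul_const, hI1, hI2]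
    simp
    field_simp
    ring
  set M := 2 + a^2 / σ^2 with hM
  have hMpos : 0 < M := by positivity
  have hlogi : Integrable (fun x : ℝ => Real.log (1 + x^2 / σ^2)) N := by
    refine Integrable.mono' (hi2.div_const (σ^2))
      (Measurable.aestronglyMeasurable (by fun_prop)) (Filter.Eventually.of_forall fun x => ?_)
    have h0 : 0 ≤ x^2 / σ^2 := by positivity
    rw [Real.norm_eq_abs, abs_of_nonneg (Real.log_nonneg (by linarith))]
    have := Real.log_le_sub_one_of_pos (x := 1 + x^2 / σ^2) (by positivity)
    linarith
  have hlogI : ∫ x, Real.log (1 + x^2 / σ^2) ∂N ≤ Real.log M := by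
    calc ∫ x, Real.log (1 + x^2 / σ^2) ∂N
        ≤ ∫ x, (x^2 / σ^2 * (1 / M) + (Real.log M + 1 / M - 1)) ∂N := by
          refine integral_mono hlogi (((hi2.div_const _).mul_const _).add (integrable_const _))
            fun x => ?_
          have hp : 0 < 1 + x^2 / σ^2 := by positivity
          have := Real.log_le_sub_one_of_pos (x := (1 + x^2 / σ^2) / M) (by positivity)
          rw [Real.log_div hp.ne' hMpos.ne'] at this
          have e : (1 + x^2 / σ^2) / M = x^2 / σ^2 * (1 / M) + 1 / M := by ring
          simp only
          linarith
      _ = Real.log M := by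
          rw [integral_add ((hi2.div_const _).mul_const _) (integrable_const _),
            integral_mul_const, integral_div, hI2]
          have e : (a^2 + σ^2) / σ^2 = M - 1 := by rw [hM]; field_simp; ring
          rw [e]
          simp
          field_simp
          ring
  have hdec : ∀ x, auxA a σ x = (Real.log (1 + x^2 / σ^2) - (x - a)^2 / (2 * σ^2)) +
      (Real.log (σ * Real.pi) - Real.log (Real.sqrt (2 * Real.pi * σ^2))) := by
    intro x
    rw [auxA, Real.log_mul (by positivity) (by positivity)]
    ring
  have hdecf : auxA a σ = fun x => (Real.log (1 + x^2 / σ^2) - (x - a)^2 / (2 * σ^2)) +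
      (Real.log (σ * Real.pi) - Real.log (Real.sqrt (2 * Real.pi * σ^2))) := funext hdec
  rw [hdecf]
  refine ⟨(hlogi.sub hi3).add (integrable_const _), ?_⟩
  have hconst : Real.log (σ * Real.pi) - Real.log (Real.sqrt (2 * Real.pi * σ^2)) ≤ 1 / 2 := by
    have hpi := Real.pi_pos
    rw [Real.log_sqrt (by positivity), Real.log_mul hσ.ne' hpi.ne',
      Real.log_mul (by positivity) (by positivity), Real.log_mul (by positivity) hpi.ne',
      Real.log_pow]
    have h1 : Real.log Real.pi ≤ Real.log 2 + 1 := by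
      have := Real.log_le_sub_one_of_pos (x := Real.pi / 2) (by positivity)
      rw [Real.log_div hpi.ne' (by norm_num)] at this
      have := Real.pi_le_four
      linarith
    push_cast
    linarith
  have hls : Integrable (fun x : ℝ => Real.log (1 + x^2 / σ^2) - (x - a)^2 / (2 * σ^2)) N :=
    hlogi.sub hi3
  rw [integral_add hls (integrable_const _), integral_sub hlogi hi3, hI3]
  simp only [integral_const, probReal_univ, smul_eq_mul, one_mul]
  linarith

lemma aux_exp_int (a σ : ℝ) :
    Integrable (fun α : ℝ => Real.exp (-α)) (gaussianReal a (σ^2).toNNReal) ∧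
    ∫ α, Real.exp (-α) ∂(gaussianReal a (σ^2).toNNReal) = (Real.exp (a - σ^2 / 2))⁻¹ := by
  constructor
  · have := integrable_exp_mul_gaussianReal (μ := a) (v := (σ^2).toNNReal) (-1)
    simpa using this
  · have := congrFun (mgf_fun_id_gaussianReal (μ := a) (v := (σ^2).toNNReal)) (-1)
    rw [mgf, Real.coe_toNNReal _ (by positivity)] at this
    rw [← Real.exp_neg]
    simp only [neg_mul, one_mul] at this
    rw [this]
    congr 1
    ring

lemma aux_integral_comp {X Y : Type*} [MeasurableSpace X] [MeasurableSpace Y] (μ : Measure X)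
    (κ : Kernel X Y) {f : Y → ℝ} (hf : Integrable f (μ.bind κ)) :
    ∫ y, f y ∂(μ.bind κ) = ∫ x, ∫ y, f y ∂(κ x) ∂μ := by
  rw [Measure.comp_eq_comp_const_apply] at hf ⊢
  rw [ProbabilityTheory.Kernel.integral_comp hf]
  simp

lemma aux_inv_meas {F : Type*} [MeasurableSpace F] {d : ℕ} (S : F → Matrix (Fin d) (Fin d) ℝ)
    (hS : ∀ i j : Fin d, Measurable fun f => S f i j) (i j : Fin d) :
    Measurable fun f => (S f)⁻¹ i j := by
  have hS' : Measurable fun f => (fun i j => S f i j : Fin d → Fin d → ℝ) := by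
    refine measurable_pi_iff.mpr fun i => measurable_pi_iff.mpr fun j => hS i j
  have hc : Continuous fun M : Fin d → Fin d → ℝ => (Matrix.of M) :=
    continuous_id
  have h1 : Measurable fun M : Fin d → Fin d → ℝ => (Matrix.of M).det :=
    (Continuous.matrix_det hc).measurable
  have h2 : Measurable fun M : Fin d → Fin d → ℝ => (Matrix.of M).adjugate i j :=
    ((Continuous.matrix_adjugate hc).matrix_elem i j).measurable
  have h3 := (h1.inv.mul h2).comp hS'
  convert h3 using 1
  ext f
  rw [Matrix.inv_def]
  simp [Ring.inverse_eq_inv']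
  rfl

lemma aux_smul_inv {d : ℕ} {S : Matrix (Fin d) (Fin d) ℝ} (hS : S.PosDef) (α : ℝ) :
    (Real.exp α • S)⁻¹ = Real.exp (-α) • S⁻¹ := by
  have hu : IsUnit S.det := isUnit_iff_ne_zero.mpr hS.det_pos.ne'
  refine Matrix.inv_eq_left_inv ?_
  rw [smul_mul_smul_comm, nonsing_inv_mul _ hu, ← Real.exp_add]
  simp

lemma aux_cC_meas {F : Type*} [MeasurableSpace F] {d : ℕ} (m : F → Fin d → ℝ) (hm : Measurable m)
    (S : F → Matrix (Fin d) (Fin d) ℝ)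
    (hS : ∀ i j : Fin d, Measurable fun f => S f i j) (hSpos : ∀ f : F, (S f).PosDef) :
    Measurable fun x : ℝ × F × (Fin d → ℝ) => auxC (m x.2.1) (Real.exp x.1 • S x.2.1) x.2.2 := by
  have hinv := aux_inv_meas S hS
  have h1 : ∀ i j, Measurable fun x : ℝ × F × (Fin d → ℝ) => Real.exp (-x.1) * (S x.2.1)⁻¹ i j :=
    fun i j => (measurable_fst.neg.exp).mul ((hinv i j).comp (measurable_fst.comp measurable_snd))
  have h2 : ∀ i, Measurable fun x : ℝ × F × (Fin d → ℝ) => m x.2.1 i :=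
    fun i => ((measurable_pi_apply i).comp hm).comp (measurable_fst.comp measurable_snd)
  have h3 : ∀ i, Measurable fun x : ℝ × F × (Fin d → ℝ) => x.2.2 i :=
    fun i => (measurable_pi_apply i).comp (measurable_snd.comp measurable_snd)
  simp only [auxC, aux_smul_inv (hSpos _), dotProduct, mulVec, Pi.sub_apply,
      Matrix.smul_apply, smul_eq_mul]
  refine Measurable.add ?_ (Measurable.div_const ?_ 2)
  · exact Finset.measurable_fun_sum _ fun i _ => (h2 i).mul
      (Finset.measurable_fun_sum _ fun j _ => (h1 i j).mul ((h3 j).sub (h2 j)))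
  · exact Finset.measurable_fun_sum _ fun i _ => (h2 i).mul
      (Finset.measurable_fun_sum _ fun j _ => (h1 i j).mul (h2 j))

set_option maxHeartbeats 1000000 in
/-- **KL decomposition for the transportation posterior (finite-dimensional case).**
For the posterior `Q̃(dα df dh) = N(ᾱ,σ²)(dα) Q(df) N(μ(f), e^α Σ(f))(dh)` and the
prior `Ũ(dα df dh) = 𝒰₁(σ)(dα) U(df) N(0, e^α Σ(f))(dh)`,
`D_KL(Q̃‖Ũ) ≤ D_KL(Q‖U) + log(2 + ᾱ²/σ²) + (∫ μᵀΣ⁻¹μ dQ)/(2 e^{ᾱ−σ²/2})`. -/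
theorem kl_transportation_posterior
    (d : ℕ) (hd : 1 ≤ d) (F : Set (Fin d → ℝ)) (hF : MeasurableSet F)
    (Q U : Measure F) [IsProbabilityMeasure Q] [IsProbabilityMeasure U]
    (μcurve : F → Fin d → ℝ) (hμmeas : Measurable μcurve)
    (Smat : F → Matrix (Fin d) (Fin d) ℝ) (hSmeas : ∀ i j : Fin d, Measurable fun f => Smat f i j)
    (hSpos : ∀ f : F, (Smat f).PosDef)
    (alphaBar σ : ℝ) (hσ : 0 < σ)
    (hkerQ : Measurable fun p : ℝ × F =>
      (gaussMV d (μcurve p.2) (Real.exp p.1 • Smat p.2)).map fun h => (p.1, p.2, h))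
    (hkerU : Measurable fun p : ℝ × F =>
      (gaussMV d 0 (Real.exp p.1 • Smat p.2)).map fun h => (p.1, p.2, h))
    (hInt : Integrable (fun f => μcurve f ⬝ᵥ (Smat f)⁻¹.mulVec (μcurve f)) Q) :
    klDiv
      (((gaussianReal alphaBar (σ^2).toNNReal).prod Q).bind fun p =>
        (gaussMV d (μcurve p.2) (Real.exp p.1 • Smat p.2)).map fun h => (p.1, p.2, h))
      (((cauchyScale σ).prod U).bind fun p =>
        (gaussMV d 0 (Real.exp p.1 • Smat p.2)).map fun h => (p.1, p.2, h)) ≤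
    klDiv Q U +
      ((Real.log (2 + alphaBar^2 / σ^2) +
        (∫ f, μcurve f ⬝ᵥ (Smat f)⁻¹.mulVec (μcurve f) ∂Q) /
          (2 * Real.exp (alphaBar - σ^2 / 2)) : ℝ) : EReal) := by
  by_cases hfin : Q ≪ U ∧ Integrable (llr Q U) Q
  swap
  · have : klDiv Q U = ⊤ := by rw [klDiv, if_neg hfin]
    rw [this, EReal.top_add_coe]
    exact le_top
  obtain ⟨hac, hllr⟩ := hfin
  rw [klDiv.eq_def Q U, if_pos ⟨hac, hllr⟩, ← EReal.coe_add]
  set N := gaussianReal alphaBar (σ^2).toNNReal with hN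
  have : IsProbabilityMeasure (cauchyScale σ) := aux_cauchy_prob σ hσ
  have hCpos : ∀ p : ℝ × F, (Real.exp p.1 • Smat p.2).PosDef := fun p =>
    (hSpos p.2).smul (Real.exp_pos _)
  have hmk : ∀ p : ℝ × F, Measurable fun h : Fin d → ℝ => (p.1, p.2, h) := fun p => by fun_prop
  let κ : Kernel (ℝ × F) (ℝ × F × (Fin d → ℝ)) := ⟨_, hkerQ⟩
  let η : Kernel (ℝ × F) (ℝ × F × (Fin d → ℝ)) := ⟨_, hkerU⟩
  have hκ : ∀ p, κ p = (gaussMV d (μcurve p.2) (Real.exp p.1 • Smat p.2)).map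
    fun h => (p.1, p.2, h) := fun p => rfl
  have hη : ∀ p, η p = (gaussMV d 0 (Real.exp p.1 • Smat p.2)).map
    fun h => (p.1, p.2, h) := fun p => rfl
  have : IsMarkovKernel κ := ⟨fun p => by
    have := aux_prob_s16 (μcurve p.2) (hCpos p)
    rw [hκ]; exact Measure.isProbabilityMeasure_map (hmk p).aemeasurable⟩
  have : IsMarkovKernel η := ⟨fun p => by
    have := aux_prob_s16 0 (hCpos p)
    rw [hη]; exact Measure.isProbabilityMeasure_map (hmk p).aemeasurable⟩
  change klDiv ((N.prod Q).bind κ) (((cauchyScale σ).prod U).bind η) ≤ _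
  -- measurability of the exponent
  have hinv := aux_inv_meas Smat hSmeas
  have hμi : ∀ i, Measurable fun f => μcurve f i := fun i => (measurable_pi_apply i).comp hμmeas
  let cC : ℝ × F × (Fin d → ℝ) → ℝ := fun x =>
    auxC (μcurve x.2.1) (Real.exp x.1 • Smat x.2.1) x.2.2
  have hcC : Measurable cC := aux_cC_meas μcurve hμmeas Smat hSmeas hSpos
  have hA : Measurable (auxA alphaBar σ) := by unfold auxA; fun_prop
  have hD : Measurable (Q.rnDeriv U) := Measure.measurable_rnDeriv Q U
  have hL : Measurable (llr Q U) := measurable_llr Q U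
  let c : ℝ × F × (Fin d → ℝ) → ℝ := fun x => auxA alphaBar σ x.1 + llr Q U x.2.1 + cC x
  have hc : Measurable c := by
    have h1 : Measurable fun x : ℝ × F × (Fin d → ℝ) => auxA alphaBar σ x.1 :=
      hA.comp measurable_fst
    have h2 : Measurable fun x : ℝ × F × (Fin d → ℝ) => llr Q U x.2.1 :=
      hL.comp (measurable_fst.comp measurable_snd)
    exact (h1.add h2).add hcC
  let r : ℝ × F → ENNReal := fun p => ENNReal.ofReal (Real.exp (auxA alphaBar σ p.1)) * Q.rnDeriv U p.2
  have hr : Measurable r :=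
    ((hA.exp.ennreal_ofReal).comp measurable_fst).mul (hD.comp measurable_snd)
  let e : ℝ × F × (Fin d → ℝ) → ENNReal := fun x => ENNReal.ofReal (Real.exp (cC x))
  have he : Measurable e := hcC.exp.ennreal_ofReal
  let g : ℝ × F × (Fin d → ℝ) → ENNReal := fun x => r (x.1, x.2.1) * e x
  have hg : Measurable g := (hr.comp (by fun_prop)).mul he
  have hbase : N.prod Q = ((cauchyScale σ).prod U).withDensity r := by
    rw [← prod_withDensity (hA.exp.ennreal_ofReal) hD, hN, aux_A_density alphaBar σ hσ,
      Measure.withDensity_rnDeriv_eq Q U hac]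
  have hdens : (N.prod Q).bind κ = (((cauchyScale σ).prod U).bind η).withDensity g := by
    ext s hs
    rw [withDensity_apply _ hs, ← lintegral_indicator hs,
      Measure.lintegral_bind η.measurable.aemeasurable (hg.indicator hs).aemeasurable,
      Measure.bind_apply hs κ.measurable.aemeasurable, hbase,
      lintegral_withDensity_eq_lintegral_mul _ hr (κ.measurable_coe hs)]
    refine lintegral_congr fun p => ?_
    have hem : Measurable fun h : Fin d → ℝ =>
        ENNReal.ofReal (Real.exp (auxC (μcurve p.2) (Real.exp p.1 • Smat p.2) h)) :=
      (aux_cont_auxC _ _).measurable.exp.ennreal_ofReal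
    rw [Pi.mul_apply, hκ, hη, Measure.map_apply (hmk p) hs,
      lintegral_map (hg.indicator hs) (hmk p), aux_density _ (hCpos p),
      withDensity_apply _ (hmk p hs), ← lintegral_indicator (hmk p hs),
      ← lintegral_const_mul _ (hem.indicator (hmk p hs))]
    refine lintegral_congr fun h => ?_
    simp only [Set.indicator_apply, Set.mem_preimage]
    split_ifs
    · rfl
    · simp
  have hlog : ∀ᵐ x ∂((N.prod Q).bind κ), Real.log (g x).toReal = c x := by
    refine Measure.ae_comp_of_ae_ae
      (measurableSet_eq_fun (hg.ennreal_toReal.log) hc) ?_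
    have hpos : ∀ᵐ p ∂(N.prod Q), 0 < Q.rnDeriv U p.2 :=
      Measure.quasiMeasurePreserving_snd.ae (Measure.rnDeriv_pos hac)
    have hlt : ∀ᵐ p ∂(N.prod Q), Q.rnDeriv U p.2 < ⊤ :=
      Measure.quasiMeasurePreserving_snd.ae (hac.ae_le (Measure.rnDeriv_lt_top Q U))
    filter_upwards [hpos, hlt] with p hp1 hp2
    rw [hκ, ae_map_iff (hmk p).aemeasurable (measurableSet_eq_fun (hg.ennreal_toReal.log) hc)]
    refine Filter.Eventually.of_forall fun h => ?_
    have h3 : 0 < (Q.rnDeriv U p.2).toReal := ENNReal.toReal_pos hp1.ne' hp2.ne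
    simp only [g, r, e, c, llr, ENNReal.toReal_mul, ENNReal.toReal_ofReal (Real.exp_pos _).le]
    rw [Real.log_mul (mul_pos (Real.exp_pos _) h3).ne' (Real.exp_pos _).ne',
      Real.log_mul (Real.exp_pos _).ne' h3.ne', Real.log_exp, Real.log_exp]
  -- fibrewise integrals
  let s : F → ℝ := fun f => μcurve f ⬝ᵥ (Smat f)⁻¹.mulVec (μcurve f)
  have hsC : ∀ p : ℝ × F, μcurve p.2 ⬝ᵥ ((Real.exp p.1 • Smat p.2)⁻¹ *ᵥ μcurve p.2) =
      Real.exp (-p.1) * s p.2 := by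
    intro p
    rw [aux_smul_inv (hSpos _), smul_mulVec, dotProduct_smul, smul_eq_mul]
  have hfib : ∀ p : ℝ × F, Integrable c (κ p) ∧
      ∫ x, c x ∂(κ p) = auxA alphaBar σ p.1 + llr Q U p.2 + Real.exp (-p.1) * s p.2 / 2 ∧
      ∫ x, ‖c x‖ ∂(κ p) ≤
        ‖auxA alphaBar σ p.1‖ + ‖llr Q U p.2‖ + (Real.exp (-p.1) * s p.2 + (d : ℝ) / 2) := by
    intro p
    obtain ⟨h1, h2, h3⟩ := aux_fiber (μcurve p.2) (hCpos p)
    have := aux_prob_s16 (μcurve p.2) (hCpos p)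
    rw [hsC] at h2 h3
    rw [hκ, integrable_map_measure hc.aestronglyMeasurable (hmk p).aemeasurable,
      integral_map (hmk p).aemeasurable hc.aestronglyMeasurable,
      integral_map (hmk p).aemeasurable hc.norm.aestronglyMeasurable]
    have hi : Integrable (c ∘ fun h => (p.1, p.2, h))
        (gaussMV d (μcurve p.2) (Real.exp p.1 • Smat p.2)) :=
      (integrable_const (auxA alphaBar σ p.1 + llr Q U p.2)).add h1
    refine ⟨hi, ?_, ?_⟩
    · simp only [c, cC]
      rw [integral_add (integrable_const _) h1, h2]
      simp
    · calc _ ≤ ∫ h, ((‖auxA alphaBar σ p.1‖ + ‖llr Q U p.2‖) +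
            ‖auxC (μcurve p.2) (Real.exp p.1 • Smat p.2) h‖)
            ∂(gaussMV d (μcurve p.2) (Real.exp p.1 • Smat p.2)) := by
            refine integral_mono hi.norm ((integrable_const _).add h1.norm) fun h => ?_
            exact (norm_add_le _ _).trans (add_le_add (norm_add_le _ _) le_rfl)
        _ ≤ _ := by
            rw [integral_add (integrable_const _) h1.norm]
            simp only [integral_const, probReal_univ, smul_eq_mul, one_mul]
            linarith
  obtain ⟨hAi, hAI⟩ := aux_A_int alphaBar σ hσ
  obtain ⟨hEi, hEI⟩ := aux_exp_int alphaBar σ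
  rw [← hN] at hAi hAI hEi hEI
  have hs_int : Integrable s Q := hInt
  have hES : Integrable (fun p : ℝ × F => Real.exp (-p.1) * s p.2) (N.prod Q) :=
    hEi.mul_prod hs_int
  have hA1 : Integrable (fun p : ℝ × F => auxA alphaBar σ p.1) (N.prod Q) := hAi.comp_fst Q
  have hL1 : Integrable (fun p : ℝ × F => llr Q U p.2) (N.prod Q) := hllr.comp_snd N
  have hci : Integrable c ((N.prod Q).bind κ) := by
    rw [Measure.integrable_comp_iff hc.aestronglyMeasurable]
    refine ⟨Filter.Eventually.of_forall fun p => (hfib p).1, ?_⟩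
    refine Integrable.mono' ((hA1.norm.add hL1.norm).add (hES.add (integrable_const ((d : ℝ) / 2))))
      (hc.norm.stronglyMeasurable.integral_kernel).aestronglyMeasurable
      (Filter.Eventually.of_forall fun p => ?_)
    rw [Real.norm_of_nonneg (integral_nonneg fun _ => norm_nonneg _)]
    exact (hfib p).2.2
  rw [aux_kl _ _ g hg hdens c hlog hci, aux_integral_comp _ _ hci, EReal.coe_le_coe_iff]
  simp_rw [fun p => (hfib p).2.1]
  have hAL : Integrable (fun p : ℝ × F => auxA alphaBar σ p.1 + llr Q U p.2) (N.prod Q) :=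
    hA1.add hL1
  rw [integral_add hAL (hES.div_const 2), integral_add hA1 hL1, integral_div,
    integral_prod_mul (fun α : ℝ => Real.exp (-α)) s, hEI, integral_fun_fst, integral_fun_snd]
  simp only [probReal_univ, one_smul]
  have hfinal : (Real.exp (alphaBar - σ^2 / 2))⁻¹ * (∫ f, s f ∂Q) / 2 =
      (∫ f, s f ∂Q) / (2 * Real.exp (alphaBar - σ^2 / 2)) := by
    field_simp
  rw [hfinal]
  simp only [s]
  linarith
end
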